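/- arXiv:2206.08351 — 2 statements merged into one kernel-verified Lean document; each statement's English description precedes it below -/
import Mathlib

section
/- There exists a constant C such that for every real X ≥ 2, the sum over squarefree integers 1 < d ≤ X of (|Cl_{ℚ(√d)}[3]|² + |Cl_{ℚ(√−d)}[3]|²) is at most C · X^{23/18}. -/
open NumberField IntermediateField
open scoped Classical

/-- The order of the `ℓ`-torsion subgroup of the class group of a number field `K`. -/
noncomputable def clTor (K : Type*) [Field K] (ℓ : ℕ) : ℕ :=
  Nat.card {c : ClassGroup (𝓞 K) // c ^ ℓ = 1}

/-- The imaginary quadratic field `ℚ(√-d)`, realized inside `ℂ` as `ℚ(i·√d)`. -/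
noncomputable def Qneg (d : ℕ) : IntermediateField ℚ ℂ :=
  ℚ⟮(Complex.I * (Real.sqrt d : ℂ) : ℂ)⟯

/-- The real quadratic field `ℚ(√d)`, realized inside `ℂ`. -/
noncomputable def Qpos (d : ℕ) : IntermediateField ℚ ℂ :=
  ℚ⟮((Real.sqrt d : ℝ) : ℂ)⟯

/-!
By Minkowski's theorem, a class `c` of order dividing `3` in `ℚ(√e)` contains an ideal whose cube is
generated by some `(u + v√e) / 2` with all archimedean absolute values `≪ |e|^(3/4)`. If `m` is,
up to sign, the norm of this ideal, then `u² = 4m³ + e v²` with `|m| ≪ X^(1/2)` and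
`|v| ≪ X^(1/4)` for `|e| ≤ X`. For fixed `e`, and with the generator normalized so that `u ≥ 0`,
the pair `(v, m)` determines `c`, and `v = 0` forces `c = 1`, so it suffices to bound the second
moment over `e` of the number of pairs `(v, m)`, `v m ≠ 0`, for which `4m³ + e v²` is a square.

Cauchy–Schwarz over `v` reduces this to pairs `m, m'` attached to the same `(e, v)`. The diagonal
`m = m'` counts square roots of `4m³` modulo `v²`. Off the diagonal, `4(m³ - m'³) = u² - u'²` is a
factorization of a nonzero integer. In both cases the divisor bound gives `≪ X^(5/4 + ε)`, and
`5/4 < 23/18`.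
-/

section ShortGenerators

open InfinitePlace mixedEmbedding Module
open scoped nonZeroDivisors NNReal ENNReal

variable {K : Type*} [Field K] [NumberField K]

theorem inv_two_pow_mul_two_pow_finrank_le_convexBodyLTFactor :
    (2⁻¹ : ℝ≥0∞) ^ nrComplexPlaces K * 2 ^ finrank ℚ K ≤ convexBodyLTFactor K := by
  have two_le_pi : (2 : ℝ≥0) ≤ NNReal.pi := by exact_mod_cast Real.two_le_pi
  have h : (2⁻¹ : ℝ≥0) ^ nrComplexPlaces K * 2 ^ finrank ℚ K ≤ convexBodyLTFactor K := by
    calc (2⁻¹ : ℝ≥0) ^ nrComplexPlaces K * 2 ^ finrank ℚ K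
        = 2 ^ nrRealPlaces K * 2 ^ nrComplexPlaces K := by
          rw [← card_add_two_mul_card_eq_rank, pow_add, two_mul, pow_add, inv_pow]
          field_simp
      _ ≤ convexBodyLTFactor K := by
          rw [convexBodyLTFactor]
          gcongr
  simpa [ENNReal.inv_pow, ENNReal.coe_inv] using ENNReal.coe_le_coe.2 h

theorem exists_ne_zero_mem_ideal_forall_lt (I : (Ideal (𝓞 K))⁰) (r : InfinitePlace K → ℝ≥0)
    (hr : Ideal.absNorm (I : Ideal (𝓞 K)) * √|(discr K : ℝ)| < ∏ w, (r w : ℝ) ^ mult w) :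
    ∃ θ ∈ (I : Ideal (𝓞 K)), θ ≠ 0 ∧ ∀ w : InfinitePlace K, w (θ : K) < r w := by
  have hr' : (Ideal.absNorm (I : Ideal (𝓞 K)) : ℝ≥0∞) * (NNReal.sqrt ‖discr K‖₊ : ℝ≥0∞) <
      (∏ w, r w ^ mult w : ℝ≥0) := by
    have : (Ideal.absNorm (I : Ideal (𝓞 K)) : ℝ≥0) * NNReal.sqrt ‖discr K‖₊ <
        ∏ w, r w ^ mult w := by
      rw [← NNReal.coe_lt_coe]
      simpa [Int.norm_eq_abs] using hr
    exact_mod_cast this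
  have factor_pos : (convexBodyLTFactor K : ℝ≥0∞) ≠ 0 := by
    exact_mod_cast convexBodyLTFactor_ne_zero K
  have minkowski : minkowskiBound K (FractionalIdeal.mk0 K I) <
      MeasureTheory.volume (convexBodyLT K r) := by
    rw [convexBodyLT_volume, minkowskiBound, volume_fundamentalDomain_fractionalIdealLatticeBasis,
      volume_fundamentalDomain_latticeBasis, FractionalIdeal.coe_mk0,
      FractionalIdeal.coeIdeal_absNorm, mixedEmbedding.finrank, Rat.cast_natCast,
      ENNReal.ofReal_natCast]
    calc _ = (2⁻¹ : ℝ≥0∞) ^ nrComplexPlaces K * 2 ^ finrank ℚ K *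
            (Ideal.absNorm (I : Ideal (𝓞 K)) * (NNReal.sqrt ‖discr K‖₊ : ℝ≥0∞)) := by ring
      _ ≤ convexBodyLTFactor K *
            (Ideal.absNorm (I : Ideal (𝓞 K)) * (NNReal.sqrt ‖discr K‖₊ : ℝ≥0∞)) := by
          gcongr
          exact inv_two_pow_mul_two_pow_finrank_le_convexBodyLTFactor
      _ < convexBodyLTFactor K * (∏ w, r w ^ mult w : ℝ≥0) :=
          ENNReal.mul_lt_mul_right factor_pos ENNReal.coe_ne_top hr'
  obtain ⟨a, ha, ha0, hw⟩ := exists_ne_zero_mem_ideal_lt K _ minkowski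
  rw [FractionalIdeal.coe_mk0, FractionalIdeal.mem_coeIdeal] at ha
  obtain ⟨θ, hθ, rfl⟩ := ha
  exact ⟨θ, hθ, fun h => ha0 (by rw [h, map_zero]), hw⟩

theorem abs_norm_eq_absNorm_pow {I : Ideal (𝓞 K)} {ℓ : ℕ} {β : 𝓞 K}
    (h : I ^ ℓ = Ideal.span {β}) :
    |(Algebra.norm ℚ (β : K) : ℝ)| = (Ideal.absNorm I : ℝ) ^ ℓ := by
  rw [← Nat.cast_pow, ← map_pow, h, Ideal.absNorm_span_singleton, Nat.cast_natAbs, Int.cast_abs,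
    ← Algebra.coe_norm_int, Rat.cast_intCast]

theorem prod_rpow_inv_mul_pow_mult (x : K) (B : ℝ) (ℓ : ℕ) :
    ∏ w : InfinitePlace K, (w x ^ (ℓ : ℝ)⁻¹ * B) ^ mult w =
      |(Algebra.norm ℚ x : ℝ)| ^ (ℓ : ℝ)⁻¹ * B ^ finrank ℚ K := by
  simp_rw [mul_pow, Real.rpow_pow_comm (apply_nonneg _ x)]
  rw [Finset.prod_mul_distrib, Finset.prod_pow_eq_pow_sum, sum_mult_eq,
    Real.finsetProd_rpow _ _ (fun w _ => pow_nonneg (apply_nonneg w x) _), prod_eq_abs_norm,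
    Rat.cast_abs]

theorem absNorm_le_pow_finrank_of_forall_le {I : Ideal (𝓞 K)} {ℓ : ℕ} (hℓ : ℓ ≠ 0) {γ : 𝓞 K}
    (h : I ^ ℓ = Ideal.span {γ}) {B : ℝ} (hB : 0 ≤ B)
    (hγ : ∀ w : InfinitePlace K, w (γ : K) ≤ B ^ ℓ) :
    (Ideal.absNorm I : ℝ) ≤ B ^ finrank ℚ K := by
  refine le_of_pow_le_pow_left₀ hℓ (by positivity) ?_
  calc (Ideal.absNorm I : ℝ) ^ ℓ = ∏ w : InfinitePlace K, w (γ : K) ^ mult w := by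
        rw [← abs_norm_eq_absNorm_pow h, prod_eq_abs_norm, Rat.cast_abs]
    _ ≤ ∏ w : InfinitePlace K, (B ^ ℓ) ^ mult w := by
        gcongr with w
        exact hγ w
    _ = (B ^ finrank ℚ K) ^ ℓ := by
        rw [Finset.prod_pow_eq_pow_sum, sum_mult_eq, pow_right_comm]

theorem exists_mem_forall_pow_le {ℓ : ℕ} (hℓ : ℓ ≠ 0) (I : (Ideal (𝓞 K))⁰) {β : 𝓞 K}
    (hβ : (I : Ideal (𝓞 K)) ^ ℓ = Ideal.span {β}) {B : ℝ} (hB0 : 0 ≤ B)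
    (hB : √|(discr K : ℝ)| < B ^ finrank ℚ K) :
    ∃ θ ∈ (I : Ideal (𝓞 K)), θ ≠ 0 ∧ ∀ w : InfinitePlace K, w (θ : K) ^ ℓ ≤ w (β : K) * B ^ ℓ := by
  have absNorm_pos : (0 : ℝ) < Ideal.absNorm (I : Ideal (𝓞 K)) := by
    exact_mod_cast Ideal.absNorm_pos_of_nonZeroDivisors I
  let r (w : InfinitePlace K) : ℝ≥0 :=
    ⟨w (β : K) ^ (ℓ : ℝ)⁻¹ * B, by have := apply_nonneg w (β : K); positivity⟩
  have prod_r : ∏ w, (r w : ℝ) ^ mult w =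
      Ideal.absNorm (I : Ideal (𝓞 K)) * B ^ finrank ℚ K := by
    refine (prod_rpow_inv_mul_pow_mult (β : K) B ℓ).trans ?_
    rw [abs_norm_eq_absNorm_pow hβ, Real.pow_rpow_inv_natCast absNorm_pos.le hℓ]
  obtain ⟨θ, hθI, hθ0, hθ⟩ := exists_ne_zero_mem_ideal_forall_lt I r (by rw [prod_r]; gcongr)
  refine ⟨θ, hθI, hθ0, fun w => ?_⟩
  calc w (θ : K) ^ ℓ ≤ (w (β : K) ^ (ℓ : ℝ)⁻¹ * B) ^ ℓ := by
        gcongr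
        exact (hθ w).le
    _ = w (β : K) * B ^ ℓ := by
        rw [mul_pow, Real.rpow_inv_natCast_pow (apply_nonneg w _) hℓ]

-- Ellenberg–Venkatesh: reduce an ideal of the inverse class by Minkowski's theorem, in a box
-- skewed by the archimedean absolute values of its generator.
theorem exists_mk0_eq_and_pow_eq_span_of_pow_eq_one {ℓ : ℕ} (hℓ : ℓ ≠ 0) {B : ℝ} (hB0 : 0 ≤ B)
    (hB : √|(discr K : ℝ)| < B ^ finrank ℚ K) {c : ClassGroup (𝓞 K)} (hc : c ^ ℓ = 1) :
    ∃ (b : (Ideal (𝓞 K))⁰) (γ : 𝓞 K), ClassGroup.mk0 b = c ∧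
      (b : Ideal (𝓞 K)) ^ ℓ = Ideal.span {γ} ∧ ∀ w : InfinitePlace K, w (γ : K) ≤ B ^ ℓ := by
  obtain ⟨a, ha⟩ := ClassGroup.mk0_surjective c⁻¹
  obtain ⟨β, hβ⟩ : ∃ β : 𝓞 K, (a : Ideal (𝓞 K)) ^ ℓ = Ideal.span {β} := by
    have : ClassGroup.mk0 (a ^ ℓ) = 1 := by rw [map_pow, ha, inv_pow, hc, inv_one]
    exact ((ClassGroup.mk0_eq_one_iff (a ^ ℓ).2).1 this).principal
  have hβ0 : β ≠ 0 := by
    rintro rfl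
    exact pow_ne_zero ℓ (nonZeroDivisors.coe_ne_zero a) (by simpa using hβ)
  obtain ⟨θ, hθa, hθ0, hθ⟩ := exists_mem_forall_pow_le hℓ a hβ hB0 hB
  obtain ⟨b, hb⟩ := Ideal.dvd_span_singleton.2 hθa
  have hb0 : b ≠ 0 := by
    rintro rfl
    exact hθ0 (by simpa using hb)
  have span_pow : Ideal.span {θ ^ ℓ} = Ideal.span {β} * b ^ ℓ := by
    rw [← hβ, ← mul_pow, ← hb, Ideal.span_singleton_pow]
  obtain ⟨γ, hγ⟩ : β ∣ θ ^ ℓ := by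
    rw [← Ideal.mem_span_singleton, ← Ideal.dvd_span_singleton, span_pow]
    exact dvd_mul_right _ _
  refine ⟨⟨b, mem_nonZeroDivisors_of_ne_zero hb0⟩, γ, ?_, ?_, fun w => ?_⟩
  · rw [← inv_inv c, ← ha, ClassGroup.mk0_eq_mk0_inv_iff]
    exact ⟨θ, hθ0, (mul_comm _ _).trans hb.symm⟩
  · refine mul_left_cancel₀ (a := Ideal.span {β}) (by simpa using hβ0) ?_
    rw [← span_pow, hγ, Ideal.span_singleton_mul_span_singleton]
  · have hβw : 0 < w (β : K) := pos_iff.2 (by simpa using hβ0)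
    refine le_of_mul_le_mul_left ?_ hβw
    calc w (β : K) * w (γ : K) = w (θ : K) ^ ℓ := by
          rw [← map_mul, ← map_pow, ← map_mul, ← hγ, map_pow]
      _ ≤ w (β : K) * B ^ ℓ := hθ w

end ShortGenerators

section QuadraticFields

open Module
open scoped nonZeroDivisors

theorem not_isSquare_ratCast_of_squarefree {e : ℤ} (he : Squarefree e) (he1 : e ≠ 1) :
    ¬IsSquare (e : ℚ) := by
  rw [Rat.isSquare_intCast_iff]
  rintro ⟨r, rfl⟩
  rcases Int.isUnit_iff.1 (he r (dvd_refl _)) with rfl | rfl <;> simp at he1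

theorem exists_eq_intCast_of_squarefree_mul_sq {e k : ℤ} (he : Squarefree e) {q : ℚ}
    (h : e * q ^ 2 = k) : ∃ n : ℤ, q = n := by
  have he0 : (e : ℚ) ≠ 0 := by exact_mod_cast he.ne_zero
  have hsq : (e * q) ^ 2 = ((e * k : ℤ) : ℚ) := by
    push_cast
    rw [← h]
    ring
  obtain ⟨n, hn : (n : ℚ) = e * q⟩ :=
    IsIntegrallyClosed.exists_algebraMap_eq_of_isIntegral_pow (R := ℤ) two_pos <| by
      rw [hsq]
      exact isIntegral_algebraMap
  rw [← hn] at hsq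
  obtain ⟨t, rfl⟩ : e ∣ n :=
    (he.dvd_pow_iff_dvd two_ne_zero).1 ⟨k, by exact_mod_cast hsq⟩
  exact ⟨t, mul_left_cancel₀ he0 (by rw [← hn, Int.cast_mul])⟩

theorem isIntegral_of_sq_eq_intCast {R : Type*} [CommRing R] {e : ℤ} {s : R} (hs : s ^ 2 = e) :
    IsIntegral ℤ s :=
  IsIntegral.of_pow two_pos (hs ▸ isIntegral_algebraMap)

theorem discr_dvd_algebra_discr {K ι : Type*} [Field K] [NumberField K] [Fintype ι] [DecidableEq ι]
    (hι : Fintype.card ι = finrank ℚ K) (v : ι → 𝓞 K) : discr K ∣ Algebra.discr ℤ v := by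
  have hcard : Fintype.card (Free.ChooseBasisIndex ℤ (𝓞 K)) = Fintype.card ι := by
    rw [← finrank_eq_card_chooseBasisIndex, RingOfIntegers.rank, hι]
  let b : Basis ι ℤ (𝓞 K) := (RingOfIntegers.basis K).reindex (Fintype.equivOfCardEq hcard)
  have h := Algebra.discr_of_matrix_vecMul (A := ℤ) b (b.toMatrix v)
  rw [b.toMatrix_map_vecMul, NumberField.discr_eq_discr] at h
  exact h ▸ dvd_mul_left _ _

theorem exists_eq_two_mul_pow_of_sq_eq {ℓ : ℕ} (hℓ : Odd ℓ) {u m : ℤ} (hm : m ≠ 0)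
    (h : u ^ 2 = 4 * m ^ ℓ) : ∃ t : ℤ, u = 2 * t ^ ℓ := by
  obtain ⟨k, rfl⟩ := hℓ
  obtain ⟨t, rfl⟩ : 2 * m ^ k ∣ u := by
    rw [← Int.pow_dvd_pow_iff two_ne_zero, h]
    exact ⟨m, by ring⟩
  have ht : t ^ 2 = m := by
    refine mul_left_cancel₀ (a := 4 * m ^ (2 * k)) (by positivity) ?_
    linear_combination h
  exact ⟨t, by rw [← ht]; ring⟩

section Embeddings

variable {K : Type*} [Field K] [CharZero K] {e : ℤ} {g : K}

theorem linearIndependent_one_of_sq_eq (he : ¬IsSquare (e : ℚ)) (hg : g ^ 2 = e) :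
    LinearIndependent ℚ ![(1 : K), g] := by
  refine LinearIndependent.pair_iff.2 fun p q hpq => ?_
  rw [Rat.smul_def, Rat.smul_def, mul_one] at hpq
  have hsq : p ^ 2 = q ^ 2 * e := by
    have : (p : K) ^ 2 = q ^ 2 * e := by linear_combination (p - q * g) * hpq + (q : K) ^ 2 * hg
    exact_mod_cast this
  have hq : q = 0 := by
    by_contra hq
    refine he ⟨p / q, ?_⟩
    field_simp
    linear_combination -hsq
  rw [hq, zero_pow two_ne_zero, zero_mul] at hsq
  exact ⟨pow_eq_zero_iff two_ne_zero |>.1 hsq, hq⟩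

variable [Algebra.IsQuadraticExtension ℚ K]

theorem exists_eq_add_mul_of_sq_eq (he : ¬IsSquare (e : ℚ)) (hg : g ^ 2 = e) (x : K) :
    ∃ a b : ℚ, x = a + b * g := by
  have hcard : Fintype.card (Fin 2) = finrank ℚ K := by
    rw [Algebra.IsQuadraticExtension.finrank_eq_two ℚ K, Fintype.card_fin]
  have hli := linearIndependent_one_of_sq_eq he hg
  let b := basisOfLinearIndependentOfCardEqFinrank hli hcard
  refine ⟨b.repr x 0, b.repr x 1, ?_⟩
  conv_lhs => rw [← b.sum_repr x]
  simp [b, Fin.sum_univ_two, Rat.smul_def]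

theorem exists_embeddings_of_sq_eq (he : ¬IsSquare (e : ℚ)) (hg : g ^ 2 = e) :
    ∃ φ ψ : K →ₐ[ℚ] ℂ, φ ≠ ψ ∧ Finset.univ = {φ, ψ} ∧ ψ g = -φ g := by
  have hcard : (Finset.univ : Finset (K →ₐ[ℚ] ℂ)).card = 2 := by
    rw [Finset.card_univ, AlgHom.card, Algebra.IsQuadraticExtension.finrank_eq_two ℚ K]
  obtain ⟨φ, ψ, hne, huniv⟩ := Finset.card_eq_two.1 hcard
  refine ⟨φ, ψ, hne, huniv, ?_⟩
  have hsq : ψ g ^ 2 = φ g ^ 2 := by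
    rw [← map_pow, ← map_pow, hg, map_intCast, map_intCast]
  refine (sq_eq_sq_iff_eq_or_eq_neg.1 hsq).resolve_left fun h => hne ?_
  ext x
  obtain ⟨a, b, rfl⟩ := exists_eq_add_mul_of_sq_eq he hg x
  simp [h]

theorem norm_add_mul_of_sq_eq (he : ¬IsSquare (e : ℚ)) (hg : g ^ 2 = e) (a b : ℚ) :
    Algebra.norm ℚ (a + b * g) = a ^ 2 - e * b ^ 2 := by
  obtain ⟨φ, ψ, hne, huniv, hψ⟩ := exists_embeddings_of_sq_eq he hg
  have hφ : φ g ^ 2 = e := by rw [← map_pow, hg, map_intCast]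
  have h := Algebra.norm_eq_prod_embeddings ℚ ℂ (a + b * g)
  rw [huniv, Finset.prod_pair hne] at h
  simp only [map_add, map_mul, hψ, eq_ratCast, map_ratCast] at h
  have : (Algebra.norm ℚ (a + b * g) : ℂ) = a ^ 2 - e * b ^ 2 := by
    rw [h]
    linear_combination (-(b : ℂ) ^ 2) * hφ
  exact_mod_cast this

theorem trace_add_mul_of_sq_eq (he : ¬IsSquare (e : ℚ)) (hg : g ^ 2 = e) (a b : ℚ) :
    Algebra.trace ℚ K (a + b * g) = 2 * a := by
  obtain ⟨φ, ψ, hne, huniv, hψ⟩ := exists_embeddings_of_sq_eq he hg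
  have h := trace_eq_sum_embeddings ℂ (K := ℚ) (x := a + b * g)
  rw [huniv, Finset.sum_pair hne] at h
  have : (Algebra.trace ℚ K (a + b * g) : ℂ) = 2 * a := by
    rw [← eq_ratCast (algebraMap ℚ ℂ), h]
    simp only [map_add, map_mul, hψ, map_ratCast]
    ring
  exact_mod_cast this

end Embeddings

variable {K : Type*} [Field K] [NumberField K] {e : ℤ} {g : K}

/-- The integers `(m, u, v)` record a class `c` of `K` together with a generator
`γ = (u + v * g) / 2`, of norm `m ^ ℓ`, of the `ℓ`-th power of some ideal in `c`; here `g` is a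
square root generating the quadratic field `K`. -/
def IsClassPoint (g : K) (ℓ : ℕ) (c : ClassGroup (𝓞 K)) (m u v : ℤ) : Prop :=
  ∃ (b : (Ideal (𝓞 K))⁰) (γ : 𝓞 K), ClassGroup.mk0 b = c ∧ (b : Ideal (𝓞 K)) ^ ℓ = Ideal.span {γ} ∧
    2 * (γ : K) = u + v * g ∧ Algebra.norm ℤ γ = m ^ ℓ

theorem IsClassPoint.ne_zero {ℓ : ℕ} (hℓ : ℓ ≠ 0) {c : ClassGroup (𝓞 K)} {m u v : ℤ}
    (h : IsClassPoint g ℓ c m u v) : m ≠ 0 := by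
  obtain ⟨b, γ, -, hspan, -, hnorm⟩ := h
  rintro rfl
  rw [zero_pow hℓ, Algebra.norm_eq_zero_iff] at hnorm
  rw [hnorm, Ideal.span_singleton_eq_bot.2 rfl] at hspan
  exact nonZeroDivisors.coe_ne_zero b (pow_eq_zero_iff hℓ |>.1 hspan)

theorem IsClassPoint.unique {ℓ : ℕ} (hℓ : ℓ ≠ 0) {c c' : ClassGroup (𝓞 K)} {m m' u v : ℤ}
    (h : IsClassPoint g ℓ c m u v) (h' : IsClassPoint g ℓ c' m' u v) : c = c' := by
  obtain ⟨b, γ, rfl, hspan, hγ, -⟩ := h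
  obtain ⟨b', γ', rfl, hspan', hγ', -⟩ := h'
  have : γ = γ' := RingOfIntegers.coe_injective (mul_left_cancel₀ two_ne_zero (hγ.trans hγ'.symm))
  rw [Subtype.ext (pow_left_injective hℓ (hspan.trans (this ▸ hspan'.symm)))]

variable [Algebra.IsQuadraticExtension ℚ K]

theorem abs_discr_le_of_sq_eq (he : ¬IsSquare (e : ℚ)) (hg : g ^ 2 = e) :
    |discr K| ≤ 4 * |e| := by
  have he0 : e ≠ 0 := by
    rintro rfl
    exact he (by simp)
  obtain ⟨γ, hγ⟩ : ∃ γ : 𝓞 K, (γ : K) = g := ⟨⟨g, isIntegral_of_sq_eq_intCast hg⟩, rfl⟩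
  have trace_eq (x : 𝓞 K) (a b : ℚ) (hx : (x : K) = a + b * g) :
      (Algebra.trace ℤ (𝓞 K) x : ℚ) = 2 * a := by
    rw [Algebra.coe_trace_int, hx, trace_add_mul_of_sq_eq he hg]
  have hdiscr : Algebra.discr ℤ ![1, γ] = 4 * e := by
    have h11 := trace_eq (1 * 1) 1 0 (by simp)
    have h1γ := trace_eq (1 * γ) 0 1 (by simp [hγ])
    have hγ1 := trace_eq (γ * 1) 0 1 (by simp [hγ])
    have hγγ := trace_eq (γ * γ) e 0 (by simp [hγ, ← hg, pow_two])
    rw [Algebra.discr_def, Matrix.det_fin_two]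
    simp only [Algebra.traceMatrix_apply, Algebra.traceForm_apply, Matrix.cons_val_zero,
      Matrix.cons_val_one]
    qify
    rw [h11, h1γ, hγ1, hγγ]
    ring
  have hdvd : discr K ∣ 4 * e := by
    rw [← hdiscr]
    refine discr_dvd_algebra_discr ?_ _
    rw [Algebra.IsQuadraticExtension.finrank_eq_two ℚ K, Fintype.card_fin]
  have := Int.le_of_dvd (by positivity) ((abs_dvd_abs _ _).2 hdvd)
  rwa [abs_mul] at this

theorem exists_two_mul_eq_add_mul (he : Squarefree e) (he1 : e ≠ 1) (hg : g ^ 2 = e) (γ : 𝓞 K) :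
    ∃ u v : ℤ, 2 * (γ : K) = u + v * g := by
  have hns := not_isSquare_ratCast_of_squarefree he he1
  obtain ⟨a, b, hγ⟩ := exists_eq_add_mul_of_sq_eq hns hg (γ : K)
  have hnorm := norm_add_mul_of_sq_eq hns hg a b
  have htrace := trace_add_mul_of_sq_eq hns hg a b
  rw [← hγ, ← Algebra.coe_norm_int] at hnorm
  rw [← hγ, ← Algebra.coe_trace_int] at htrace
  obtain ⟨v, hv⟩ := exists_eq_intCast_of_squarefree_mul_sq (q := 2 * b)
    (k := Algebra.trace ℤ (𝓞 K) γ ^ 2 - 4 * Algebra.norm ℤ γ) he <| by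
      push_cast
      rw [hnorm, htrace]
      ring
  refine ⟨Algebra.trace ℤ (𝓞 K) γ, v, ?_⟩
  have hu : ((Algebra.trace ℤ (𝓞 K) γ : ℤ) : K) = 2 * a := by
    exact_mod_cast congrArg (Rat.cast (K := K)) htrace
  have hv' : (v : K) = 2 * b := by exact_mod_cast congrArg (Rat.cast (K := K)) hv.symm
  rw [hγ, hu, hv']
  ring

theorem four_mul_norm_eq (he : ¬IsSquare (e : ℚ)) (hg : g ^ 2 = e) {γ : 𝓞 K} {u v : ℤ}
    (hγ : 2 * (γ : K) = u + v * g) : 4 * Algebra.norm ℤ γ = u ^ 2 - e * v ^ 2 := by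
  have hγ' : (γ : K) = ((u / 2 : ℚ) : K) + ((v / 2 : ℚ) : K) * g := by
    push_cast
    linear_combination hγ / 2
  have hnorm := norm_add_mul_of_sq_eq he hg (u / 2) (v / 2)
  rw [← hγ', ← Algebra.coe_norm_int] at hnorm
  qify
  rw [hnorm]
  ring

theorem abs_mul_sqrt_le_of_forall_le (he : ¬IsSquare (e : ℚ)) (hg : g ^ 2 = e) {γ : 𝓞 K} {u v : ℤ}
    (hγ : 2 * (γ : K) = u + v * g) {A : ℝ} (hA : ∀ w : InfinitePlace K, w (γ : K) ≤ A) :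
    |(v : ℝ)| * √|(e : ℝ)| ≤ 2 * A := by
  obtain ⟨φ, ψ, -, -, hψ⟩ := exists_embeddings_of_sq_eq he hg
  have norm_le (σ : K →ₐ[ℚ] ℂ) : ‖σ γ‖ ≤ A := by
    simpa using hA (InfinitePlace.mk σ.toRingHom)
  have norm_sqrt : ‖φ g‖ = √|(e : ℝ)| := by
    rw [← abs_of_nonneg (norm_nonneg (φ g)), ← Real.sqrt_sq_eq_abs, ← norm_pow, ← map_pow, hg,
      map_intCast, Complex.norm_intCast]
  have hsub : v * φ g = φ γ - ψ γ := by
    have hφγ := congrArg φ hγ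
    have hψγ := congrArg ψ hγ
    simp only [map_mul, map_add, hψ, map_ofNat, map_intCast] at hφγ hψγ
    linear_combination (-1 / 2) * hφγ + (1 / 2) * hψγ
  calc |(v : ℝ)| * √|(e : ℝ)| = ‖φ γ - ψ γ‖ := by
        rw [← hsub, norm_mul, norm_sqrt, Complex.norm_intCast]
    _ ≤ ‖φ γ‖ + ‖ψ γ‖ := norm_sub_le _ _
    _ ≤ 2 * A := by linarith [norm_le φ, norm_le ψ]

theorem IsClassPoint.sq_eq (he : ¬IsSquare (e : ℚ)) (hg : g ^ 2 = e) {ℓ : ℕ}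
    {c : ClassGroup (𝓞 K)} {m u v : ℤ} (h : IsClassPoint g ℓ c m u v) :
    u ^ 2 = 4 * m ^ ℓ + e * v ^ 2 := by
  obtain ⟨b, γ, -, -, hγ, hnorm⟩ := h
  rw [← hnorm, four_mul_norm_eq he hg hγ]
  ring

theorem IsClassPoint.eq_of_nonneg (he : ¬IsSquare (e : ℚ)) (hg : g ^ 2 = e) {ℓ : ℕ} (hℓ : ℓ ≠ 0)
    {c c' : ClassGroup (𝓞 K)} {m u u' v : ℤ} (h : IsClassPoint g ℓ c m u v)
    (h' : IsClassPoint g ℓ c' m u' v) (hu : 0 ≤ u) (hu' : 0 ≤ u') : c = c' := by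
  have : u = u' := (sq_eq_sq₀ hu hu').1 ((h.sq_eq he hg).trans (h'.sq_eq he hg).symm)
  subst this
  exact h.unique hℓ h'

theorem IsClassPoint.eq_one_of_odd (he : ¬IsSquare (e : ℚ)) (hg : g ^ 2 = e) {ℓ : ℕ} (hℓ : Odd ℓ)
    {c : ClassGroup (𝓞 K)} {m u : ℤ} (h : IsClassPoint g ℓ c m u 0) : c = 1 := by
  have hℓ0 : ℓ ≠ 0 := hℓ.pos.ne'
  have hsq : u ^ 2 = 4 * m ^ ℓ := by simpa using h.sq_eq he hg
  obtain ⟨t, rfl⟩ := exists_eq_two_mul_pow_of_sq_eq hℓ (h.ne_zero hℓ0) hsq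
  obtain ⟨b, γ, rfl, hspan, hγ, -⟩ := h
  have hγ' : γ = (t : 𝓞 K) ^ ℓ := by
    refine RingOfIntegers.coe_injective (mul_left_cancel₀ two_ne_zero (hγ.trans ?_))
    simp
  rw [hγ', ← Ideal.span_singleton_pow] at hspan
  rw [ClassGroup.mk0_eq_one_iff, pow_left_injective hℓ0 hspan]
  exact ⟨_, rfl⟩

theorem IsClassPoint.neg {ℓ : ℕ} {c : ClassGroup (𝓞 K)} {m u v : ℤ}
    (h : IsClassPoint g ℓ c m u v) : IsClassPoint g ℓ c m (-u) (-v) := by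
  obtain ⟨b, γ, hb, hspan, hγ, hnorm⟩ := h
  refine ⟨b, -γ, hb, by rw [hspan, Ideal.span_singleton_neg], ?_, ?_⟩
  · push_cast
    linear_combination -hγ
  · rw [neg_eq_neg_one_mul, map_mul, hnorm, show (-1 : 𝓞 K) = algebraMap ℤ (𝓞 K) (-1) by simp,
      Algebra.norm_algebraMap, RingOfIntegers.rank,
      Algebra.IsQuadraticExtension.finrank_eq_two ℚ K, neg_one_sq, one_mul]

theorem exists_isClassPoint {ℓ : ℕ} (hℓ : Odd ℓ) (he : Squarefree e) (he1 : e ≠ 1)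
    (hg : g ^ 2 = e) {B : ℝ} (hB0 : 0 ≤ B) (hB : √(4 * |(e : ℝ)|) < B ^ 2)
    {c : ClassGroup (𝓞 K)} (hc : c ^ ℓ = 1) :
    ∃ m u v : ℤ, IsClassPoint g ℓ c m u v ∧ 0 ≤ u ∧ |(m : ℝ)| ≤ B ^ 2 ∧
      |(v : ℝ)| * √|(e : ℝ)| ≤ 2 * B ^ ℓ := by
  have hns := not_isSquare_ratCast_of_squarefree he he1
  have hrank := Algebra.IsQuadraticExtension.finrank_eq_two ℚ K
  have hdiscr : |(discr K : ℝ)| ≤ 4 * |(e : ℝ)| := by exact_mod_cast abs_discr_le_of_sq_eq hns hg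
  obtain ⟨b, γ, hb, hspan, hγB⟩ := exists_mk0_eq_and_pow_eq_span_of_pow_eq_one hℓ.pos.ne' hB0
    (by rw [hrank]; exact (Real.sqrt_le_sqrt hdiscr).trans_lt hB) hc
  obtain ⟨u, v, hγ⟩ := exists_two_mul_eq_add_mul he he1 hg γ
  obtain ⟨m, hnorm, hm⟩ : ∃ m : ℤ, Algebra.norm ℤ γ = m ^ ℓ ∧
      m.natAbs = Ideal.absNorm (b : Ideal (𝓞 K)) := by
    have h : (Algebra.norm ℤ γ).natAbs = Ideal.absNorm (b : Ideal (𝓞 K)) ^ ℓ := by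
      rw [← Ideal.absNorm_span_singleton, ← hspan, map_pow]
    rcases Int.natAbs_eq (Algebra.norm ℤ γ) with hn | hn
    · exact ⟨Ideal.absNorm (b : Ideal (𝓞 K)), by rw [hn, h, Nat.cast_pow], Int.natAbs_natCast _⟩
    · refine ⟨-Ideal.absNorm (b : Ideal (𝓞 K)), ?_, by simp⟩
      rw [hn, h, hℓ.neg_pow, Nat.cast_pow]
  have hmB : |(m : ℝ)| ≤ B ^ 2 := by
    rw [← Int.cast_abs, ← Nat.cast_natAbs, hm, ← hrank]
    exact absNorm_le_pow_finrank_of_forall_le hℓ.pos.ne' hspan hB0 hγB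
  have hvB := abs_mul_sqrt_le_of_forall_le hns hg hγ hγB
  have hpoint : IsClassPoint g ℓ c m u v := ⟨b, γ, hb, hspan, hγ, hnorm⟩
  rcases le_total 0 u with hu | hu
  · exact ⟨m, u, v, hpoint, hu, hmB, hvB⟩
  · exact ⟨m, -u, -v, hpoint.neg, by simpa, hmB, by simpa⟩

end QuadraticFields

section NonzeroBall

open Finset

/-- The nonzero integers of absolute value at most `N`. -/
noncomputable def nonzeroBall (N : ℕ) : Finset ℤ := (Icc (-(N : ℤ)) N).erase 0

theorem mem_nonzeroBall {N : ℕ} {x : ℤ} : x ∈ nonzeroBall N ↔ x ≠ 0 ∧ x.natAbs ≤ N := by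
  rw [nonzeroBall, mem_erase, mem_Icc]
  lia

theorem nonzeroBall_succ (N : ℕ) :
    nonzeroBall (N + 1) = insert (N + 1 : ℤ) (insert (-(N + 1 : ℤ)) (nonzeroBall N)) := by
  ext x
  simp only [mem_insert, mem_nonzeroBall]
  lia

theorem sum_nonzeroBall {A : Type*} [AddCommMonoid A] (f : ℤ → A) (N : ℕ) :
    ∑ x ∈ nonzeroBall N, f x = ∑ n ∈ Icc 1 N, (f n + f (-n)) := by
  induction N with
  | zero => simp [nonzeroBall]
  | succ N ih =>
    have hneg : -(N + 1 : ℤ) ∉ nonzeroBall N := by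
      rw [mem_nonzeroBall]
      lia
    have hpos : (N + 1 : ℤ) ∉ insert (-(N + 1 : ℤ)) (nonzeroBall N) := by
      rw [mem_insert, mem_nonzeroBall]
      lia
    rw [nonzeroBall_succ, sum_insert hpos, sum_insert hneg, ih, sum_Icc_succ_top (by lia),
      ← add_assoc, add_comm]
    push_cast
    rfl

theorem sum_nonzeroBall_natAbs {R : Type*} [NonAssocSemiring R] (f : ℕ → R) (N : ℕ) :
    ∑ x ∈ nonzeroBall N, f x.natAbs = 2 * ∑ n ∈ Icc 1 N, f n := by
  simp [sum_nonzeroBall, mul_sum, two_mul]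

theorem card_nonzeroBall (N : ℕ) : #(nonzeroBall N) = 2 * N := by
  have h := sum_nonzeroBall_natAbs (fun _ => 1) N
  rwa [← card_eq_sum_ones, ← card_eq_sum_ones, Nat.card_Icc,
    add_tsub_cancel_right] at h

end NonzeroBall

section Divisors

open Finset

/-- The largest number of divisors of a positive integer up to `L`. -/
noncomputable def maxCardDivisors (L : ℕ) : ℕ := (Icc 1 L).sup fun n => #n.divisors

theorem card_divisors_le_maxCardDivisors {n L : ℕ} (hn : n ≠ 0) (hL : n ≤ L) :
    #n.divisors ≤ maxCardDivisors L :=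
  le_sup (f := fun n => #n.divisors) (mem_Icc.2 ⟨Nat.one_le_iff_ne_zero.2 hn, hL⟩)

theorem card_le_two_mul_card_divisors {k : ℤ} (hk : k ≠ 0) {S : Finset ℤ} (hS : ∀ x ∈ S, x ∣ k) :
    #S ≤ 2 * #k.natAbs.divisors := by
  refine card_le_mul_card_image_of_maps_to (f := Int.natAbs) (fun x hx => ?_) 2 fun b _ => ?_
  · exact Nat.mem_divisors.2 ⟨Int.natAbs_dvd_natAbs.2 (hS x hx), Int.natAbs_ne_zero.2 hk⟩
  · have : {x ∈ S | x.natAbs = b} ⊆ {(b : ℤ), -(b : ℤ)} := fun x hx => by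
      simp only [mem_filter, mem_insert, mem_singleton] at hx ⊢
      lia
    exact (card_le_card this).trans card_le_two

theorem card_le_two_mul_card_divisors_of_mul_sq_eq {n : ℤ} (hn : n ≠ 0) {S : Finset (ℤ × ℤ)}
    (hS : ∀ p ∈ S, p.1 * p.2 ^ 2 = n) : #S ≤ 2 * #n.natAbs.divisors := by
  have hinj : Set.InjOn Prod.snd (S : Set (ℤ × ℤ)) := fun p hp q hq hpq => by
    have hp' := hS p hp
    have hq' := hS q hq
    have hq0 : q.2 ^ 2 ≠ 0 := right_ne_zero_of_mul (hq'.trans_ne hn)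
    rw [hpq, ← hq'] at hp'
    exact Prod.ext (mul_right_cancel₀ hq0 hp') hpq
  rw [← card_image_of_injOn hinj]
  refine card_le_two_mul_card_divisors hn fun v hv => ?_
  obtain ⟨p, hp, rfl⟩ := mem_image.1 hv
  exact (dvd_pow_self _ two_ne_zero).trans (Dvd.intro_left _ (hS p hp))

theorem ratCast_harmonic_nonneg (n : ℕ) : (0 : ℝ) ≤ harmonic n := by
  exact_mod_cast sum_nonneg fun i _ => by positivity

theorem sum_multiples_div_le_harmonic {d : ℕ} (hd : 0 < d) (V : ℕ) :
    (∑ W ∈ Icc 1 V, if d ∣ W then (d : ℝ) / W else 0) ≤ harmonic V := by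
  have hfilter : {W ∈ Icc 1 V | d ∣ W} = (Icc 1 (V / d)).image (d * ·) := by
    ext W
    simp only [mem_filter, mem_image, mem_Icc, Nat.le_div_iff_mul_le hd]
    constructor
    · rintro ⟨⟨hW, hWV⟩, k, rfl⟩
      exact ⟨k, ⟨Nat.pos_of_mul_pos_left hW, by rwa [mul_comm]⟩, rfl⟩
    · rintro ⟨k, ⟨hk, hkV⟩, rfl⟩
      exact ⟨⟨Nat.mul_pos hd hk, by rwa [mul_comm]⟩, dvd_mul_right d k⟩
  rw [← sum_filter, hfilter, sum_image (mul_right_injective₀ hd.ne').injOn, harmonic_eq_sum_Icc,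
    Rat.cast_sum]
  calc ∑ k ∈ Icc 1 (V / d), (d : ℝ) / (d * k : ℕ) =
        ∑ k ∈ Icc 1 (V / d), (((k : ℚ)⁻¹ : ℚ) : ℝ) := by
        refine sum_congr rfl fun k _ => ?_
        push_cast
        field_simp
    _ ≤ ∑ k ∈ Icc 1 V, (((k : ℚ)⁻¹ : ℚ) : ℝ) :=
        sum_le_sum_of_subset_of_nonneg (Icc_subset_Icc_right (Nat.div_le_self V d))
          fun k _ _ => by positivity

theorem sum_gcd_div_le_card_divisors_mul_harmonic {n : ℕ} (hn : n ≠ 0) (V : ℕ) :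
    ∑ W ∈ Icc 1 V, (W.gcd n : ℝ) / W ≤ #n.divisors * harmonic V := by
  have gcd_div_le (W : ℕ) :
      (W.gcd n : ℝ) / W ≤ ∑ d ∈ n.divisors, if d ∣ W then (d : ℝ) / W else 0 := by
    refine le_of_eq_of_le ?_ (single_le_sum (fun d _ => by positivity)
      (Nat.mem_divisors.2 ⟨Nat.gcd_dvd_right W n, hn⟩))
    rw [if_pos (Nat.gcd_dvd_left W n)]
  calc ∑ W ∈ Icc 1 V, (W.gcd n : ℝ) / W
      ≤ ∑ W ∈ Icc 1 V, ∑ d ∈ n.divisors, if d ∣ W then (d : ℝ) / W else 0 :=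
        sum_le_sum fun W _ => gcd_div_le W
    _ = ∑ d ∈ n.divisors, ∑ W ∈ Icc 1 V, if d ∣ W then (d : ℝ) / W else 0 := sum_comm
    _ ≤ #n.divisors * harmonic V := by
        rw [← nsmul_eq_mul]
        exact sum_le_card_nsmul _ _ _ fun d hd =>
          sum_multiples_div_le_harmonic (Nat.pos_of_mem_divisors hd) V

end Divisors

section SquareRoots

open Finset

theorem sq_sqrt_of_isSquare {n : ℤ} (h : IsSquare n) : n.sqrt ^ 2 = n := by
  obtain ⟨r, rfl⟩ := h
  rw [Int.sqrt_eq, sq, Int.natAbs_mul_self']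

theorem card_le_card_divisors_of_isSquare_add {a b : ℤ} (hab : a ≠ b) {S : Finset ℤ}
    (hS : ∀ n ∈ S, IsSquare (a + n) ∧ IsSquare (b + n)) : #S ≤ #(a - b).natAbs.divisors := by
  let r (n : ℤ) : ℤ := (a + n).sqrt
  let s (n : ℤ) : ℤ := (b + n).sqrt
  have mul_eq (n : ℤ) (hn : n ∈ S) : (r n + s n) * (r n - s n) = a - b := by
    linear_combination sq_sqrt_of_isSquare (hS n hn).1 - sq_sqrt_of_isSquare (hS n hn).2
  refine card_le_card_of_injOn (fun n => (r n + s n).natAbs) (fun n hn => ?_) fun n hn k hk h => ?_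
  · refine Nat.mem_divisors.2 ⟨?_, Int.natAbs_ne_zero.2 (sub_ne_zero.2 hab)⟩
    exact Int.natAbs_dvd_natAbs.2 (Dvd.intro _ (mul_eq n hn))
  · have hadd : r n + s n = r k + s k := by
      have := Int.sqrt_nonneg (a + n)
      have := Int.sqrt_nonneg (b + n)
      have := Int.sqrt_nonneg (a + k)
      have := Int.sqrt_nonneg (b + k)
      lia
    have hsub : r n - s n = r k - s k := by
      have hk0 : r k + s k ≠ 0 := left_ne_zero_of_mul ((mul_eq k hk).trans_ne (sub_ne_zero.2 hab))
      refine mul_left_cancel₀ hk0 ?_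
      rw [mul_eq k hk, ← mul_eq n hn, hadd]
    have hr : r n = r k := by lia
    have := sq_sqrt_of_isSquare (hS n hn).1
    rw [show (a + n).sqrt = (a + k).sqrt from hr, sq_sqrt_of_isSquare (hS k hk).1] at this
    lia

theorem card_le_div_add_one_of_dvd_sub {S : Finset ℤ} {q : ℕ} (hq : 0 < q) {len : ℝ}
    (hlen0 : 0 ≤ len) (hlen : ∀ x ∈ S, ∀ y ∈ S, (x - y : ℝ) ≤ len)
    (hmod : ∀ x ∈ S, ∀ y ∈ S, (q : ℤ) ∣ x - y) : (#S : ℝ) ≤ len / q + 1 := by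
  obtain rfl | hS := S.eq_empty_or_nonempty
  · rw [card_empty, Nat.cast_zero]
    positivity
  let x₀ := S.min' hS
  have hx₀ : x₀ ∈ S := S.min'_mem hS
  have hcard : #S ≤ #(Icc 0 ⌊len / q⌋) := by
    refine card_le_card_of_injOn (fun x => (x - x₀) / q) (fun x hx => ?_) fun x hx y hy hxy => ?_
    · have hx' : x₀ ≤ x := S.min'_le x hx
      refine mem_Icc.2 ⟨Int.ediv_nonneg (by lia) (by lia), Int.le_floor.2 ?_⟩
      rw [Int.cast_div (hmod x hx x₀ hx₀) (by positivity), Int.cast_natCast, Int.cast_sub]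
      gcongr
      exact hlen x hx x₀ hx₀
    · exact sub_left_injective ((Int.ediv_left_inj (hmod x hx x₀ hx₀) (hmod y hy x₀ hx₀)).1 hxy)
  have hfloor : 0 ≤ ⌊len / q⌋ := Int.floor_nonneg.2 (by positivity)
  rw [Int.card_Icc, ← Int.ofNat_le, Int.toNat_of_nonneg (by lia), sub_zero] at hcard
  calc (#S : ℝ) ≤ (⌊len / q⌋ + 1 : ℤ) := by exact_mod_cast hcard
    _ ≤ len / q + 1 := by
      push_cast
      gcongr
      exact Int.floor_le _

theorem sub_le_sqrt_of_abs_sq_sub_le {x y a T : ℝ} (hy : 0 ≤ y)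
    (hxa : |x ^ 2 - a| ≤ T) (hya : |y ^ 2 - a| ≤ T) : x - y ≤ √(2 * T) := by
  rw [abs_le] at hxa hya
  rcases le_total x y with hxy | hxy
  · exact (sub_nonpos.2 hxy).trans (Real.sqrt_nonneg _)
  · refine Real.le_sqrt_of_sq_le ?_
    nlinarith

theorem dvd_of_gcd_eq_of_mul_dvd_mul {x y : ℤ} {d f : ℕ} (hd : d ≠ 0)
    (hgcd : Int.gcd x (d * f) = d) (h : (d * f : ℤ) ∣ x * y) : (f : ℤ) ∣ y := by
  obtain ⟨k, rfl⟩ : (d : ℤ) ∣ x := hgcd ▸ Int.gcd_dvd_left x (d * f)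
  have hd' : (d : ℤ) ≠ 0 := by exact_mod_cast hd
  rw [Int.gcd_mul_left, Int.natAbs_natCast, Nat.mul_eq_left hd] at hgcd
  rw [mul_assoc, mul_dvd_mul_iff_left hd'] at h
  exact Int.dvd_of_dvd_mul_right_of_gcd_one h (by rwa [Int.gcd_comm])

-- `gcd d f * lcm d f = W ^ 2`, and `gcd d f` divides both `W` and `2 * u₀`.
theorem sq_dvd_gcd_mul_sub {W d f : ℕ} (hW : W ^ 2 = d * f) {a u₀ x y : ℤ}
    (hu₀ : (W : ℤ) ^ 2 ∣ u₀ ^ 2 - a) (hdx : (d : ℤ) ∣ x - u₀) (hfx : (f : ℤ) ∣ x + u₀)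
    (hdy : (d : ℤ) ∣ y - u₀) (hfy : (f : ℤ) ∣ y + u₀) :
    (W : ℤ) ^ 2 ∣ W.gcd (4 * a).natAbs * (x - y) := by
  have hgW : d.gcd f ∣ W := by
    rw [← Nat.pow_dvd_pow_iff two_ne_zero, hW, sq]
    exact mul_dvd_mul (Nat.gcd_dvd_left d f) (Nat.gcd_dvd_right d f)
  have hga : (d.gcd f : ℤ) ∣ 4 * a := by
    have h2u₀ : (d.gcd f : ℤ) ∣ 2 * u₀ := by
      have hd := (Int.natCast_dvd_natCast.2 (Nat.gcd_dvd_left d f)).trans hdx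
      have hf := (Int.natCast_dvd_natCast.2 (Nat.gcd_dvd_right d f)).trans hfx
      have := dvd_sub hf hd
      rwa [show x + u₀ - (x - u₀) = 2 * u₀ by ring] at this
    have hua : (d.gcd f : ℤ) ∣ u₀ ^ 2 - a :=
      ((Int.natCast_dvd_natCast.2 hgW).trans (dvd_pow_self _ two_ne_zero)).trans hu₀
    have := dvd_sub (h2u₀.mul_left (2 * u₀)) (hua.mul_left 4)
    rwa [show 2 * u₀ * (2 * u₀) - 4 * (u₀ ^ 2 - a) = 4 * a by ring] at this
  have hgcd : d.gcd f ∣ W.gcd (4 * a).natAbs := Nat.dvd_gcd hgW (Int.natCast_dvd.1 hga)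
  have hlcm : (d.lcm f : ℤ) ∣ x - y := by
    have hd : (d : ℤ) ∣ x - y := by simpa using dvd_sub hdx hdy
    have hf : (f : ℤ) ∣ x - y := by simpa using dvd_sub hfx hfy
    exact Int.natCast_dvd.2 (Nat.lcm_dvd (Int.natCast_dvd.1 hd) (Int.natCast_dvd.1 hf))
  have := mul_dvd_mul (Int.natCast_dvd_natCast.2 hgcd) hlcm
  rwa [← Nat.cast_mul, Nat.gcd_mul_lcm, ← hW, Nat.cast_pow] at this

theorem card_le_of_sq_dvd_gcd_mul_sub {W : ℕ} (hW : 0 < W) {N : ℝ} (hN : 0 ≤ N) {a : ℤ}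
    {S : Finset ℤ} (hS0 : ∀ u ∈ S, 0 ≤ u) (hSN : ∀ u ∈ S, |(u : ℝ) ^ 2 - a| ≤ N * W ^ 2)
    (hS : ∀ x ∈ S, ∀ y ∈ S, (W : ℤ) ^ 2 ∣ W.gcd (4 * a).natAbs * (x - y)) :
    (#S : ℝ) ≤ √(2 * N) * (W.gcd (4 * a).natAbs / W) + 1 := by
  obtain ⟨w, hw⟩ := Nat.gcd_dvd_left W (4 * a).natAbs
  set G := W.gcd (4 * a).natAbs
  have hG : 0 < G := Nat.gcd_pos_of_pos_left _ hW
  have hw0 : 0 < w := by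
    rw [hw] at hW
    exact Nat.pos_of_mul_pos_left hW
  have hmod (x) (hx : x ∈ S) (y) (hy : y ∈ S) : ((w * W : ℕ) : ℤ) ∣ x - y := by
    have hG' : (G : ℤ) ≠ 0 := by exact_mod_cast hG.ne'
    rw [← mul_dvd_mul_iff_left hG', ← Nat.cast_mul, ← mul_assoc, ← hw, ← sq, Nat.cast_pow]
    exact hS x hx y hy
  have hlen (x) (hx : x ∈ S) (y) (hy : y ∈ S) : (x - y : ℝ) ≤ √(2 * N) * W := by
    have h := sub_le_sqrt_of_abs_sq_sub_le (Int.cast_nonneg (hS0 y hy)) (hSN x hx) (hSN y hy)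
    rwa [← mul_assoc, Real.sqrt_mul (by positivity), Real.sqrt_sq (by positivity)] at h
  refine (card_le_div_add_one_of_dvd_sub (by positivity) (by positivity) hlen hmod).trans_eq ?_
  have hw' : (W : ℝ) = G * w := by exact_mod_cast hw
  rw [Nat.cast_mul, mul_div_mul_right _ _ (by positivity), hw']
  field_simp

-- The value of `gcd (u - u₀, W ^ 2)` pins `u` to one residue class modulo `W ^ 2 / gcd (W, 4 * a)`.
theorem card_le_of_sq_dvd_sq_sub {W : ℕ} (hW : 0 < W) {N : ℝ} (hN : 0 ≤ N) {a : ℤ}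
    {S : Finset ℤ} (hS0 : ∀ u ∈ S, 0 ≤ u) (hSN : ∀ u ∈ S, |(u : ℝ) ^ 2 - a| ≤ N * W ^ 2)
    (hS : ∀ u ∈ S, (W : ℤ) ^ 2 ∣ u ^ 2 - a) :
    (#S : ℝ) ≤ #(W ^ 2).divisors * (√(2 * N) * (W.gcd (4 * a).natAbs / W) + 1) := by
  obtain rfl | ⟨u₀, hu₀⟩ := S.eq_empty_or_nonempty
  · rw [card_empty, Nat.cast_zero]
    positivity
  have hmaps : ∀ u ∈ S, Int.gcd (u - u₀) ((W : ℤ) ^ 2) ∈ (W ^ 2).divisors := fun u _ => by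
    refine Nat.mem_divisors.2 ⟨Int.natCast_dvd_natCast.1 ?_, by positivity⟩
    rw [Nat.cast_pow]
    exact Int.gcd_dvd_right ..
  rw [card_eq_sum_card_fiberwise hmaps, Nat.cast_sum, ← nsmul_eq_mul]
  refine sum_le_card_nsmul _ _ _ fun d hd => ?_
  obtain ⟨f, hf⟩ := (Nat.mem_divisors.1 hd).1
  have hd0 : d ≠ 0 := (Nat.pos_of_mem_divisors hd).ne'
  have hdvd (u) (hu : u ∈ S) (hgcd : Int.gcd (u - u₀) ((W : ℤ) ^ 2) = d) :
      (d : ℤ) ∣ u - u₀ ∧ (f : ℤ) ∣ u + u₀ := by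
    have hf' : (W : ℤ) ^ 2 = d * f := by exact_mod_cast hf
    refine ⟨hgcd ▸ Int.gcd_dvd_left (u - u₀) ((W : ℤ) ^ 2), ?_⟩
    rw [hf'] at hgcd
    refine dvd_of_gcd_eq_of_mul_dvd_mul hd0 hgcd ?_
    rw [← hf']
    have := dvd_sub (hS u hu) (hS u₀ hu₀)
    rwa [show u ^ 2 - a - (u₀ ^ 2 - a) = (u - u₀) * (u + u₀) by ring] at this
  refine card_le_of_sq_dvd_gcd_mul_sub hW hN (fun u hu => hS0 u (mem_filter.1 hu).1)
    (fun u hu => hSN u (mem_filter.1 hu).1) fun x hx y hy => ?_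
  obtain ⟨hx, hxd⟩ := mem_filter.1 hx
  obtain ⟨hy, hyd⟩ := mem_filter.1 hy
  exact sq_dvd_gcd_mul_sub hf (hS u₀ hu₀) (hdvd x hx hxd).1 (hdvd x hx hxd).2
    (hdvd y hy hyd).1 (hdvd y hy hyd).2

end SquareRoots

section SquareTranslates

open Finset

/-- The nonzero integers `m` of absolute value at most `M` for which `f m + n` is a square. -/
noncomputable def squareTranslates (f : ℤ → ℤ) (M : ℕ) (n : ℤ) : Finset ℤ :=
  {m ∈ nonzeroBall M | IsSquare (f m + n)}

/-- The number of pairs of nonzero integers `(v, m)` in the box `|v| ≤ V`, `|m| ≤ M` for which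
`f m + e * v ^ 2` is a square. -/
noncomputable def squarePointCount (f : ℤ → ℤ) (V M : ℕ) (e : ℤ) : ℕ :=
  ∑ v ∈ nonzeroBall V, #(squareTranslates f M (e * v ^ 2))

theorem card_isSquare_add_mul_sq_le {v : ℤ} (hv : v ≠ 0) (a : ℤ) (N : ℕ) :
    (#{e ∈ nonzeroBall N | IsSquare (a + e * v ^ 2)} : ℝ) ≤
      #(v.natAbs ^ 2).divisors * (√(2 * N) * (v.natAbs.gcd (4 * a).natAbs / v.natAbs) + 1) := by
  let E := {e ∈ nonzeroBall N | IsSquare (a + e * v ^ 2)}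
  let root (e : ℤ) : ℤ := (a + e * v ^ 2).sqrt
  have root_sq_sub (e) (he : e ∈ E) : root e ^ 2 - a = e * v ^ 2 :=
    sub_eq_of_eq_add' (sq_sqrt_of_isSquare (mem_filter.1 he).2)
  have root_injOn : Set.InjOn root E := fun e he e' he' h => by
    have := root_sq_sub e he
    rw [h, root_sq_sub e' he'] at this
    exact (mul_right_cancel₀ (pow_ne_zero 2 hv) this).symm
  rw [← card_image_of_injOn root_injOn]
  refine card_le_of_sq_dvd_sq_sub (Int.natAbs_pos.2 hv) N.cast_nonneg ?_ ?_ ?_ <;>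
    simp only [forall_mem_image] <;> intro e he
  · exact Int.sqrt_nonneg _
  · have he' : |(e : ℝ)| ≤ N := by
      rw [← Int.cast_abs, Int.abs_eq_natAbs]
      exact_mod_cast (mem_nonzeroBall.1 (mem_filter.1 he).1).2
    have := congrArg (Int.cast : ℤ → ℝ) (root_sq_sub e he)
    push_cast at this
    rw [this, abs_mul, abs_sq, Nat.cast_natAbs, Int.cast_abs, sq_abs]
    gcongr
  · rw [root_sq_sub e he, Int.natCast_natAbs, sq_abs]
    exact dvd_mul_left _ _

variable {f : ℤ → ℤ} {L M N V : ℕ}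

theorem sum_card_isSquare_add_mul_sq_le {a : ℤ} (ha : a ≠ 0) (haL : (4 * a).natAbs ≤ L)
    (hVL : V ^ 2 ≤ L) :
    (∑ v ∈ nonzeroBall V, #{e ∈ nonzeroBall N | IsSquare (a + e * v ^ 2)} : ℝ) ≤
      2 * maxCardDivisors L * (√(2 * N) * (maxCardDivisors L * harmonic V) + V) := by
  have h4a : (4 * a).natAbs ≠ 0 := by lia
  calc (∑ v ∈ nonzeroBall V, #{e ∈ nonzeroBall N | IsSquare (a + e * v ^ 2)} : ℝ)
      ≤ ∑ v ∈ nonzeroBall V, maxCardDivisors L *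
          (√(2 * N) * (v.natAbs.gcd (4 * a).natAbs / v.natAbs) + 1) := by
        refine sum_le_sum fun v hv => ?_
        obtain ⟨hv0, hvV⟩ := mem_nonzeroBall.1 hv
        refine (card_isSquare_add_mul_sq_le hv0 a N).trans ?_
        gcongr
        exact card_divisors_le_maxCardDivisors (by simpa using hv0)
          ((Nat.pow_le_pow_left hvV 2).trans hVL)
    _ = 2 * maxCardDivisors L *
          (√(2 * N) * ∑ W ∈ Icc 1 V, (W.gcd (4 * a).natAbs / W : ℝ) + V) := by
        rw [sum_nonzeroBall_natAbs fun W => (maxCardDivisors L : ℝ) *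
          (√(2 * N) * (W.gcd (4 * a).natAbs / W) + 1), ← mul_sum, sum_add_distrib, ← mul_sum,
          sum_const, Nat.card_Icc, add_tsub_cancel_right, nsmul_one, mul_assoc]
    _ ≤ _ := by
        have := ratCast_harmonic_nonneg V
        gcongr
        refine (sum_gcd_div_le_card_divisors_mul_harmonic h4a V).trans ?_
        gcongr
        exact card_divisors_le_maxCardDivisors h4a haL

theorem sum_squarePointCount_le (hf0 : ∀ m ∈ nonzeroBall M, f m ≠ 0)
    (hfL : ∀ m ∈ nonzeroBall M, (4 * f m).natAbs ≤ L) (hVL : V ^ 2 ≤ L) :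
    (∑ e ∈ nonzeroBall N, squarePointCount f V M e : ℝ) ≤
      4 * M * maxCardDivisors L * (√(2 * N) * (maxCardDivisors L * harmonic V) + V) := by
  have hswap : ∑ e ∈ nonzeroBall N, squarePointCount f V M e =
      ∑ m ∈ nonzeroBall M, ∑ v ∈ nonzeroBall V,
        #{e ∈ nonzeroBall N | IsSquare (f m + e * v ^ 2)} := by
    simp_rw [squarePointCount, squareTranslates, card_filter]
    rw [sum_comm, sum_comm (s := nonzeroBall M)]
    exact sum_congr rfl fun v _ => sum_comm
  rw [← Nat.cast_sum, hswap]
  push_cast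
  refine (sum_le_card_nsmul _ _ _ fun m hm =>
    sum_card_isSquare_add_mul_sq_le (hf0 m hm) (hfL m hm) hVL).trans_eq ?_
  rw [card_nonzeroBall, nsmul_eq_mul]
  push_cast
  ring

theorem card_isSquare_add_mul_sq_and_isSquare_add_mul_sq_le {a b : ℤ} (hab : a ≠ b)
    (habL : (a - b).natAbs ≤ L) (hNVL : N * V ^ 2 ≤ L) :
    #{p ∈ nonzeroBall N ×ˢ nonzeroBall V |
      IsSquare (a + p.1 * p.2 ^ 2) ∧ IsSquare (b + p.1 * p.2 ^ 2)} ≤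
      2 * maxCardDivisors L * maxCardDivisors L := by
  let S : Finset (ℤ × ℤ) := {p ∈ nonzeroBall N ×ˢ nonzeroBall V |
    IsSquare (a + p.1 * p.2 ^ 2) ∧ IsSquare (b + p.1 * p.2 ^ 2)}
  let value (p : ℤ × ℤ) : ℤ := p.1 * p.2 ^ 2
  have card_image : #(S.image value) ≤ maxCardDivisors L := by
    refine (card_le_card_divisors_of_isSquare_add hab ?_).trans
      (card_divisors_le_maxCardDivisors (Int.natAbs_ne_zero.2 (sub_ne_zero.2 hab)) habL)
    exact forall_mem_image.2 fun p hp => (mem_filter.1 hp).2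
  have card_fiber (n) (hn : n ∈ S.image value) :
      #{p ∈ S | value p = n} ≤ 2 * maxCardDivisors L := by
    obtain ⟨p, hp, rfl⟩ := mem_image.1 hn
    obtain ⟨hpN, hpV⟩ := mem_product.1 (mem_filter.1 hp).1
    rw [mem_nonzeroBall] at hpN hpV
    have hvalue : value p ≠ 0 := mul_ne_zero hpN.1 (pow_ne_zero 2 hpV.1)
    refine (card_le_two_mul_card_divisors_of_mul_sq_eq hvalue fun q hq =>
      (mem_filter.1 hq).2).trans ?_
    gcongr
    refine card_divisors_le_maxCardDivisors (Int.natAbs_ne_zero.2 hvalue) ?_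
    rw [Int.natAbs_mul, Int.natAbs_pow]
    exact (Nat.mul_le_mul hpN.2 (Nat.pow_le_pow_left hpV.2 2)).trans hNVL
  calc #S ≤ 2 * maxCardDivisors L * #(S.image value) := card_le_mul_card_image S _ card_fiber
    _ ≤ 2 * maxCardDivisors L * maxCardDivisors L := by gcongr

theorem sum_card_offDiag_squareTranslates_le (hf : Set.InjOn f (nonzeroBall M))
    (hfL : ∀ m ∈ nonzeroBall M, ∀ m' ∈ nonzeroBall M, (f m - f m').natAbs ≤ L)
    (hNVL : N * V ^ 2 ≤ L) :
    ∑ e ∈ nonzeroBall N, ∑ v ∈ nonzeroBall V, #(squareTranslates f M (e * v ^ 2)).offDiag ≤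
      8 * M ^ 2 * maxCardDivisors L ^ 2 := by
  have hoffDiag (n : ℤ) : (squareTranslates f M n).offDiag =
      {q ∈ (nonzeroBall M).offDiag | IsSquare (f q.1 + n) ∧ IsSquare (f q.2 + n)} := by
    ext q
    simp only [squareTranslates, mem_offDiag, mem_filter]
    tauto
  have hcard : #(nonzeroBall M).offDiag ≤ (2 * M) ^ 2 := by
    rw [offDiag_card, card_nonzeroBall, sq]
    exact Nat.sub_le _ _
  calc ∑ e ∈ nonzeroBall N, ∑ v ∈ nonzeroBall V, #(squareTranslates f M (e * v ^ 2)).offDiag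
      = ∑ q ∈ (nonzeroBall M).offDiag, #{p ∈ nonzeroBall N ×ˢ nonzeroBall V |
          IsSquare (f q.1 + p.1 * p.2 ^ 2) ∧ IsSquare (f q.2 + p.1 * p.2 ^ 2)} := by
        rw [← sum_product' (f := fun e v => #(squareTranslates f M (e * v ^ 2)).offDiag)]
        simp_rw [hoffDiag, card_filter]
        exact sum_comm
    _ ≤ #(nonzeroBall M).offDiag • (2 * maxCardDivisors L * maxCardDivisors L) := by
        refine sum_le_card_nsmul _ _ _ fun q hq => ?_
        obtain ⟨hq1, hq2, hne⟩ := mem_offDiag.1 hq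
        exact card_isSquare_add_mul_sq_and_isSquare_add_mul_sq_le (hf.ne hq1 hq2 hne)
          (hfL _ hq1 _ hq2) hNVL
    _ ≤ (2 * M) ^ 2 * (2 * maxCardDivisors L * maxCardDivisors L) := by
        rw [smul_eq_mul]
        gcongr
    _ = 8 * M ^ 2 * maxCardDivisors L ^ 2 := by ring

-- The diagonal of the squared fibers is the first moment; two distinct fibers meet rarely.
theorem sum_sq_squarePointCount_le (hf : Set.InjOn f (nonzeroBall M))
    (hf0 : ∀ m ∈ nonzeroBall M, f m ≠ 0) (hfL : ∀ m ∈ nonzeroBall M, (4 * f m).natAbs ≤ L)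
    (hVL : V ^ 2 ≤ L) (hNVL : N * V ^ 2 ≤ L) :
    (∑ e ∈ nonzeroBall N, (squarePointCount f V M e : ℝ) ^ 2) ≤
      2 * V * (4 * M * maxCardDivisors L *
        (√(2 * N) * (maxCardDivisors L * harmonic V) + V) + 8 * M ^ 2 * maxCardDivisors L ^ 2) := by
  have sq_card (T : Finset ℤ) : #T ^ 2 = #T + #T.offDiag := by
    rw [offDiag_card, sq, Nat.add_sub_cancel' (Nat.le_mul_self _)]
  have sq_le (e : ℤ) : squarePointCount f V M e ^ 2 ≤ 2 * V * (squarePointCount f V M e +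
      ∑ v ∈ nonzeroBall V, #(squareTranslates f M (e * v ^ 2)).offDiag) := by
    rw [← card_nonzeroBall, squarePointCount, ← sum_add_distrib]
    simp_rw [← sq_card]
    exact sq_sum_le_card_mul_sum_sq
  have hsub (m) (hm : m ∈ nonzeroBall M) (m') (hm' : m' ∈ nonzeroBall M) :
      (f m - f m').natAbs ≤ L := by
    have := hfL m hm
    have := hfL m' hm'
    lia
  calc (∑ e ∈ nonzeroBall N, (squarePointCount f V M e : ℝ) ^ 2)
      ≤ ∑ e ∈ nonzeroBall N, 2 * V * (squarePointCount f V M e +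
          ∑ v ∈ nonzeroBall V, #(squareTranslates f M (e * v ^ 2)).offDiag : ℝ) :=
        sum_le_sum fun e _ => by exact_mod_cast sq_le e
    _ = 2 * V * (∑ e ∈ nonzeroBall N, (squarePointCount f V M e : ℝ) +
          ∑ e ∈ nonzeroBall N, ((∑ v ∈ nonzeroBall V,
            #(squareTranslates f M (e * v ^ 2)).offDiag : ℕ) : ℝ)) := by
        rw [← mul_sum, sum_add_distrib]
    _ ≤ _ := by
        gcongr
        · exact sum_squarePointCount_le hf0 hfL hVL
        · exact_mod_cast sum_card_offDiag_squareTranslates_le hf hsub hNVL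

end SquareTranslates

section SubpolynomialGrowth

open Finset

theorem add_one_le_pow_of_two_le {x : ℝ} (hx : 2 ≤ x) (a : ℕ) : (a + 1 : ℝ) ≤ x ^ a :=
  calc (a + 1 : ℝ) ≤ 2 ^ a := by exact_mod_cast Nat.lt_two_pow_self
    _ ≤ x ^ a := by gcongr

theorem add_one_le_mul_pow_of_one_add_le {δ x : ℝ} (hδ : 0 < δ) (hx : 1 + δ ≤ x) (a : ℕ) :
    (a + 1 : ℝ) ≤ (1 + 1 / δ) * x ^ a :=
  calc (a + 1 : ℝ) ≤ (1 + 1 / δ) * (1 + a * δ) := by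
        have : (1 + 1 / δ) * (1 + a * δ) = a + 1 + (1 / δ + a * δ) := by
          field_simp
          ring
        rw [this]
        exact le_add_of_nonneg_right (by positivity)
    _ ≤ (1 + 1 / δ) * (1 + δ) ^ a := by
        gcongr
        exact one_add_mul_le_pow (by linarith) a
    _ ≤ (1 + 1 / δ) * x ^ a := by gcongr

theorem prod_ite_lt_le_pow {A : ℝ} (hA : 1 ≤ A) (s : Finset ℕ) (P : ℕ) :
    (∏ p ∈ s, if p < P then A else 1) ≤ A ^ P := by
  rw [← prod_filter, prod_const]
  refine pow_le_pow_right₀ hA ((card_le_card fun p hp => ?_).trans_eq (card_range P))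
  exact mem_range.2 (mem_filter.1 hp).2

-- Only the finitely many primes with `p ^ ε < 2` contribute a factor larger than `1`.
theorem exists_card_divisors_le_mul_rpow {ε : ℝ} (hε : 0 < ε) :
    ∃ C : ℝ, 0 < C ∧ ∀ n : ℕ, n ≠ 0 → (#n.divisors : ℝ) ≤ C * (n : ℝ) ^ ε := by
  let P : ℕ := ⌈(2 : ℝ) ^ (1 / ε)⌉₊
  let δ : ℝ := 2 ^ ε - 1
  have hδ : 0 < δ := sub_pos.2 (Real.one_lt_rpow one_lt_two hε)
  let A : ℝ := 1 + 1 / δ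
  have hA : 1 ≤ A := le_add_of_nonneg_right (by positivity)
  have local_factor_le {p : ℕ} (hp : p.Prime) (a : ℕ) :
      (a + 1 : ℝ) ≤ (if p < P then A else 1) * ((p : ℝ) ^ ε) ^ a := by
    split_ifs with hpP
    · refine add_one_le_mul_pow_of_one_add_le hδ ?_ a
      rw [add_sub_cancel]
      gcongr
      exact_mod_cast hp.two_le
    · rw [one_mul]
      refine add_one_le_pow_of_two_le ?_ a
      have hPp : (2 : ℝ) ^ (1 / ε) ≤ p := (Nat.le_ceil _).trans (by exact_mod_cast not_lt.1 hpP)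
      calc (2 : ℝ) = ((2 : ℝ) ^ (1 / ε)) ^ ε := by
            rw [← Real.rpow_mul zero_le_two, one_div_mul_cancel hε.ne', Real.rpow_one]
        _ ≤ (p : ℝ) ^ ε := by gcongr
  refine ⟨A ^ P, by positivity, fun n hn => ?_⟩
  have hn_rpow : (n : ℝ) ^ ε = ∏ p ∈ n.primeFactors, ((p : ℝ) ^ ε) ^ n.factorization p := by
    nth_rw 1 [← Nat.prod_factorization_pow_eq_self hn]
    rw [Finsupp.prod, Nat.support_factorization, Nat.cast_prod,
      ← Real.finsetProd_rpow _ _ fun p _ => by positivity]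
    refine prod_congr rfl fun p _ => ?_
    rw [Nat.cast_pow, Real.rpow_pow_comm p.cast_nonneg]
  calc (#n.divisors : ℝ) = ∏ p ∈ n.primeFactors, (n.factorization p + 1 : ℝ) := by
        rw [Nat.card_divisors hn]
        push_cast
        rfl
    _ ≤ ∏ p ∈ n.primeFactors, (if p < P then A else 1) * ((p : ℝ) ^ ε) ^ n.factorization p :=
        prod_le_prod (fun p _ => by positivity) fun p hp =>
          local_factor_le (Nat.prime_of_mem_primeFactors hp) _
    _ ≤ A ^ P * (n : ℝ) ^ ε := by
        rw [prod_mul_distrib, hn_rpow]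
        gcongr
        exact prod_ite_lt_le_pow hA _ P

theorem exists_maxCardDivisors_le_mul_rpow {ε : ℝ} (hε : 0 < ε) :
    ∃ C : ℝ, 0 < C ∧ ∀ L : ℕ, (maxCardDivisors L : ℝ) ≤ C * (L : ℝ) ^ ε := by
  obtain ⟨C, hC, hdivisors⟩ := exists_card_divisors_le_mul_rpow hε
  refine ⟨C, hC, fun L => (Nat.le_floor_iff (by positivity)).1 (Finset.sup_le fun n hn => ?_)⟩
  obtain ⟨hn, hnL⟩ := mem_Icc.1 hn
  refine Nat.le_floor ((hdivisors n (Nat.one_le_iff_ne_zero.1 hn)).trans ?_)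
  gcongr

theorem harmonic_le_mul_rpow {ε x : ℝ} (hε : 0 < ε) (hx : 1 ≤ x) {V : ℕ} (hV : V ≤ x) :
    (harmonic V : ℝ) ≤ (1 + 1 / ε) * x ^ ε := by
  have hlog : Real.log V ≤ x ^ ε / ε :=
    (Real.log_le_rpow_div V.cast_nonneg hε).trans (by gcongr)
  have hone : 1 ≤ x ^ ε := Real.one_le_rpow hx hε.le
  calc (harmonic V : ℝ) ≤ 1 + Real.log V := harmonic_le_one_add_log V
    _ ≤ x ^ ε + x ^ ε / ε := add_le_add hone hlog
    _ = (1 + 1 / ε) * x ^ ε := by ring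

end SubpolynomialGrowth

section TorsionBound

open Finset

theorem natAbs_le_of_abs_lt {z : ℤ} {n : ℕ} (h : |(z : ℝ)| < n + 1) : z.natAbs ≤ n := by
  rw [← Nat.lt_succ_iff]
  have : ((z.natAbs : ℕ) : ℝ) < (n + 1 : ℕ) := by
    rw [Nat.cast_natAbs]
    push_cast
    exact h
  exact_mod_cast this

section NumberField

variable {K : Type*} [Field K] [NumberField K] [Algebra.IsQuadraticExtension ℚ K] {e : ℤ} {g : K}

theorem clTor_le_squarePointCount_add_one {ℓ : ℕ} (hℓ : Odd ℓ) (he : Squarefree e) (he1 : e ≠ 1)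
    (hg : g ^ 2 = e) {B : ℝ} (hB0 : 0 ≤ B) (hB : √(4 * |(e : ℝ)|) < B ^ 2) {V M : ℕ}
    (hM : B ^ 2 < M + 1) (hV : 2 * B ^ ℓ < (V + 1) * √|(e : ℝ)|) :
    clTor K ℓ ≤ squarePointCount (fun m => 4 * m ^ ℓ) V M e + 1 := by
  have hns := not_isSquare_ratCast_of_squarefree he he1
  have hℓ0 : ℓ ≠ 0 := hℓ.pos.ne'
  have hpoint (c : ClassGroup (𝓞 K)) (hc : c ^ ℓ = 1) :=
    exists_isClassPoint hℓ he he1 hg hB0 hB hc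
  choose! m u v hpoint hu hm hv using hpoint
  let S : Finset (ClassGroup (𝓞 K)) := {c | c ^ ℓ = 1}
  let T : Finset (Σ _ : ℤ, ℤ) :=
    (nonzeroBall V).sigma fun v => squareTranslates (fun m => 4 * m ^ ℓ) M (e * v ^ 2)
  have hST : #(S.erase 1) ≤ #T := by
    refine card_le_card_of_injOn (fun c => ⟨v c, m c⟩) (fun c hc => ?_) fun c hc c' hc' h => ?_
    · obtain ⟨hc1, hcS⟩ := mem_erase.1 hc
      have hcℓ : c ^ ℓ = 1 := (mem_filter.1 hcS).2
      have hv0 : v c ≠ 0 := fun hv0 => by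
        have := hpoint c hcℓ
        rw [hv0] at this
        exact hc1 (this.eq_one_of_odd hns hg hℓ)
      refine mem_sigma.2 ⟨mem_nonzeroBall.2 ⟨hv0, natAbs_le_of_abs_lt ?_⟩, mem_filter.2
        ⟨mem_nonzeroBall.2 ⟨(hpoint c hcℓ).ne_zero hℓ0, natAbs_le_of_abs_lt ?_⟩, ?_⟩⟩
      · exact lt_of_mul_lt_mul_right ((hv c hcℓ).trans_lt hV) (Real.sqrt_nonneg _)
      · exact (hm c hcℓ).trans_lt hM
      · exact ⟨u c, by rw [← sq, (hpoint c hcℓ).sq_eq hns hg]⟩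
    · have hc := (mem_filter.1 (mem_of_mem_erase hc)).2
      have hc' := (mem_filter.1 (mem_of_mem_erase hc')).2
      obtain ⟨hvv, hmm⟩ : v c = v c' ∧ m c = m c' := by simpa using h
      have hpoint' := hpoint c' hc'
      rw [← hvv, ← hmm] at hpoint'
      exact (hpoint c hc).eq_of_nonneg hns hg hℓ0 hpoint' (hu c hc) (hu c' hc')
  calc clTor K ℓ = #S := by rw [clTor, Nat.card_eq_fintype_card, Fintype.card_subtype]
    _ ≤ #(S.erase 1) + 1 := Nat.sub_le_iff_le_add.1 pred_card_le_card_erase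
    _ ≤ squarePointCount (fun m => 4 * m ^ ℓ) V M e + 1 := by
        rw [squarePointCount, ← card_sigma]
        gcongr

theorem clTor_three_le_squarePointCount_add_one (he : Squarefree e) (he1 : e ≠ 1)
    (hg : g ^ 2 = e) {X : ℝ} (hX : |(e : ℝ)| ≤ X) :
    clTor K 3 ≤ squarePointCount (fun m => 4 * m ^ 3) ⌊16 * √√X⌋₊ ⌊4 * √X⌋₊ e + 1 := by
  have he0 : 0 < √|(e : ℝ)| := Real.sqrt_pos.2 (by simpa using he.ne_zero)
  have hsq : √√|(e : ℝ)| ^ 2 = √|(e : ℝ)| := Real.sq_sqrt he0.le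
  refine clTor_le_squarePointCount_add_one (B := 2 * √√|(e : ℝ)|) (by decide) he he1 hg
    (by positivity) ?_ ?_ ?_
  · rw [Real.sqrt_mul zero_le_four, show √(4 : ℝ) = 2 by norm_num, mul_pow, hsq]
    linarith
  · calc (2 * √√|(e : ℝ)|) ^ 2 = 4 * √|(e : ℝ)| := by rw [mul_pow, hsq]; norm_num
      _ ≤ 4 * √X := by gcongr
      _ < ⌊4 * √X⌋₊ + 1 := Nat.lt_floor_add_one _
  · calc 2 * (2 * √√|(e : ℝ)|) ^ 3 = 16 * √√|(e : ℝ)| * √|(e : ℝ)| := by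
          linear_combination 16 * √√|(e : ℝ)| * hsq
      _ ≤ 16 * √√X * √|(e : ℝ)| := by gcongr
      _ < (⌊16 * √√X⌋₊ + 1) * √|(e : ℝ)| := by
          gcongr
          exact Nat.lt_floor_add_one _

end NumberField

section AdjoinSquareRoot

variable {e : ℤ} {s : ℂ}

theorem numberField_adjoin_of_sq_eq (hs : s ^ 2 = e) : NumberField ℚ⟮s⟯ where
  to_finiteDimensional := by
    have : IsIntegral ℚ s := (isIntegral_of_sq_eq_intCast hs).tower_top
    convert adjoin.finiteDimensional this

theorem isQuadraticExtension_adjoin_of_sq_eq (he : ¬IsSquare (e : ℚ)) (hs : s ^ 2 = e) :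
    Algebra.IsQuadraticExtension ℚ ℚ⟮s⟯ where
  finrank_eq_two' := by
    have hirr : Irreducible (Polynomial.X ^ 2 - Polynomial.C (e : ℚ)) :=
      (X_pow_sub_C_irreducible_iff_of_prime Nat.prime_two).2 fun q hq => he ⟨q, by rw [← sq, hq]⟩
    have hminpoly : minpoly ℚ s = Polynomial.X ^ 2 - Polynomial.C (e : ℚ) :=
      (minpoly.eq_of_irreducible_of_monic hirr (by simp [hs])
        (Polynomial.monic_X_pow_sub_C _ two_ne_zero)).symm
    have := adjoin.finrank (isIntegral_of_sq_eq_intCast hs).tower_top (K := ℚ)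
    rw [hminpoly, Polynomial.natDegree_X_pow_sub_C] at this
    convert this

theorem clTor_three_adjoin_le (he : Squarefree e) (he1 : e ≠ 1) (hs : s ^ 2 = e) {X : ℝ}
    (hX : |(e : ℝ)| ≤ X) :
    clTor ℚ⟮s⟯ 3 ≤ squarePointCount (fun m => 4 * m ^ 3) ⌊16 * √√X⌋₊ ⌊4 * √X⌋₊ e + 1 := by
  have := numberField_adjoin_of_sq_eq hs
  have := isQuadraticExtension_adjoin_of_sq_eq (not_isSquare_ratCast_of_squarefree he he1) hs
  refine clTor_three_le_squarePointCount_add_one (g := AdjoinSimple.gen ℚ s) he he1 ?_ hX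
  apply Subtype.ext
  push_cast
  exact hs

end AdjoinSquareRoot

variable {d : ℕ} {X : ℝ}

theorem clTor_Qpos_three_le (hd : Squarefree d) (hd1 : d ≠ 1) (hX : d ≤ X) :
    clTor (Qpos d) 3 ≤ squarePointCount (fun m => 4 * m ^ 3) ⌊16 * √√X⌋₊ ⌊4 * √X⌋₊ d + 1 := by
  refine clTor_three_adjoin_le (Int.squarefree_natCast.2 hd) (by exact_mod_cast hd1) ?_ (by simpa)
  rw [← Complex.ofReal_pow, Real.sq_sqrt d.cast_nonneg]
  norm_cast

theorem clTor_Qneg_three_le (hd : Squarefree d) (hX : d ≤ X) :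
    clTor (Qneg d) 3 ≤ squarePointCount (fun m => 4 * m ^ 3) ⌊16 * √√X⌋₊ ⌊4 * √X⌋₊ (-d) + 1 := by
  refine clTor_three_adjoin_le (Int.squarefree_natAbs.1 (by simpa)) (by lia) ?_ (by simpa)
  rw [mul_pow, Complex.I_sq, ← Complex.ofReal_pow, Real.sq_sqrt d.cast_nonneg]
  push_cast
  ring

theorem sq_le_two_mul_sq_add_two_of_le_add_one {a b : ℕ} (h : a ≤ b + 1) :
    (a : ℝ) ^ 2 ≤ 2 * (b : ℝ) ^ 2 + 2 := by
  have : (a : ℝ) ≤ b + 1 := by exact_mod_cast h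
  calc (a : ℝ) ^ 2 ≤ (b + 1) ^ 2 := by gcongr
    _ ≤ 2 * (b : ℝ) ^ 2 + 2 := by linarith [sq_nonneg ((b : ℝ) - 1)]

theorem sum_sq_clTor_three_le (hX : 0 ≤ X) :
    (∑ d ∈ Icc 2 ⌊X⌋₊, if Squarefree d then
        ((clTor (Qpos d) 3 : ℝ) ^ 2 + (clTor (Qneg d) 3 : ℝ) ^ 2) else 0) ≤
      2 * ∑ e ∈ nonzeroBall ⌊X⌋₊,
        (squarePointCount (fun m => 4 * m ^ 3) ⌊16 * √√X⌋₊ ⌊4 * √X⌋₊ e : ℝ) ^ 2 + 4 * X := by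
  let P (e : ℤ) : ℝ := squarePointCount (fun m => 4 * m ^ 3) ⌊16 * √√X⌋₊ ⌊4 * √X⌋₊ e
  calc (∑ d ∈ Icc 2 ⌊X⌋₊, if Squarefree d then
          ((clTor (Qpos d) 3 : ℝ) ^ 2 + (clTor (Qneg d) 3 : ℝ) ^ 2) else 0)
      ≤ ∑ d ∈ Icc 2 ⌊X⌋₊, (2 * (P d ^ 2 + P (-d) ^ 2) + 4) := by
        refine sum_le_sum fun d hd => ?_
        obtain ⟨hd2, hdX⟩ := mem_Icc.1 hd
        have hdX' : (d : ℝ) ≤ X := (Nat.le_floor_iff hX).1 hdX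
        split_ifs with hsq
        · have hpos := sq_le_two_mul_sq_add_two_of_le_add_one
            (clTor_Qpos_three_le hsq (by lia) hdX')
          have hneg := sq_le_two_mul_sq_add_two_of_le_add_one (clTor_Qneg_three_le hsq hdX')
          linarith
        · positivity
    _ ≤ ∑ d ∈ Icc 1 ⌊X⌋₊, (2 * (P d ^ 2 + P (-d) ^ 2) + 4) :=
        sum_le_sum_of_subset_of_nonneg (Icc_subset_Icc_left one_le_two) fun d _ _ => by positivity
    _ = 2 * ∑ e ∈ nonzeroBall ⌊X⌋₊, P e ^ 2 + 4 * ⌊X⌋₊ := by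
        rw [sum_add_distrib, ← mul_sum, sum_nonzeroBall, sum_const, Nat.card_Icc,
          add_tsub_cancel_right, nsmul_eq_mul, mul_comm (4 : ℝ)]
    _ ≤ 2 * ∑ e ∈ nonzeroBall ⌊X⌋₊, P e ^ 2 + 4 * X := by
        gcongr
        exact Nat.floor_le hX

end TorsionBound

section SecondMoment

open Finset

theorem natAbs_four_mul_four_mul_cube_le {t : ℝ} {m : ℤ}
    (hm : m ∈ nonzeroBall ⌊4 * t ^ 2⌋₊) : (4 * (4 * m ^ 3)).natAbs ≤ ⌊1024 * t ^ 6⌋₊ := by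
  have hm' : (m.natAbs : ℝ) ≤ 4 * t ^ 2 :=
    (Nat.le_floor_iff (by positivity)).1 (mem_nonzeroBall.1 hm).2
  refine Nat.le_floor ?_
  calc ((4 * (4 * m ^ 3)).natAbs : ℝ) = 16 * (m.natAbs : ℝ) ^ 3 := by
        rw [← mul_assoc, Int.natAbs_mul, Int.natAbs_pow]
        norm_num
    _ ≤ 16 * (4 * t ^ 2) ^ 3 := by gcongr
    _ = 1024 * t ^ 6 := by ring

theorem sum_sq_squarePointCount_cube_le {t P : ℝ} (ht : 1 ≤ t) (hP : 1 ≤ P)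
    (hdivisors : maxCardDivisors ⌊1024 * t ^ 6⌋₊ ≤ P) (hharmonic : harmonic ⌊16 * t⌋₊ ≤ P) :
    ∑ e ∈ nonzeroBall ⌊t ^ 4⌋₊,
        (squarePointCount (fun m => 4 * m ^ 3) ⌊16 * t⌋₊ ⌊4 * t ^ 2⌋₊ e : ℝ) ^ 2 ≤
      13312 * P ^ 3 * t ^ 5 := by
  have hinj : Function.Injective fun m : ℤ => 4 * m ^ 3 := fun m m' h =>
    (Odd.strictMono_pow (by decide)).injective (mul_left_cancel₀ four_ne_zero h)
  have hV : (⌊16 * t⌋₊ : ℝ) ≤ 16 * t := Nat.floor_le (by positivity)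
  have hM : (⌊4 * t ^ 2⌋₊ : ℝ) ≤ 4 * t ^ 2 := Nat.floor_le (by positivity)
  have hN : (⌊t ^ 4⌋₊ : ℝ) ≤ t ^ 4 := Nat.floor_le (by positivity)
  have hV2 : ⌊16 * t⌋₊ ^ 2 ≤ ⌊1024 * t ^ 6⌋₊ := Nat.le_floor <| by
    calc ((⌊16 * t⌋₊ ^ 2 : ℕ) : ℝ) ≤ (16 * t) ^ 2 := by push_cast; gcongr
      _ = 256 * t ^ 2 := by ring
      _ ≤ 1024 * t ^ 6 := by gcongr <;> norm_num
  have hNV2 : ⌊t ^ 4⌋₊ * ⌊16 * t⌋₊ ^ 2 ≤ ⌊1024 * t ^ 6⌋₊ := Nat.le_floor <| by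
    calc ((⌊t ^ 4⌋₊ * ⌊16 * t⌋₊ ^ 2 : ℕ) : ℝ) ≤ t ^ 4 * (16 * t) ^ 2 := by push_cast; gcongr
      _ = 256 * t ^ 6 := by ring
      _ ≤ 1024 * t ^ 6 := by gcongr; norm_num
  have hharmonic0 := ratCast_harmonic_nonneg ⌊16 * t⌋₊
  have hsqrt : √(2 * ⌊t ^ 4⌋₊) ≤ 2 * t ^ 2 := Real.sqrt_le_iff.2 ⟨by positivity, by linarith⟩
  refine (sum_sq_squarePointCount_le hinj.injOn
    (fun m hm => mul_ne_zero four_ne_zero (pow_ne_zero 3 (mem_nonzeroBall.1 hm).1))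
    (fun m hm => natAbs_four_mul_four_mul_cube_le hm) hV2 hNV2).trans ?_
  calc _ ≤ 2 * (16 * t) * (4 * (4 * t ^ 2) * P * (2 * t ^ 2 * (P * P) + 16 * t) +
          8 * (4 * t ^ 2) ^ 2 * P ^ 2) := by gcongr
    _ = 1024 * P ^ 3 * t ^ 5 + 8192 * P ^ 1 * t ^ 4 + 4096 * P ^ 2 * t ^ 5 := by ring
    _ ≤ 1024 * P ^ 3 * t ^ 5 + 8192 * P ^ 3 * t ^ 5 + 4096 * P ^ 3 * t ^ 5 := by
        gcongr <;> first | assumption | norm_num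
    _ = 13312 * P ^ 3 * t ^ 5 := by ring

theorem exists_maxCardDivisors_le_and_harmonic_le {δ : ℝ} (hδ : 0 < δ) :
    ∃ C : ℝ, 1 ≤ C ∧ ∀ t : ℝ, 1 ≤ t →
      maxCardDivisors ⌊1024 * t ^ 6⌋₊ ≤ C * t ^ δ ∧ harmonic ⌊16 * t⌋₊ ≤ C * t ^ δ := by
  obtain ⟨C, hC, hdivisors⟩ := exists_maxCardDivisors_le_mul_rpow (ε := δ / 6) (by positivity)
  refine ⟨1 + C * 1024 ^ (δ / 6) + (1 + 1 / δ) * 16 ^ δ, ?_, fun t ht => ⟨?_, ?_⟩⟩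
  · have : 0 ≤ C * 1024 ^ (δ / 6) + (1 + 1 / δ) * 16 ^ δ := by positivity
    linarith
  · have ht6 : (t ^ 6) ^ (δ / 6) = t ^ δ := by
      rw [← Real.rpow_natCast, ← Real.rpow_mul (by positivity)]
      congr 1
      push_cast
      ring
    calc (maxCardDivisors ⌊1024 * t ^ 6⌋₊ : ℝ) ≤ C * (⌊1024 * t ^ 6⌋₊ : ℝ) ^ (δ / 6) := hdivisors _
      _ ≤ C * (1024 * t ^ 6) ^ (δ / 6) := by
          gcongr
          exact Nat.floor_le (by positivity)
      _ = C * 1024 ^ (δ / 6) * t ^ δ := by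
          rw [Real.mul_rpow (by norm_num) (by positivity), ht6, mul_assoc]
      _ ≤ _ := by
          gcongr
          have : 0 ≤ (1 + 1 / δ) * 16 ^ δ := by positivity
          linarith
  · calc (harmonic ⌊16 * t⌋₊ : ℝ) ≤ (1 + 1 / δ) * (16 * t) ^ δ :=
          harmonic_le_mul_rpow hδ (by linarith) (Nat.floor_le (by positivity))
      _ = (1 + 1 / δ) * 16 ^ δ * t ^ δ := by
          rw [Real.mul_rpow (by norm_num) (by positivity), mul_assoc]
      _ ≤ _ := by
          gcongr
          have : 0 ≤ C * 1024 ^ (δ / 6) := by positivity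
          linarith

theorem exists_sum_sq_squarePointCount_cube_le {ε : ℝ} (hε : 0 < ε) :
    ∃ C : ℝ, ∀ X : ℝ, 1 ≤ X →
      ∑ e ∈ nonzeroBall ⌊X⌋₊,
          (squarePointCount (fun m => 4 * m ^ 3) ⌊16 * √√X⌋₊ ⌊4 * √X⌋₊ e : ℝ) ^ 2 ≤
        C * X ^ (5 / 4 + ε) := by
  let δ : ℝ := 4 * ε / 3
  obtain ⟨C, hC, hbound⟩ := exists_maxCardDivisors_le_and_harmonic_le (δ := δ) (by positivity)
  refine ⟨13312 * C ^ 3, fun X hX => ?_⟩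
  obtain ⟨t, ht, rfl⟩ : ∃ t : ℝ, 1 ≤ t ∧ t ^ 4 = X :=
    ⟨√√X, by simpa using hX, by rw [show 4 = 2 * 2 from rfl, pow_mul, Real.sq_sqrt (by positivity),
      Real.sq_sqrt (by positivity)]⟩
  have hsqrt : √(t ^ 4) = t ^ 2 := by
    rw [show t ^ 4 = (t ^ 2) ^ 2 by ring, Real.sqrt_sq (by positivity)]
  have hP : 1 ≤ C * t ^ δ := one_le_mul_of_one_le_of_one_le hC (Real.one_le_rpow ht (by positivity))
  rw [hsqrt, Real.sqrt_sq (by positivity)]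
  refine (sum_sq_squarePointCount_cube_le ht hP (hbound t ht).1 (hbound t ht).2).trans_eq ?_
  have hexp : (t ^ 4) ^ (5 / 4 + ε) = (t ^ δ) ^ 3 * t ^ 5 := by
    rw [← Real.rpow_mul_natCast (by positivity), ← Real.rpow_natCast t 5,
      ← Real.rpow_add (by positivity), ← Real.rpow_natCast t 4, ← Real.rpow_mul (by positivity)]
    congr 1
    push_cast
    ring
  rw [hexp]
  ring

end SecondMoment

theorem second_moment_three_torsion_quadratic_general {ε : ℝ} (hε : 0 < ε) :
    ∃ C : ℝ, ∀ X : ℝ, 1 ≤ X →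
      (∑ d ∈ Finset.Icc 2 ⌊X⌋₊, if Squarefree d then
          ((clTor (Qpos d) 3 : ℝ) ^ 2 + (clTor (Qneg d) 3 : ℝ) ^ 2) else 0)
        ≤ C * X ^ ((5 : ℝ) / 4 + ε) := by
  obtain ⟨C, hC⟩ := exists_sum_sq_squarePointCount_cube_le hε
  refine ⟨2 * C + 4, fun X hX => ?_⟩
  have hXpow : X ≤ X ^ ((5 : ℝ) / 4 + ε) := Real.self_le_rpow_of_one_le hX (by linarith)
  linarith [sum_sq_clTor_three_le (zero_le_one.trans hX), hC X hX]

/-- **Heath-Brown–Pierce.** There is a constant `C` such that for every real `X ≥ 2`, the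
sum over squarefree `1 < d ≤ X` of `|Cl_{ℚ(√d)}[3]|² + |Cl_{ℚ(√-d)}[3]|²` is at most
`C · X^{23/18}`. -/
theorem second_moment_three_torsion_quadratic :
    ∃ C : ℝ, ∀ X : ℝ, 2 ≤ X →
      (∑ d ∈ Finset.Icc 2 ⌊X⌋₊, if Squarefree d then
          ((clTor (Qpos d) 3 : ℝ) ^ 2 + (clTor (Qneg d) 3 : ℝ) ^ 2) else 0)
        ≤ C * X ^ ((23 : ℝ) / 18) := by
  obtain ⟨C, hC⟩ := second_moment_three_torsion_quadratic_general (ε := 1 / 36) (by norm_num)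
  exact ⟨C, fun X hX => (hC X (one_le_two.trans hX)).trans_eq (by norm_num)⟩
end

section
/- (Lemke Oliver–Thorne) For each degree n ≥ 6 there exists a constant a_n such that for all real X ≥ 1, the number N_n(X) of degree-n subfields K ⊂ ℂ with D_K ≤ X satisfies N_n(X) ≤ a_n · X^{1.564·(log n)²}. -/
open NumberField
open scoped Classical

/-- The absolute value of the discriminant of a finite extension of `ℚ` realized as a
subfield of `ℂ` (junk value `0` if the extension is infinite). -/
noncomputable def absDiscC (K : IntermediateField ℚ ℂ) : ℕ :=
  if h : FiniteDimensional ℚ K then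
    haveI := h
    haveI : NumberField K := ⟨⟩
    (NumberField.discr K).natAbs
  else 0

/-!
Following Lemke Oliver and Thorne, a field `K` of degree `n` and discriminant `D` is recovered from
traces of products of few small integers. Lattice reduction gives an integral basis all of whose
conjugates are `O(D ^ (1 / n))`, so a generic `r`-tuple `α` of integers with conjugates of this size
exists, and each trace `Tr (∏ j, α j ^ a j)` is an integer of size `O(D ^ (|a| / n))`. Viewed as
polynomials in the `r * n` conjugates of `α`, the traces are multisymmetric power sums; `r * n` of
them whose Jacobian determinant is not identically zero determine a generic `α`, hence `K`, up to
boundedly many choices. Such power sums exist with small total degree because the gradients of the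
polynomials of degree at most `e` at `n` generic points span a space of dimension at least
`min (r * n) ((e + r - 1).choose r)`. Counting integer vectors in the resulting box and choosing `r`
of order `log n` gives the exponent.
-/

section QuadraticFormReduction

open Matrix

variable {ι κ : Type*} [Fintype ι]

/-- The Gram matrix `U M Uᵀ` of the rows of the integral matrix `U` for the real quadratic form
with matrix `M`. -/
def intCongr (U : Matrix κ ι ℤ) (M : Matrix ι ι ℝ) : Matrix κ κ ℝ :=
  U.map (Int.cast : ℤ → ℝ) * M * (U.map (Int.cast : ℤ → ℝ))ᵀ

lemma intCongr_apply_self (U : Matrix κ ι ℤ) (M : Matrix ι ι ℝ) (i : κ) :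
    intCongr U M i i = (fun j ↦ (U i j : ℝ)) ᵥ* M ⬝ᵥ fun j ↦ (U i j : ℝ) := rfl

lemma intCongr_mul [Fintype κ] (U : Matrix κ κ ℤ) (V : Matrix κ ι ℤ) (M : Matrix ι ι ℝ) :
    intCongr (U * V) M = intCongr U (intCongr V M) := by
  have hmap : (U * V).map (Int.cast : ℤ → ℝ) =
      U.map (Int.cast : ℤ → ℝ) * V.map (Int.cast : ℤ → ℝ) :=
    Matrix.map_mul (f := Int.castRingHom ℝ)
  simp only [intCongr, hmap, transpose_mul, Matrix.mul_assoc]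

lemma exists_pos_le_dotProduct_intCast {M : Matrix ι ι ℝ} (hM : M.PosDef) :
    ∃ c : ℝ, 0 < c ∧ ∀ x : ι → ℤ, x ≠ 0 →
      c ≤ (fun i ↦ (x i : ℝ)) ᵥ* M ⬝ᵥ fun i ↦ (x i : ℝ) := by
  rcases isEmpty_or_nonempty ι with _ | _
  · exact ⟨1, one_pos, fun x hx ↦ (hx (Subsingleton.elim _ _)).elim⟩
  have hcont : Continuous fun x : ι → ℝ ↦ x ᵥ* M ⬝ᵥ x := by
    unfold dotProduct vecMul dotProduct; fun_prop
  obtain ⟨z, hz, hmin⟩ := (isCompact_sphere (0 : ι → ℝ) 1).exists_isMinOn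
    ⟨fun _ ↦ 1, by simp⟩ hcont.continuousOn
  have hpos : 0 < z ᵥ* M ⬝ᵥ z := by
    have hz0 : z ≠ 0 := by rintro rfl; simp at hz
    simpa [dotProduct_mulVec] using hM.dotProduct_mulVec_pos hz0
  refine ⟨_, hpos, fun x hx ↦ ?_⟩
  set y : ι → ℝ := fun i ↦ (x i : ℝ)
  have hy : 1 ≤ ‖y‖ := by
    obtain ⟨i, hi⟩ := Function.ne_iff.1 hx
    refine le_trans ?_ (norm_le_pi_norm y i)
    simpa [y] using (mod_cast Int.one_le_abs hi : (1 : ℝ) ≤ |(x i : ℝ)|)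
  have hy0 : ‖y‖ ≠ 0 := by positivity
  have hscaled : z ᵥ* M ⬝ᵥ z ≤ ‖y‖⁻¹ ^ 2 * (y ᵥ* M ⬝ᵥ y) := by
    have := hmin (a := ‖y‖⁻¹ • y) (by simp [norm_smul, hy0])
    simpa [smul_vecMul, sq, mul_assoc] using this
  calc z ᵥ* M ⬝ᵥ z ≤ ‖y‖ ^ 2 * (z ᵥ* M ⬝ᵥ z) :=
        le_mul_of_one_le_left hpos.le (one_le_pow₀ hy)
    _ ≤ ‖y‖ ^ 2 * (‖y‖⁻¹ ^ 2 * (y ᵥ* M ⬝ᵥ y)) := by gcongr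
    _ = y ᵥ* M ⬝ᵥ y := by field_simp

lemma fromBlocks_toBlocks_of_isHermitian {μ ν : Type*} {M : Matrix (μ ⊕ ν) (μ ⊕ ν) ℝ}
    (hM : M.IsHermitian) :
    fromBlocks M.toBlocks₁₁ M.toBlocks₁₂ M.toBlocks₁₂ᴴ M.toBlocks₂₂ = M := by
  have h21 : M.toBlocks₁₂ᴴ = M.toBlocks₂₁ := by
    ext i j; exact hM.apply (Sum.inr i) (Sum.inl j)
  rw [h21, fromBlocks_toBlocks]

/-- The Schur complement `D - Bᴴ A⁻¹ B` of the upper left block of a symmetric block matrix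
`fromBlocks A B Bᴴ D`. -/
noncomputable def schurCompl [Fintype κ] [DecidableEq κ] (M : Matrix (κ ⊕ ι) (κ ⊕ ι) ℝ) :
    Matrix ι ι ℝ :=
  M.toBlocks₂₂ - M.toBlocks₁₂ᴴ * M.toBlocks₁₁⁻¹ * M.toBlocks₁₂

lemma exists_intCongr_fromBlocks_le {M : Matrix (Unit ⊕ ι) (Unit ⊕ ι) ℝ} (hM : M.PosDef)
    (V : Matrix ι ι ℤ) :
    ∃ K : Matrix ι Unit ℤ, ∀ j,
      intCongr (fromBlocks (1 : Matrix Unit Unit ℤ) 0 K V) M (Sum.inr j) (Sum.inr j) ≤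
        M (Sum.inl ()) (Sum.inl ()) / 4 + intCongr V (schurCompl M) j j := by
  have hA : M.toBlocks₁₁.PosDef := hM.submatrix Sum.inl_injective
  have := hA.isUnit.invertible
  let shift (j : ι) : ℝ :=
    ((M.toBlocks₁₁⁻¹ * M.toBlocks₁₂) *ᵥ fun i ↦ (V j i : ℝ)) ()
  refine ⟨of fun j _ ↦ -round (shift j), fun j ↦ ?_⟩
  have hsplit : (fun i ↦ ((fromBlocks 1 0 (of fun j _ ↦ -round (shift j)) V :
      Matrix (Unit ⊕ ι) (Unit ⊕ ι) ℤ) (Sum.inr j) i : ℝ)) =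
      Sum.elim (fun _ ↦ (-round (shift j) : ℝ)) fun i ↦ (V j i : ℝ) := by
    ext (i | i) <;> simp
  have hsq : (shift j - round (shift j)) ^ 2 ≤ 1 / 4 := by
    have := abs_le.1 (abs_sub_round (shift j))
    nlinarith
  have hschur := schur_complement_eq₁₁ M.toBlocks₁₂ M.toBlocks₂₂
    (fun _ ↦ (-round (shift j) : ℝ)) (fun i ↦ (V j i : ℝ)) hA.isHermitian
  rw [fromBlocks_toBlocks_of_isHermitian hM.isHermitian] at hschur
  simp only [star_trivial] at hschur
  rw [intCongr_apply_self, intCongr_apply_self, hsplit, hschur, ← schurCompl]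
  gcongr
  have ha : 0 ≤ M (Sum.inl ()) (Sum.inl ()) := hM.diag_pos.le
  calc _ = M (Sum.inl ()) (Sum.inl ()) * (shift j - round (shift j)) ^ 2 := by
        simp [vecMul, dotProduct, toBlocks₁₁, shift]; ring
    _ ≤ _ := by nlinarith

variable [DecidableEq ι]

lemma isUnit_map_intCast {U : Matrix ι ι ℤ} (hU : IsUnit U) :
    IsUnit (U.map (Int.cast : ℤ → ℝ)) :=
  hU.map (Int.castRingHom ℝ).mapMatrix

lemma det_intCongr {U : Matrix ι ι ℤ} (hU : IsUnit U) (M : Matrix ι ι ℝ) :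
    (intCongr U M).det = M.det := by
  have hcast : (U.map (Int.cast : ℤ → ℝ)).det = U.det := ((Int.castRingHom ℝ).map_det U).symm
  have hsq : (U.det : ℝ) * U.det = 1 := by
    rcases Int.isUnit_iff.1 ((isUnit_iff_isUnit_det U).1 hU) with h | h <;> simp [h]
  rw [intCongr, det_mul, det_mul, det_transpose, hcast]
  linear_combination M.det * hsq

lemma posDef_intCongr {U : Matrix ι ι ℤ} (hU : IsUnit U) {M : Matrix ι ι ℝ} (hM : M.PosDef) :
    (intCongr U M).PosDef := by
  rw [intCongr, ← conjTranspose_eq_transpose_of_trivial]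
  exact hM.mul_mul_conjTranspose_same (vecMul_injective_of_isUnit (isUnit_map_intCast hU))

lemma row_ne_zero_of_isUnit {U : Matrix ι ι ℤ} (hU : IsUnit U) (i : ι) : U i ≠ 0 := fun h ↦
  ((isUnit_iff_isUnit_det U).1 hU).ne_zero (det_eq_zero_of_row_eq_zero i (congrFun h))

lemma exists_isUnit_diag_le_two_mul {M : Matrix ι ι ℝ} (hM : M.PosDef) (i₀ : ι) :
    ∃ U : Matrix ι ι ℤ, IsUnit U ∧
      ∀ V : Matrix ι ι ℤ, IsUnit V → ∀ i, intCongr U M i₀ i₀ ≤ 2 * intCongr V M i i := by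
  let values : Set ℝ := {q | ∃ V : Matrix ι ι ℤ, IsUnit V ∧ ∃ i, intCongr V M i i = q}
  obtain ⟨c, hc, hlow⟩ := exists_pos_le_dotProduct_intCast hM
  have hne : values.Nonempty := ⟨_, 1, isUnit_one, i₀, rfl⟩
  have hbelow : c ∈ lowerBounds values := by
    rintro _ ⟨V, hV, i, rfl⟩
    exact hlow _ (row_ne_zero_of_isUnit hV i)
  have hinf : 0 < sInf values := hc.trans_le (le_csInf hne hbelow)
  obtain ⟨_, ⟨W, hW, i, rfl⟩, hlt⟩ :=
    exists_lt_of_csInf_lt hne (show sInf values < 2 * sInf values by linarith)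
  have hunit : IsUnit (W.submatrix (Equiv.swap i i₀) id) := by
    rw [isUnit_iff_isUnit_det, det_permute]
    exact (Units.isUnit _).mul ((isUnit_iff_isUnit_det W).1 hW)
  refine ⟨_, hunit, fun V hV k ↦ ?_⟩
  have hswap : intCongr (W.submatrix (Equiv.swap i i₀) id) M i₀ i₀ = intCongr W M i i := by
    simp [intCongr_apply_self]
  have hinf_le : sInf values ≤ intCongr V M k k := csInf_le ⟨c, hbelow⟩ ⟨V, hV, k, rfl⟩
  rw [hswap]
  linarith

lemma det_eq_det_mul_det_schurCompl [Fintype κ] [DecidableEq κ]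
    {M : Matrix (κ ⊕ ι) (κ ⊕ ι) ℝ} (hM : M.PosDef) :
    M.det = M.toBlocks₁₁.det * (schurCompl M).det := by
  have hA : M.toBlocks₁₁.PosDef := hM.submatrix Sum.inl_injective
  have := hA.isUnit.invertible
  conv_lhs => rw [← fromBlocks_toBlocks_of_isHermitian hM.isHermitian]
  rw [det_fromBlocks₁₁, invOf_eq_nonsing_inv, schurCompl]

lemma posDef_schurCompl [Fintype κ] [DecidableEq κ]
    {M : Matrix (κ ⊕ ι) (κ ⊕ ι) ℝ} (hM : M.PosDef) : (schurCompl M).PosDef := by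
  have hA : M.toBlocks₁₁.PosDef := hM.submatrix Sum.inl_injective
  have := hA.isUnit.invertible
  have hpsd : (schurCompl M).PosSemidef := by
    rw [schurCompl, ← PosDef.fromBlocks₁₁ _ _ hA,
      fromBlocks_toBlocks_of_isHermitian hM.isHermitian]
    exact hM.posSemidef
  rw [hpsd.posDef_iff_isUnit, isUnit_iff_isUnit_det, isUnit_iff_ne_zero]
  exact right_ne_zero_of_mul (det_eq_det_mul_det_schurCompl hM ▸ hM.det_pos.ne')

/-- Every positive definite form on `ℤ^ι` has a basis the product of whose values is at most `C`
times the determinant of the form. -/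
def IsReductionBound (ι : Type*) [Fintype ι] [DecidableEq ι] (C : ℝ) : Prop :=
  ∀ M : Matrix ι ι ℝ, M.PosDef → ∃ U : Matrix ι ι ℤ, IsUnit U ∧ ∏ i, intCongr U M i i ≤ C * M.det

lemma IsReductionBound.of_equiv [Fintype κ] [DecidableEq κ] (e : ι ≃ κ) {C : ℝ}
    (hC : IsReductionBound ι C) : IsReductionBound κ C := fun M hM ↦ by
  obtain ⟨U, hU, hprod⟩ := hC (M.submatrix e e) (hM.submatrix e.injective)
  rw [det_submatrix_equiv_self] at hprod
  refine ⟨U.submatrix e.symm e.symm, (isUnit_submatrix_equiv _ _).2 hU, ?_⟩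
  convert hprod using 1
  rw [← e.prod_comp]
  refine Finset.prod_congr rfl fun i _ ↦ ?_
  simp [intCongr, mul_apply, ← e.sum_comp]

-- A shortest first vector, followed by a lift of a reduced basis of its Schur complement; rounding
-- adds at most a quarter of the first value, which is at most half of any other value.
lemma IsReductionBound.unit_sum {C : ℝ} (hC : IsReductionBound ι C) :
    IsReductionBound (Unit ⊕ ι) (2 ^ Fintype.card ι * C) := fun M hM ↦ by
  obtain ⟨U, hU, hmin⟩ := exists_isUnit_diag_le_two_mul hM (Sum.inl ())
  set N := intCongr U M
  have hN : N.PosDef := posDef_intCongr hU hM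
  set a := N (Sum.inl ()) (Sum.inl ())
  obtain ⟨V, hV, hprod⟩ := hC (schurCompl N) (posDef_schurCompl hN)
  obtain ⟨K, hK⟩ := exists_intCongr_fromBlocks_le hN V
  set W := fromBlocks (1 : Matrix Unit Unit ℤ) 0 K V
  have hW : IsUnit W := isUnit_fromBlocks_zero₁₂.2 ⟨isUnit_one, hV⟩
  have hWN : intCongr (W * U) M = intCongr W N := intCongr_mul W U M
  have hdiag : ∀ i, 0 < intCongr W N i i := fun i ↦ (posDef_intCongr hW hN).diag_pos
  have hfirst : intCongr W N (Sum.inl ()) (Sum.inl ()) = a := by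
    simp [W, intCongr_apply_self, vecMul, dotProduct, a]
  have hrest : ∀ j, intCongr W N (Sum.inr j) (Sum.inr j) ≤ 2 * intCongr V (schurCompl N) j j := by
    intro j
    have := hmin (W * U) (hW.mul hU) (Sum.inr j)
    rw [hWN] at this
    linarith [hK j]
  refine ⟨W * U, hW.mul hU, ?_⟩
  have ha : 0 < a := hN.diag_pos
  calc ∏ i, intCongr (W * U) M i i
      = a * ∏ j, intCongr W N (Sum.inr j) (Sum.inr j) := by
        rw [hWN, Fintype.prod_sum_type, Fintype.prod_unique, ← hfirst]
    _ ≤ a * ∏ j, 2 * intCongr V (schurCompl N) j j := by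
        gcongr with j
        · exact fun j _ ↦ (hdiag _).le
        · exact hrest j
    _ ≤ a * (2 ^ Fintype.card ι * (C * (schurCompl N).det)) := by
        rw [Finset.prod_mul_distrib, Finset.prod_const, Finset.card_univ]
        gcongr
    _ = 2 ^ Fintype.card ι * C * M.det := by
        have hdet : M.det = a * (schurCompl N).det := by
          rw [← det_intCongr hU M, det_eq_det_mul_det_schurCompl hN, det_unique N.toBlocks₁₁]
          rfl
        rw [hdet]
        ring

theorem exists_isReductionBound (ι : Type*) [Fintype ι] [DecidableEq ι] :
    ∃ C, IsReductionBound ι C := by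
  suffices h : ∀ n, ∃ C, IsReductionBound (Fin n) C by
    obtain ⟨C, hC⟩ := h (Fintype.card ι)
    exact ⟨C, hC.of_equiv (Fintype.equivFin ι).symm⟩
  intro n
  induction n with
  | zero => exact ⟨1, fun M _ ↦ ⟨1, isUnit_one, by simp⟩⟩
  | succ n ih =>
    obtain ⟨C, hC⟩ := ih
    exact ⟨_, hC.unit_sum.of_equiv <| (Equiv.sumComm Unit (Fin n)).trans <|
      (Equiv.sumCongr (Equiv.refl _) (Equiv.ofUnique Unit (Fin 1))).trans finSumFinEquiv⟩

lemma abs_det_le_of_abs_apply_le {B : Matrix ι ι ℝ} {c d : ι → ℝ}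
    (hB : ∀ i j, |B i j| ≤ c i * d j) :
    |B.det| ≤ (Fintype.card ι).factorial * ((∏ i, c i) * ∏ i, d i) := by
  have hperm (σ : Equiv.Perm ι) : |(Equiv.Perm.sign σ : ℤ) * ∏ i, B (σ i) i| ≤
      (∏ i, c i) * ∏ i, d i := by
    rw [abs_mul, Finset.abs_prod, ← Equiv.prod_comp σ c, ← Finset.prod_mul_distrib]
    have hsign : |((Equiv.Perm.sign σ : ℤ) : ℝ)| = 1 := by
      rcases Int.units_eq_one_or (Equiv.Perm.sign σ) with h | h <;> simp [h]
    rw [hsign, one_mul]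
    exact Finset.prod_le_prod (fun _ _ ↦ abs_nonneg _) fun i _ ↦ hB _ _
  rw [det_apply']
  refine (Finset.abs_sum_le_sum_abs _ _).trans ?_
  refine (Finset.sum_le_card_nsmul _ _ _ fun σ _ ↦ hperm σ).trans_eq ?_
  rw [Finset.card_univ, Fintype.card_perm, nsmul_eq_mul]

lemma sq_apply_le_diag_mul_diag {ν : Type*} {M : Matrix ν ν ℝ} (hM : M.PosSemidef) (i j : ν) :
    M i j ^ 2 ≤ M i i * M j j := by
  have hdet := (hM.submatrix ![i, j]).det_nonneg
  have hsymm : M j i = M i j := hM.isHermitian.apply i j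
  rw [det_fin_two] at hdet
  simp only [submatrix_apply, cons_val_zero, cons_val_one, hsymm] at hdet
  linarith

-- Cramer's rule for the inverse, with the Leibniz formula bounding the cofactor.
lemma diag_mul_inv_diag_mul_det_le {M : Matrix ι ι ℝ} (hM : M.PosDef) (k : ι) :
    M k k * M⁻¹ k k * M.det ≤ (Fintype.card ι).factorial * ∏ i, M i i := by
  have hdiag : ∀ i, 0 < M i i := fun i ↦ hM.diag_pos
  have hsqrt : ∀ i, √(M i i) * √(M i i) = M i i := fun i ↦ Real.mul_self_sqrt (hdiag i).le
  have hentry : ∀ i j, |M i j| ≤ √(M i i) * √(M j j) := fun i j ↦ by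
    rw [← Real.sqrt_mul (hdiag i).le]
    exact Real.abs_le_sqrt (sq_apply_le_diag_mul_diag hM.posSemidef i j)
  have hcofactor := abs_det_le_of_abs_apply_le (B := M.updateRow k (Pi.single k 1))
    (c := fun i ↦ √(M i i) * if i = k then (M k k)⁻¹ else 1) (d := fun i ↦ √(M i i)) fun i j ↦ by
      rcases eq_or_ne i k with rfl | hik
      · rcases eq_or_ne j i with rfl | hji
        · simp [mul_right_comm _ (M j j)⁻¹, hsqrt, (hdiag j).ne']
        · have := hdiag i
          simp only [updateRow_self, Pi.single_eq_of_ne hji, abs_zero]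
          positivity
      · simpa [hik] using hentry i j
  have hinv : M⁻¹ k k * M.det = (M.updateRow k (Pi.single k 1)).det := by
    rw [inv_def, Matrix.smul_apply, adjugate_apply, Ring.inverse_eq_inv', smul_eq_mul]
    field_simp [hM.det_pos.ne']
  calc M k k * M⁻¹ k k * M.det = M k k * (M.updateRow k (Pi.single k 1)).det := by
        rw [mul_assoc, hinv]
    _ ≤ M k k * ((Fintype.card ι).factorial *
          ((∏ i, √(M i i) * if i = k then (M k k)⁻¹ else 1) * ∏ i, √(M i i))) :=
        mul_le_mul_of_nonneg_left ((le_abs_self _).trans hcofactor) (hdiag k).le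
    _ = (Fintype.card ι).factorial * ∏ i, M i i := by
        have hprod : ∏ i, M i i = (∏ i, √(M i i)) * ∏ i, √(M i i) := by
          rw [← Finset.prod_mul_distrib, Finset.prod_congr rfl fun i _ ↦ hsqrt i]
        rw [Finset.prod_mul_distrib, Finset.prod_ite_eq', if_pos (Finset.mem_univ k), hprod]
        field_simp [(hdiag k).ne']

theorem exists_intCongr_diag_mul_inv_diag_le (ι : Type*) [Fintype ι] [DecidableEq ι] :
    ∃ C : ℝ, ∀ M : Matrix ι ι ℝ, M.PosDef → ∃ U : Matrix ι ι ℤ, IsUnit U ∧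
      ∀ k, intCongr U M k k * (intCongr U M)⁻¹ k k ≤ C := by
  obtain ⟨C, hC⟩ := exists_isReductionBound ι
  refine ⟨(Fintype.card ι).factorial * C, fun M hM ↦ ?_⟩
  obtain ⟨U, hU, hprod⟩ := hC M hM
  refine ⟨U, hU, fun k ↦ le_of_mul_le_mul_right ?_ hM.det_pos⟩
  rw [← det_intCongr hU M]
  refine (diag_mul_inv_diag_mul_det_le (posDef_intCongr hU hM) k).trans ?_
  rw [mul_assoc, det_intCongr hU]
  gcongr

end QuadraticFormReduction

section ShortIntegralBasis

open Matrix ComplexConjugate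

variable {K : Type*} [Field K] [NumberField K]

lemma one_le_abs_norm_mul_discr {x : K} (hx0 : x ≠ 0)
    (hx : ∀ a : 𝓞 K, ∃ m : ℤ, Algebra.trace ℚ K (x * a) = m) :
    1 ≤ |(Algebra.norm ℚ x : ℝ)| * |(discr K : ℝ)| := by
  have hone_ne : (1 : FractionalIdeal (nonZeroDivisors (𝓞 K)) K) ≠ 0 := one_ne_zero
  set codifferent := FractionalIdeal.dual ℤ ℚ (1 : FractionalIdeal (nonZeroDivisors (𝓞 K)) K)
    with hcodifferent
  have hx_mem : x ∈ codifferent := by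
    rw [hcodifferent, FractionalIdeal.mem_dual hone_ne]
    intro a ha
    obtain ⟨a, rfl⟩ := (FractionalIdeal.mem_one_iff _).1 ha
    obtain ⟨m, hm⟩ := hx a
    exact ⟨m, hm.symm⟩
  have hle : FractionalIdeal.spanSingleton (nonZeroDivisors (𝓞 K)) x *
      (differentIdeal ℤ (𝓞 K) : FractionalIdeal (nonZeroDivisors (𝓞 K)) K) ≤ 1 := by
    rw [coeIdeal_differentIdeal ℤ ℚ]
    calc _ ≤ codifferent * codifferent⁻¹ := by
          gcongr; exact FractionalIdeal.spanSingleton_le_iff_mem.2 hx_mem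
      _ = 1 := mul_inv_cancel₀ (FractionalIdeal.dual_ne_zero _ _ hone_ne)
  obtain ⟨I, hI⟩ := FractionalIdeal.le_one_iff_exists_coeIdeal.1 hle
  have hnorm : |Algebra.norm ℚ x| * (discr K).natAbs = I.absNorm := by
    rw [← FractionalIdeal.coeIdeal_absNorm (K := K), hI, map_mul,
      FractionalIdeal.absNorm_span_singleton, FractionalIdeal.coeIdeal_absNorm,
      absNorm_differentIdeal K (𝒪 := 𝓞 K)]
  have hpos : (0 : ℚ) < |Algebra.norm ℚ x| * (discr K).natAbs := by
    have := abs_pos.2 (Algebra.norm_ne_zero_iff.2 hx0 : Algebra.norm ℚ x ≠ 0)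
    have := Int.natAbs_pos.2 (discr_ne_zero K)
    positivity
  have hone : (1 : ℚ) ≤ |Algebra.norm ℚ x| * |(discr K : ℚ)| := by
    rw [← Int.cast_abs, Int.abs_eq_natAbs, Int.cast_natCast]
    rw [hnorm] at hpos ⊢
    exact_mod_cast hpos
  exact_mod_cast hone

lemma exists_discr_rpow_le_norm {x : K} (hx0 : x ≠ 0)
    (hx : ∀ a : 𝓞 K, ∃ m : ℤ, Algebra.trace ℚ K (x * a) = m) :
    ∃ φ : K →ₐ[ℚ] ℂ, |(discr K : ℝ)| ^ (-(1 / Module.finrank ℚ K : ℝ)) ≤ ‖φ x‖ := by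
  by_contra! hlt
  have : Nonempty (K →ₐ[ℚ] ℂ) := ⟨IsAlgClosed.lift⟩
  have hdiscr : 0 < |(discr K : ℝ)| := by simpa using discr_ne_zero K
  have hdeg : (Module.finrank ℚ K : ℝ) ≠ 0 := by
    exact_mod_cast (Module.finrank_pos (R := ℚ) (M := K)).ne'
  have hprod : |(Algebra.norm ℚ x : ℝ)| = ∏ φ : K →ₐ[ℚ] ℂ, ‖φ x‖ := by
    have h := congrArg (‖·‖) (Algebra.norm_eq_prod_embeddings ℚ ℂ x)
    simpa [norm_prod] using h
  have hlt' : |(Algebra.norm ℚ x : ℝ)| < |(discr K : ℝ)|⁻¹ := by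
    calc |(Algebra.norm ℚ x : ℝ)|
        < ∏ _φ : K →ₐ[ℚ] ℂ, |(discr K : ℝ)| ^ (-(1 / Module.finrank ℚ K : ℝ)) := by
          rw [hprod]
          exact Finset.prod_lt_prod_of_nonempty (fun φ _ ↦ norm_pos_iff.2 ((map_ne_zero φ).2 hx0))
            (fun φ _ ↦ hlt φ) Finset.univ_nonempty
      _ = |(discr K : ℝ)|⁻¹ := by
          rw [Finset.prod_const, Finset.card_univ, AlgHom.card, ← Real.rpow_natCast,
            ← Real.rpow_mul hdiscr.le, neg_mul, one_div_mul_cancel hdeg, Real.rpow_neg_one]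
  have := one_le_abs_norm_mul_discr hx0 hx
  rw [← div_le_iff₀ hdiscr, one_div] at this
  linarith

variable {ι : Type*}

/-- The matrix of all conjugates of a family of elements of a number field. -/
noncomputable def conjugateMatrix (b : ι → K) : Matrix ι (K →ₐ[ℚ] ℂ) ℂ := of fun i φ ↦ φ (b i)

/-- The real Gram matrix of the positive definite form `∑ φ, φ x * conj (φ y)`, the sum being over
all complex embeddings `φ`. -/
noncomputable def embeddingGram (b : ι → K) : Matrix ι ι ℝ :=
  of fun i j ↦ (∑ φ : K →ₐ[ℚ] ℂ, φ (b i) * conj (φ (b j))).re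

lemma sum_embeddings_mul_conj_comm (x y : K) :
    ∑ φ : K →ₐ[ℚ] ℂ, φ x * conj (φ y) = ∑ φ : K →ₐ[ℚ] ℂ, φ y * conj (φ x) := by
  let conjEquiv : (K →ₐ[ℚ] ℂ) ≃ (K →ₐ[ℚ] ℂ) :=
    AlgEquiv.refl.arrowCongr (Complex.conjAe.restrictScalars ℚ)
  rw [← conjEquiv.sum_comp]
  refine Finset.sum_congr rfl fun φ _ ↦ ?_
  simp [conjEquiv, AlgEquiv.arrowCongr, mul_comm]

lemma embeddingGram_map_ofReal (b : ι → K) :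
    (embeddingGram b).map Complex.ofReal = conjugateMatrix b * (conjugateMatrix b)ᴴ := by
  ext i j
  simp only [embeddingGram, conjugateMatrix, map_apply, of_apply, mul_apply, conjTranspose_apply]
  refine Complex.conj_eq_iff_re.1 ?_
  simp only [map_sum, map_mul, Complex.conj_conj]
  simpa only [mul_comm] using sum_embeddings_mul_conj_comm (b j) (b i)

lemma embeddingGram_map_ofReal' (b : ι → K) :
    (embeddingGram b).map Complex.ofReal =
      ((conjugateMatrix b)ᵀ)ᴴ * (conjugateMatrix b)ᵀ := by
  ext i j
  simp only [embeddingGram_map_ofReal, conjugateMatrix, mul_apply, of_apply, conjTranspose_apply,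
    transpose_apply, Complex.star_def]
  simpa only [mul_comm] using sum_embeddings_mul_conj_comm (b i) (b j)

lemma embeddingGram_apply_self (b : ι → K) (i : ι) :
    embeddingGram b i i = ∑ φ : K →ₐ[ℚ] ℂ, ‖φ (b i)‖ ^ 2 := by
  simp only [embeddingGram, of_apply, Complex.re_sum, Complex.mul_conj, Complex.ofReal_re,
    Complex.normSq_eq_norm_sq]

/-- The real and imaginary parts of all conjugates of a family of elements of a number field. -/
noncomputable def realConjugateMatrix (b : ι → K) : Matrix ι ((K →ₐ[ℚ] ℂ) ⊕ (K →ₐ[ℚ] ℂ)) ℝ :=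
  fromCols (of fun i φ ↦ (φ (b i)).re) (of fun i φ ↦ (φ (b i)).im)

lemma embeddingGram_eq_realConjugateMatrix_mul_transpose (b : ι → K) :
    embeddingGram b = realConjugateMatrix b * (realConjugateMatrix b)ᵀ := by
  ext i j
  simp [embeddingGram, realConjugateMatrix, mul_apply, Finset.sum_add_distrib]

lemma posSemidef_embeddingGram [Finite ι] (b : ι → K) : (embeddingGram b).PosSemidef := by
  have := Fintype.ofFinite ι
  rw [embeddingGram_eq_realConjugateMatrix_mul_transpose, ← conjTranspose_eq_transpose_of_trivial]
  exact posSemidef_self_mul_conjTranspose _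

variable [Fintype ι]

lemma intCongr_embeddingGram (U : Matrix ι ι ℤ) (b : ι → K) :
    intCongr U (embeddingGram b) = embeddingGram fun i ↦ ∑ j, U i j • b j := by
  have hmul : realConjugateMatrix (fun i ↦ ∑ j, U i j • b j) =
      U.map (Int.cast : ℤ → ℝ) * realConjugateMatrix b := by
    ext i (φ | φ) <;> simp [realConjugateMatrix, mul_apply]
  simp only [intCongr, embeddingGram_eq_realConjugateMatrix_mul_transpose, hmul, transpose_mul,
    Matrix.mul_assoc]

variable [DecidableEq ι]

lemma conjugateMatrix_mul_transpose_traceDual (b : Module.Basis ι ℚ K) :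
    conjugateMatrix b * (conjugateMatrix b.traceDual)ᵀ = 1 := by
  ext i j
  have h := trace_eq_sum_embeddings (K := ℚ) ℂ (x := b i * b.traceDual j)
  simp only [Module.Basis.trace_mul_traceDual, map_mul] at h
  simp only [conjugateMatrix, mul_apply, of_apply, transpose_apply, ← h, one_apply]
  split_ifs <;> simp

lemma transpose_traceDual_mul_conjugateMatrix (b : Module.Basis ι ℚ K) :
    (conjugateMatrix b.traceDual)ᵀ * conjugateMatrix b = 1 := by
  rw [← mul_eq_one_comm_of_card_eq, conjugateMatrix_mul_transpose_traceDual]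
  rw [AlgHom.card, Module.finrank_eq_card_basis b]

lemma embeddingGram_mul_embeddingGram_traceDual (b : Module.Basis ι ℚ K) :
    embeddingGram b * embeddingGram b.traceDual = 1 := by
  refine Matrix.map_injective Complex.ofReal_injective ?_
  change (embeddingGram b * embeddingGram b.traceDual).map Complex.ofRealHom =
    (1 : Matrix ι ι ℝ).map Complex.ofRealHom
  rw [Matrix.map_mul, Matrix.map_one _ (map_zero _) (map_one _)]
  change (embeddingGram b).map Complex.ofReal * (embeddingGram b.traceDual).map Complex.ofReal = 1
  rw [embeddingGram_map_ofReal, embeddingGram_map_ofReal' b.traceDual, Matrix.mul_assoc,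
    ← Matrix.mul_assoc (conjugateMatrix b)ᴴ, ← conjTranspose_mul,
    transpose_traceDual_mul_conjugateMatrix, conjTranspose_one, Matrix.one_mul,
    conjugateMatrix_mul_transpose_traceDual]

lemma posDef_embeddingGram (b : Module.Basis ι ℚ K) : (embeddingGram b).PosDef := by
  rw [(posSemidef_embeddingGram b).posDef_iff_isUnit]
  exact IsUnit.of_mul_eq_one _ (embeddingGram_mul_embeddingGram_traceDual b)

lemma trace_traceDual_localizationLocalization_mul (b : Module.Basis ι ℤ (𝓞 K)) (k : ι)
    (a : 𝓞 K) : Algebra.trace ℚ K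
      ((b.localizationLocalization ℚ (nonZeroDivisors ℤ) K).traceDual k * a) = b.repr a k := by
  have h := (b.localizationLocalization ℚ (nonZeroDivisors ℤ) K).traceDual.traceDual_repr_apply a k
  rw [Module.Basis.traceDual_traceDual, Module.Basis.localizationLocalization_repr_algebraMap] at h
  rw [mul_comm, ← eq_intCast (algebraMap ℤ ℚ), h, Algebra.traceForm_apply]

lemma norm_embedding_le_of_embeddingGram_mul_inv_le (b : Module.Basis ι ℤ (𝓞 K)) {C : ℝ} {k : ι}
    (hC : embeddingGram (fun i ↦ (b i : K)) k k * (embeddingGram (fun i ↦ (b i : K)))⁻¹ k k ≤ C)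
    (φ : K →ₐ[ℚ] ℂ) :
    ‖φ (b k)‖ ≤ √C * |(discr K : ℝ)| ^ (1 / Module.finrank ℚ K : ℝ) := by
  set B := b.localizationLocalization ℚ (nonZeroDivisors ℤ) K with hB
  have hBb : (fun i ↦ (b i : K)) = B := by
    ext i; rw [hB, Module.Basis.localizationLocalization_apply]
  obtain ⟨ψ, hψ⟩ := exists_discr_rpow_le_norm (B.traceDual.ne_zero k)
    fun a ↦ ⟨_, trace_traceDual_localizationLocalization_mul b k a⟩
  have hdiscr : 0 < |(discr K : ℝ)| := by simpa using discr_ne_zero K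
  have hsq : ∀ (c : ι → K) (χ : K →ₐ[ℚ] ℂ), ‖χ (c k)‖ ^ 2 ≤ embeddingGram c k k := by
    intro c χ
    rw [embeddingGram_apply_self]
    exact Finset.single_le_sum (f := fun χ : K →ₐ[ℚ] ℂ ↦ ‖χ (c k)‖ ^ 2)
      (fun _ _ ↦ by positivity) (Finset.mem_univ χ)
  rw [hBb, Matrix.inv_eq_right_inv (embeddingGram_mul_embeddingGram_traceDual B)] at hC
  rw [Real.rpow_neg hdiscr.le, inv_le_iff_one_le_mul₀ (by positivity)] at hψ
  have hprod : ‖φ (b k)‖ * ‖ψ (B.traceDual k)‖ ≤ √C := by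
    refine Real.le_sqrt_of_sq_le ?_
    rw [mul_pow, congrFun hBb k]
    exact (mul_le_mul (hsq B φ) (hsq B.traceDual ψ) (by positivity)
      ((sq_nonneg _).trans (hsq B φ))).trans hC
  calc ‖φ (b k)‖ ≤ ‖φ (b k)‖ * (‖ψ (B.traceDual k)‖ *
        |(discr K : ℝ)| ^ (1 / Module.finrank ℚ K : ℝ)) :=
        le_mul_of_one_le_right (norm_nonneg _) hψ
    _ ≤ √C * |(discr K : ℝ)| ^ (1 / Module.finrank ℚ K : ℝ) := by
        rw [← mul_assoc]; gcongr

lemma exists_basis_eq_sum_smul {R M : Type*} [CommRing R] [AddCommGroup M] [Module R M]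
    (b : Module.Basis ι R M) {U : Matrix ι ι R} (hU : IsUnit U) :
    ∃ b' : Module.Basis ι R M, ∀ i, b' i = ∑ j, U i j • b j := by
  have hmatrix : b.toMatrix (fun i ↦ ∑ j, U i j • b j) = Uᵀ := by
    ext i j
    simp [Module.Basis.toMatrix_apply, Finsupp.single_apply]
  have hdet : IsUnit (b.det fun i ↦ ∑ j, U i j • b j) := by
    rw [Module.Basis.det_apply, hmatrix, det_transpose]
    exact (isUnit_iff_isUnit_det U).1 hU
  obtain ⟨hli, hspan⟩ := (Module.Basis.is_basis_iff_det b).2 hdet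
  exact ⟨.mk hli hspan.ge, fun i ↦ Module.Basis.mk_apply hli hspan.ge i⟩

theorem exists_basis_norm_le_mul_discr_rpow (n : ℕ) :
    ∃ C : ℝ, 0 ≤ C ∧ ∀ (K : Type) [Field K] [NumberField K], Module.finrank ℚ K = n →
      ∃ b : Module.Basis (Fin n) ℤ (𝓞 K), ∀ (k : Fin n) (φ : K →ₐ[ℚ] ℂ),
        ‖φ (b k)‖ ≤ C * |(discr K : ℝ)| ^ (1 / n : ℝ) := by
  obtain ⟨C, hC⟩ := exists_intCongr_diag_mul_inv_diag_le (Fin n)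
  refine ⟨√C, Real.sqrt_nonneg C, fun K _ _ hn ↦ ?_⟩
  have hcard : Fintype.card (Module.Free.ChooseBasisIndex ℤ (𝓞 K)) = n := by
    rw [← Module.finrank_eq_card_chooseBasisIndex, RingOfIntegers.rank, hn]
  let b₀ : Module.Basis (Fin n) ℤ (𝓞 K) :=
    (RingOfIntegers.basis K).reindex (Fintype.equivFinOfCardEq hcard)
  let B₀ := b₀.localizationLocalization ℚ (nonZeroDivisors ℤ) K
  obtain ⟨U, hU, hUC⟩ := hC _ (posDef_embeddingGram B₀)
  obtain ⟨b, hb⟩ := exists_basis_eq_sum_smul b₀ hU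
  have hbB₀ : (fun i ↦ ∑ j, U i j • B₀ j) = fun i ↦ (b i : K) := by
    ext i; simp [hb, B₀]
  rw [intCongr_embeddingGram, hbB₀] at hUC
  have hle := fun k φ ↦ norm_embedding_le_of_embeddingGram_mul_inv_le b (hUC k) φ
  rw [hn] at hle
  exact ⟨b, hle⟩

end ShortIntegralBasis

section GenericGradients

open MvPolynomial Finset
open Module (finrank)

variable {σ : Type*}

/-- The exponent vectors of total degree at most `e`; they index the monomial basis of
`MvPolynomial.restrictTotalDegree`. -/
noncomputable def exponentsDegreeLE (σ : Type*) [Fintype σ] (e : ℕ) : Finset (σ →₀ ℕ) :=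
  (range (e + 1)).biUnion fun k ↦ finsuppAntidiag univ k

section Exponents

variable [Fintype σ]

lemma mem_exponentsDegreeLE {e : ℕ} {a : σ →₀ ℕ} : a ∈ exponentsDegreeLE σ e ↔ a.degree ≤ e := by
  simp [exponentsDegreeLE, Finsupp.degree_eq_sum]

lemma exponentsDegreeLE_mono : Monotone (exponentsDegreeLE σ) := fun _ _ h _ ha ↦
  mem_exponentsDegreeLE.2 ((mem_exponentsDegreeLE.1 ha).trans h)

lemma card_exponentsDegreeLE (e : ℕ) :
    #(exponentsDegreeLE σ e) = (e + Fintype.card σ).choose (Fintype.card σ) := by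
  rw [exponentsDegreeLE, card_biUnion]
  · simp only [card_finsuppAntidiag_nat_eq_multichoose, card_univ]
    rw [Nat.sum_range_multichoose, add_comm, Nat.choose_symm_add]
  · intro k _ l _ hkl
    simp only [disjoint_left, mem_finsuppAntidiag]
    rintro a ⟨hk, -⟩ ⟨hl, -⟩
    exact hkl (hk.symm.trans hl)

lemma restrictTotalDegree_eq_restrictSupport (R : Type*) [CommSemiring R] (e : ℕ) :
    restrictTotalDegree σ R e = restrictSupport R (exponentsDegreeLE σ e : Set (σ →₀ ℕ)) := by
  unfold restrictTotalDegree
  congr 1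
  ext a
  simp only [Set.mem_ofPred_eq, mem_coe, mem_exponentsDegreeLE]
  rfl

lemma finrank_restrictTotalDegree (R : Type*) [CommRing R] [Nontrivial R] (e : ℕ) :
    finrank R (restrictTotalDegree σ R e) = (e + Fintype.card σ).choose (Fintype.card σ) := by
  rw [restrictTotalDegree_eq_restrictSupport,
    Module.finrank_eq_card_basis (basisRestrictSupport R _), ← card_exponentsDegreeLE]
  simp

end Exponents

lemma degree_prod_le_and_coeff_prod {ι R : Type*} [CommRing R] (m : MonomialOrder σ)
    (s : Finset ι) (g : ι → MvPolynomial σ R) (a : ι → σ →₀ ℕ)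
    (hg : ∀ i, m.toSyn (m.degree (g i)) ≤ m.toSyn (a i)) :
    m.toSyn (m.degree (∏ i ∈ s, g i)) ≤ m.toSyn (∑ i ∈ s, a i) ∧
      (∏ i ∈ s, g i).coeff (∑ i ∈ s, a i) = ∏ i ∈ s, (g i).coeff (a i) := by
  induction s using Finset.induction_on with
  | empty => simp [coeff_one]
  | insert i s hi ih =>
    rw [prod_insert hi, sum_insert hi, prod_insert hi]
    refine ⟨m.degree_mul_le.trans ?_, ?_⟩
    · rw [map_add, map_add]
      exact add_le_add (hg i) ih.1
    · rw [m.coeff_mul_of_add_of_degree_le (hg i) ih.1, ih.2]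

lemma coeff_X_mul_pderiv {R : Type*} [CommSemiring R] (f : MvPolynomial σ R) (l : σ)
    (b : σ →₀ ℕ) : (X l * pderiv l f).coeff b = b l * f.coeff b := by
  induction f using MvPolynomial.induction_on' with
  | add p q hp hq => simp [mul_add, hp, hq]
  | monomial n c =>
    rw [X_mul_pderiv_monomial, coeff_smul, coeff_monomial]
    split_ifs with h
    · simp [h]
    · simp

/-- The Jacobian matrix of a polynomial map, with one row per polynomial. -/
noncomputable def jacobianMatrix {ι R : Type*} [CommSemiring R] (f : ι → MvPolynomial σ R) :
    Matrix ι σ (MvPolynomial σ R) :=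
  .of fun j l ↦ pderiv l (f j)

section Jacobian

lemma degree_X_mul_pderiv_le {R : Type*} [CommSemiring R] (m : MonomialOrder σ)
    (f : MvPolynomial σ R) (l : σ) :
    m.toSyn (m.degree (X l * pderiv l f)) ≤ m.toSyn (m.degree f) := by
  refine m.degree_le_iff.2 fun b hb ↦ m.le_degree ?_
  rw [mem_support_iff, coeff_X_mul_pderiv] at hb
  exact mem_support_iff.2 (right_ne_zero_of_mul hb)

variable [Fintype σ]

lemma coeff_det_X_mul_pderiv {R : Type*} [CommRing R] (m : MonomialOrder σ)
    (f : σ → MvPolynomial σ R) :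
    (Matrix.of fun j l ↦ X l * jacobianMatrix f j l).det.coeff (∑ j, m.degree (f j)) =
      (∏ j, m.leadingCoeff (f j)) * (Matrix.of fun j l ↦ (m.degree (f j) l : R)).det := by
  rw [← Matrix.det_transpose, ← Matrix.det_transpose (Matrix.of fun j l ↦ (m.degree (f j) l : R)),
    Matrix.det_apply', Matrix.det_apply', coeff_sum, mul_sum]
  refine sum_congr rfl fun s _ ↦ ?_
  have hsign : ((Equiv.Perm.sign s : ℤ) : MvPolynomial σ R) = C ((Equiv.Perm.sign s : ℤ) : R) := by
    simp
  have hprod := (degree_prod_le_and_coeff_prod m univ (fun i ↦ X (s i) * pderiv (s i) (f i)) _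
    fun i ↦ degree_X_mul_pderiv_le m (f i) (s i)).2
  rw [hsign, coeff_C_mul]
  simp only [jacobianMatrix, Matrix.transpose_apply, Matrix.of_apply, MonomialOrder.leadingCoeff]
  rw [hprod]
  simp only [coeff_X_mul_pderiv, prod_mul_distrib]
  ring

lemma det_jacobianMatrix_ne_zero_of_degree {R : Type*} [CommRing R] [IsDomain R]
    (m : MonomialOrder σ) {f : σ → MvPolynomial σ R} (hf : ∀ j, f j ≠ 0)
    (hdet : (Matrix.of fun j l ↦ (m.degree (f j) l : R)).det ≠ 0) :
    (jacobianMatrix f).det ≠ 0 := by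
  intro hzero
  have hscaled : (Matrix.of fun j l ↦ X l * jacobianMatrix f j l).det = 0 := by
    rw [Matrix.det_mul_row, hzero, mul_zero]
  have hcoeff := coeff_det_X_mul_pderiv m f
  rw [hscaled, coeff_zero] at hcoeff
  have hlead : ∏ j, m.leadingCoeff (f j) ≠ 0 :=
    prod_ne_zero_iff.2 fun j _ ↦ m.leadingCoeff_ne_zero_iff.2 (hf j)
  exact mul_ne_zero hlead hdet hcoeff.symm

variable {F : Type*} [Field F]

lemma finrank_le_card_degrees (m : MonomialOrder σ) {e : ℕ} {W : Submodule F (MvPolynomial σ F)}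
    (hW : W ≤ restrictTotalDegree σ F e) :
    finrank F W ≤ #{a ∈ exponentsDegreeLE σ e | ∃ f ∈ W, f ≠ 0 ∧ m.degree f = a} := by
  set L := {a ∈ exponentsDegreeLE σ e | ∃ f ∈ W, f ≠ 0 ∧ m.degree f = a}
  let coeffs : W →ₗ[F] (L → F) := LinearMap.pi fun a ↦ (lcoeff F a.1).comp W.subtype
  have hinj : Function.Injective coeffs := by
    rw [← LinearMap.ker_eq_bot, LinearMap.ker_eq_bot']
    intro f hf
    by_contra hne
    have hne' : (f : MvPolynomial σ F) ≠ 0 := fun h ↦ hne (Subtype.ext h)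
    have hsupp := m.degree_mem_support hne'
    have hmem : m.degree (f : MvPolynomial σ F) ∈ L := by
      have hfW := hW f.2
      rw [restrictTotalDegree_eq_restrictSupport, mem_restrictSupport_iff] at hfW
      exact mem_filter.2 ⟨hfW hsupp, f, f.2, hne', rfl⟩
    exact mem_support_iff.1 hsupp (congrFun hf ⟨_, hmem⟩)
  simpa using LinearMap.finrank_le_finrank_of_injective hinj

lemma exists_injOn_subtypeDomain_of_span_ne_top [CharZero F] {L : Set (σ →₀ ℕ)}
    (hL : Submodule.span F ((fun (a : σ →₀ ℕ) i ↦ (a i : F)) '' L) ≠ ⊤) :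
    ∃ j, Set.InjOn (fun a : σ →₀ ℕ ↦ a.subtypeDomain (· ≠ j)) L := by
  obtain ⟨c, hc0, hc⟩ := Submodule.exists_le_ker_of_lt_top _ (lt_top_iff_ne_top.2 hL)
  have hcx (x : σ → F) : c x = ∑ j, x j * c (Pi.single j 1) := by
    conv_lhs => rw [pi_eq_sum_univ' x, map_sum]
    simp
  obtain ⟨j, hj⟩ : ∃ j, c (Pi.single j 1) ≠ 0 := by
    by_contra! hcon
    exact hc0 (LinearMap.ext fun x ↦ by simp [hcx x, hcon])
  refine ⟨j, fun a ha b hb hab ↦ ?_⟩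
  have hoff (l : σ) (hl : l ≠ j) : a l = b l := by
    simpa using DFunLike.congr_fun hab ⟨l, hl⟩
  have hker : c ((fun i ↦ (a i : F)) - fun i ↦ (b i : F)) = 0 := by
    rw [map_sub, hc (Submodule.subset_span ⟨a, ha, rfl⟩),
      hc (Submodule.subset_span ⟨b, hb, rfl⟩), sub_zero]
  rw [hcx, sum_eq_single j (fun l _ hl ↦ by simp [hoff l hl]) (by simp)] at hker
  have hjj : a j = b j :=
    Nat.cast_injective (R := F) (sub_eq_zero.1 ((mul_eq_zero.1 hker).resolve_right hj))
  ext l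
  by_cases hl : l = j
  · rw [hl, hjj]
  · exact hoff l hl

lemma card_le_of_span_ne_top [CharZero F] {L : Finset (σ →₀ ℕ)} {e : ℕ}
    (hLe : L ⊆ exponentsDegreeLE σ e)
    (hL : Submodule.span F ((fun (a : σ →₀ ℕ) i ↦ (a i : F)) '' (L : Set (σ →₀ ℕ))) ≠ ⊤) :
    #L ≤ (e + (Fintype.card σ - 1)).choose (Fintype.card σ - 1) := by
  obtain ⟨j, hinj⟩ := exists_injOn_subtypeDomain_of_span_ne_top hL
  have hmaps (a) (ha : a ∈ L) :
      a.subtypeDomain (· ≠ j) ∈ exponentsDegreeLE {l : σ // l ≠ j} e := by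
    rw [mem_exponentsDegreeLE, Finsupp.degree_eq_sum]
    refine le_trans ?_ (mem_exponentsDegreeLE.1 (hLe ha))
    simp only [Finsupp.subtypeDomain_apply, Finsupp.degree_eq_sum]
    rw [← sum_subtype (univ.filter (· ≠ j)) (by simp) (fun l ↦ a l)]
    exact sum_le_sum_of_subset (filter_subset _ _)
  have hcard : Fintype.card {l : σ // l ≠ j} = Fintype.card σ - 1 := by
    rw [Fintype.card_subtype_compl]; simp
  simpa only [card_exponentsDegreeLE, hcard] using card_le_card_of_injOn _ hmaps hinj

lemma exists_basis_of_span_eq_top {V : Type*} [AddCommGroup V] [Module F V]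
    [FiniteDimensional F V] {S : Set V}
    (hV : finrank F V = Fintype.card σ) (hS : Submodule.span F S = ⊤) :
    ∃ g : σ → V, (∀ j, g j ∈ S) ∧ LinearIndependent F g := by
  obtain ⟨g, hg, -, hli⟩ := Submodule.exists_fun_fin_finrank_span_eq F S
  have hcard : finrank F (Submodule.span F S) = Fintype.card σ := by rw [hS, finrank_top, hV]
  let index : σ ≃ Fin (finrank F (Submodule.span F S)) :=
    (Fintype.equivFin σ).trans (finCongr hcard.symm)
  exact ⟨g ∘ index, fun j ↦ hg _, hli.comp _ index.injective⟩

lemma nonempty_monomialOrder.{u} (σ : Type u) [Finite σ] :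
    Nonempty (MonomialOrder.{u, u} σ) := by
  let _ : LinearOrder σ := LinearOrder.lift' (Finite.equivFin σ) (Finite.equivFin σ).injective
  exact ⟨MonomialOrder.lex⟩

lemma exists_det_jacobianMatrix_ne_zero [CharZero F] {e : ℕ}
    {W : Submodule F (MvPolynomial σ F)} (hW : W ≤ restrictTotalDegree σ F e)
    (hdim : (e + (Fintype.card σ - 1)).choose (Fintype.card σ - 1) < finrank F W) :
    ∃ f : σ → MvPolynomial σ F, (∀ j, f j ∈ W) ∧ (jacobianMatrix f).det ≠ 0 := by
  obtain ⟨m⟩ := nonempty_monomialOrder σ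
  set L := {a ∈ exponentsDegreeLE σ e | ∃ f ∈ W, f ≠ 0 ∧ m.degree f = a}
  have hspan : Submodule.span F ((fun (a : σ →₀ ℕ) i ↦ (a i : F)) '' (L : Set (σ →₀ ℕ))) = ⊤ := by
    by_contra hne
    exact hdim.not_ge ((finrank_le_card_degrees m hW).trans
      (card_le_of_span_ne_top (filter_subset _ _) hne))
  obtain ⟨g, hg, hli⟩ := exists_basis_of_span_eq_top (σ := σ) (by simp) hspan
  have hlift (j) : ∃ f ∈ W, f ≠ 0 ∧ (fun l ↦ (m.degree f l : F)) = g j := by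
    obtain ⟨a, ha, hag⟩ := hg j
    obtain ⟨-, f, hfW, hf0, rfl⟩ := mem_filter.1 (mem_coe.1 ha)
    exact ⟨f, hfW, hf0, hag⟩
  choose f hfW hf0 hfg using hlift
  refine ⟨f, hfW, det_jacobianMatrix_ne_zero_of_degree m hf0 ?_⟩
  have hrows : (Matrix.of fun j l ↦ (m.degree (f j) l : F)) = Matrix.of g := by
    ext j l
    exact congrFun (hfg j) l
  rw [hrows]
  exact ((Matrix.isUnit_iff_isUnit_det _).1
    (Matrix.linearIndependent_rows_iff_isUnit.1 hli)).ne_zero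

end Jacobian

section Gradients

variable {F : Type*} [Field F]

/-- The gradient of a polynomial at the point `x`, as a linear map. -/
noncomputable def gradientAt (x : σ → F) : MvPolynomial σ F →ₗ[F] (σ → F) :=
  LinearMap.pi fun j ↦ (aeval x).toLinearMap ∘ₗ (pderiv j).toLinearMap

/-- The gradients of a polynomial at all the points of the family `p` simultaneously. -/
noncomputable def gradientsAt {ι : Type*} (p : ι → σ → F) : MvPolynomial σ F →ₗ[F] (ι × σ → F) :=
  LinearMap.pi fun ij ↦ LinearMap.proj ij.2 ∘ₗ gradientAt (p ij.1)

lemma gradientAt_apply (x : σ → F) (f : MvPolynomial σ F) (j : σ) :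
    gradientAt x f j = eval x (pderiv j f) := by
  simp [gradientAt, aeval_eq_eval]

lemma gradientsAt_apply {ι : Type*} (p : ι → σ → F) (f : MvPolynomial σ F) (ij : ι × σ) :
    gradientsAt p f ij = eval (p ij.1) (pderiv ij.2 f) :=
  gradientAt_apply _ _ _

lemma ker_gradientsAt_cons {n : ℕ} (x : σ → F) (p : Fin n → σ → F) :
    LinearMap.ker (gradientsAt (Fin.cons x p : Fin (n + 1) → σ → F)) =
      LinearMap.ker (gradientsAt p) ⊓ LinearMap.ker (gradientAt x) := by
  ext f
  simp [funext_iff, gradientsAt_apply, gradientAt_apply, Prod.forall, Fin.forall_fin_succ,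
    and_comm]

lemma finrank_map_add_finrank_inf_ker {V V' : Type*} [AddCommGroup V] [Module F V]
    [AddCommGroup V'] [Module F V'] (φ : V →ₗ[F] V') (W : Submodule F V) [FiniteDimensional F W] :
    finrank F (W.map φ) + finrank F (W ⊓ LinearMap.ker φ : Submodule F V) = finrank F W := by
  rw [← LinearMap.finrank_range_add_finrank_ker (φ.domRestrict W), LinearMap.range_domRestrict,
    LinearMap.ker_domRestrict, ← Submodule.map_comap_subtype, Submodule.finrank_map_subtype_eq]

variable [Fintype σ]

lemma map_gradientAt_eq_top {W : Submodule F (MvPolynomial σ F)} {x : σ → F}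
    {f : σ → MvPolynomial σ F} (hf : ∀ j, f j ∈ W) (hx : eval x (jacobianMatrix f).det ≠ 0) :
    W.map (gradientAt x) = ⊤ := by
  rw [RingHom.map_det] at hx
  have hli := Matrix.linearIndependent_rows_iff_isUnit.2
    ((Matrix.isUnit_iff_isUnit_det _).2 (isUnit_iff_ne_zero.2 hx))
  rw [eq_top_iff, ← hli.span_eq_top_of_card_eq_finrank' (by simp), Submodule.span_le]
  rintro _ ⟨j, rfl⟩
  exact ⟨f j, hf j, funext fun l ↦ gradientAt_apply x (f j) l⟩

lemma choose_add_eq_choose_add_choose (e r : ℕ) (hr : 0 < r) :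
    (e + r).choose r = (e + (r - 1)).choose (r - 1) + (e + r - 1).choose r := by
  obtain ⟨s, rfl⟩ := Nat.exists_eq_add_of_lt hr
  simp [← add_assoc, Nat.choose_succ_succ]

lemma exists_forall_le_finrank_map_gradientsAt_cons [Nonempty σ] [CharZero F] {n : ℕ}
    (p : Fin n → σ → F) (e : ℕ) :
    ∃ J : MvPolynomial σ F, J ≠ 0 ∧ ∀ x, eval x J ≠ 0 →
      min (finrank F ((restrictTotalDegree σ F e).map (gradientsAt p)) + Fintype.card σ)
          ((e + Fintype.card σ - 1).choose (Fintype.card σ)) ≤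
        finrank F ((restrictTotalDegree σ F e).map
          (gradientsAt (Fin.cons x p : Fin (n + 1) → σ → F))) := by
  set V := restrictTotalDegree σ F e
  set W := V ⊓ LinearMap.ker (gradientsAt p) with hW
  have hdimV : finrank F V = _ := finrank_restrictTotalDegree F e
  have hdimW : finrank F (V.map (gradientsAt p)) + finrank F W = finrank F V :=
    finrank_map_add_finrank_inf_ker _ _
  have hpascal := choose_add_eq_choose_add_choose e (Fintype.card σ) Fintype.card_pos
  have hcons (x : σ → F) :
      finrank F (V.map (gradientsAt (Fin.cons x p : Fin (n + 1) → σ → F))) +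
        finrank F (W ⊓ LinearMap.ker (gradientAt x) : Submodule F _) = finrank F V := by
    rw [hW, inf_assoc, ← ker_gradientsAt_cons, finrank_map_add_finrank_inf_ker]
  by_cases hlt : (e + (Fintype.card σ - 1)).choose (Fintype.card σ - 1) < finrank F W
  · obtain ⟨f, hf, hdet⟩ := exists_det_jacobianMatrix_ne_zero inf_le_left hlt
    refine ⟨_, hdet, fun x hx ↦ ?_⟩
    have hdrop := finrank_map_add_finrank_inf_ker (gradientAt x) W
    rw [map_gradientAt_eq_top hf hx, finrank_top, Module.finrank_fintype_fun_eq_card] at hdrop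
    have := hcons x
    omega
  · refine ⟨1, one_ne_zero, fun x _ ↦ ?_⟩
    have hle : finrank F (W ⊓ LinearMap.ker (gradientAt x) : Submodule F _) ≤ finrank F W :=
      Submodule.finrank_mono inf_le_left
    have := hcons x
    omega

lemma exists_le_finrank_map_gradientsAt (σ F : Type*) [Fintype σ] [Nonempty σ] [Field F]
    [CharZero F] (d n : ℕ) :
    ∃ p : Fin n → σ → F, ∀ e ≤ d,
      min (Fintype.card σ * n) ((e + Fintype.card σ - 1).choose (Fintype.card σ)) ≤
        finrank F ((restrictTotalDegree σ F e).map (gradientsAt p)) := by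
  induction n with
  | zero => exact ⟨Fin.elim0, fun e _ ↦ by simp⟩
  | succ n ih =>
    obtain ⟨p, hp⟩ := ih
    choose J hJ0 hJ using exists_forall_le_finrank_map_gradientsAt_cons p
    have hprod : ∏ e ∈ range (d + 1), J e ≠ 0 := prod_ne_zero_iff.2 fun e _ ↦ hJ0 e
    obtain ⟨x, hx⟩ : ∃ x, eval x (∏ e ∈ range (d + 1), J e) ≠ 0 := by
      by_contra! hcon
      exact hprod (MvPolynomial.funext fun x ↦ by rw [hcon x, map_zero])
    rw [map_prod, prod_ne_zero_iff] at hx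
    refine ⟨Fin.cons x p, fun e he ↦ ?_⟩
    have hstep := hJ e x (hx e (mem_range.2 (by omega)))
    have := hp e he
    rw [mul_add]
    omega

end Gradients

section Exponents

variable {ι F V : Type*} [DivisionRing F] [AddCommGroup V] [Module F V]

lemma exists_linearIndepOn_finset_extension (v : ι → V) {B T : Finset ι} (hBT : B ⊆ T)
    (hB : LinearIndepOn F v (B : Set ι)) :
    ∃ A : Finset ι, A ⊆ T ∧ B ⊆ A ∧ LinearIndepOn F v (A : Set ι) ∧
      finrank F (Submodule.span F (v '' (T : Set ι))) ≤ #A := by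
  obtain ⟨b, hbT, hBb, hspan, hb⟩ := exists_linearIndepOn_extension hB (coe_subset.2 hBT)
  obtain ⟨A, rfl⟩ := (T.finite_toSet.subset hbT).exists_finset_coe
  refine ⟨A, coe_subset.1 hbT, coe_subset.1 hBb, hb, ?_⟩
  have hle : Submodule.span F (v '' (T : Set ι)) ≤
      Submodule.span F ((A.image v : Finset V) : Set V) := by
    simpa [Submodule.span_le] using hspan
  calc finrank F (Submodule.span F (v '' (T : Set ι)))
      ≤ finrank F (Submodule.span F ((A.image v : Finset V) : Set V)) := Submodule.finrank_mono hle
    _ ≤ #(A.image v) := finrank_span_finset_le_card _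
    _ ≤ #A := card_image_le

lemma exists_linearIndepOn_forall_finrank_span_le [DecidableEq ι] (v : ι → V) {S : ℕ → Finset ι}
    (hS : Monotone S) (d : ℕ) :
    ∃ A ⊆ S d, LinearIndepOn F v (A : Set ι) ∧
      ∀ e ≤ d, finrank F (Submodule.span F (v '' (S e : Set ι))) ≤ #{a ∈ A | a ∈ S e} := by
  induction d with
  | zero =>
    obtain ⟨A, hAS, -, hA, hcard⟩ :=
      exists_linearIndepOn_finset_extension (F := F) v (empty_subset (S 0)) (by simp)
    refine ⟨A, hAS, hA, fun e he ↦ ?_⟩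
    rwa [Nat.le_zero.1 he, filter_true_of_mem hAS]
  | succ d ih =>
    obtain ⟨B, hBS, hB, hBcard⟩ := ih
    obtain ⟨A, hAS, hBA, hA, hcard⟩ :=
      exists_linearIndepOn_finset_extension v (hBS.trans (hS (Nat.le_succ d))) hB
    refine ⟨A, hAS, hA, fun e he ↦ ?_⟩
    obtain he | rfl := Nat.le_succ_iff.1 he
    · exact (hBcard e he).trans (card_le_card (filter_subset_filter _ hBA))
    · rwa [filter_true_of_mem hAS]

lemma sum_eq_sum_range_card_filter_lt {f : ι → ℕ} {A : Finset ι} {d : ℕ}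
    (hf : ∀ a ∈ A, f a ≤ d) : ∑ a ∈ A, f a = ∑ e ∈ range d, #{a ∈ A | e < f a} := by
  simp only [card_filter]
  rw [sum_comm]
  refine sum_congr rfl fun a ha ↦ ?_
  have hrange : {e ∈ range d | e < f a} = range (f a) := by
    ext e
    have := hf a ha
    simp only [mem_filter, mem_range]
    omega
  rw [← card_filter, hrange, card_range]

end Exponents

/-- Bounds the total degree of `r * n` suitably chosen exponent vectors in `r` variables: all but
`r * n - (e + r - 1).choose r` of them can be taken of degree at most `e`. The truncation of the
subtraction is intended. -/
def degreeBudget (r n d : ℕ) : ℕ :=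
  ∑ e ∈ range d, (r * n - (e + r - 1).choose r)

lemma exists_exponents_linearIndepOn_gradientsAt (σ F : Type*) [Fintype σ] [Nonempty σ] [Field F]
    [CharZero F] {n d : ℕ}
    (hd : Fintype.card σ * n ≤ (d + Fintype.card σ - 1).choose (Fintype.card σ)) :
    ∃ (p : Fin n → σ → F) (A : Finset (σ →₀ ℕ)), #A = Fintype.card σ * n ∧
      ∑ a ∈ A, a.degree ≤ degreeBudget (Fintype.card σ) n d ∧
      LinearIndepOn F (fun a ↦ gradientsAt p (monomial a 1)) (A : Set (σ →₀ ℕ)) := by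
  obtain ⟨p, hp⟩ := exists_le_finrank_map_gradientsAt σ F d n
  obtain ⟨A, hAd, hA, hAcard⟩ := exists_linearIndepOn_forall_finrank_span_le (F := F)
    (fun a ↦ gradientsAt p (monomial a 1)) (exponentsDegreeLE_mono (σ := σ)) d
  have hrank (e) (he : e ≤ d) :
      min (Fintype.card σ * n) ((e + Fintype.card σ - 1).choose (Fintype.card σ)) ≤
        #{a ∈ A | a ∈ exponentsDegreeLE σ e} := by
    refine (hp e he).trans ((Eq.le ?_).trans (hAcard e he))
    rw [restrictTotalDegree_eq_restrictSupport, restrictSupport_eq_span, Submodule.map_span,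
      Set.image_image]
  have hcard : #A = Fintype.card σ * n := by
    apply le_antisymm
    · simpa [mul_comm] using LinearIndependent.fintype_card_le_finrank hA
    · simpa only [min_eq_left hd, filter_true_of_mem hAd] using hrank d le_rfl
  refine ⟨p, A, hcard, ?_, hA⟩
  rw [sum_eq_sum_range_card_filter_lt fun a ha ↦ mem_exponentsDegreeLE.1 (hAd ha)]
  refine sum_le_sum fun e he ↦ ?_
  have hsplit := card_filter_add_card_filter_not (s := A) (· ∈ exponentsDegreeLE σ e)
  simp only [mem_exponentsDegreeLE, not_le] at hsplit
  have := hrank e (mem_range.1 he).le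
  simp only [mem_exponentsDegreeLE] at this
  omega

end GenericGradients

section GenericFiniteness

open MvPolynomial Finset

variable {κ : Type*}

lemma pderiv_aeval {ι R : Type*} [Fintype ι] [CommSemiring R] (T : ι → MvPolynomial κ R)
    (P : MvPolynomial ι R) (k : κ) :
    pderiv k (aeval T P) = ∑ a, aeval T (pderiv a P) * pderiv k (T a) := by
  induction P using MvPolynomial.induction_on with
  | C c => simp
  | add p q hp hq => simp only [map_add, hp, hq, add_mul, sum_add_distrib]
  | mul_X p i hp =>
    have hterm (a) : aeval T (pderiv a (p * X i)) * pderiv k (T a) =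
        aeval T (pderiv a p) * pderiv k (T a) * T i +
          aeval T p * (aeval T (pderiv a (X i : MvPolynomial ι R)) * pderiv k (T a)) := by
      rw [pderiv_mul, map_add, map_mul, map_mul, aeval_X]
      ring
    have hX : ∑ a, aeval T (pderiv a (X i : MvPolynomial ι R)) * pderiv k (T a) =
        pderiv k (T i) := by
      rw [sum_eq_single i (fun b _ hb ↦ by rw [pderiv_X_of_ne hb.symm, map_zero, zero_mul])
        (by simp), pderiv_X_self, map_one, one_mul]
    rw [map_mul, pderiv_mul, hp, aeval_X, sum_mul, sum_congr rfl fun a _ ↦ hterm a,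
      sum_add_distrib, ← mul_sum, hX]

lemma eq_C_of_forall_pderiv_eq_zero {R : Type*} [CommSemiring R] [NoZeroDivisors R] [CharZero R]
    {P : MvPolynomial κ R} (hP : ∀ a, pderiv a P = 0) : P = C (P.coeff 0) := by
  ext b
  rw [coeff_C]
  split_ifs with hb
  · rw [hb]
  · obtain ⟨i, hi⟩ := Finsupp.ne_iff.1 (Ne.symm hb)
    have hcoeff := coeff_pderiv (i := i) P (b - Finsupp.single i 1)
    rw [hP i, coeff_zero, Finsupp.sub_add_single_one_cancel hi] at hcoeff
    exact (mul_eq_zero.1 hcoeff.symm).resolve_right (Nat.cast_add_one_ne_zero _)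

lemma totalDegree_pderiv_le_of_le_succ {R : Type*} [CommSemiring R] {P : MvPolynomial κ R} {N : ℕ}
    (hP : P.totalDegree ≤ N + 1) (a : κ) : (pderiv a P).totalDegree ≤ N := by
  rw [totalDegree, Finset.sup_le_iff]
  intro b hb
  rw [mem_support_iff, coeff_pderiv] at hb
  have hle := le_totalDegree (mem_support_iff.2 (left_ne_zero_of_mul hb))
  rw [Finsupp.sum_add_index' (by simp) (by simp), Finsupp.sum_single_index rfl] at hle
  omega

variable {F : Type*} [Field F]

-- If `P` is a nonzero relation of minimal degree among the `T a`, the chain rule and the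
-- invertibility of the Jacobian produce the relations `∂P/∂X_a` of smaller degree.
lemma algebraicIndependent_of_det_jacobianMatrix_ne_zero [Fintype κ] [CharZero F]
    {T : κ → MvPolynomial κ F} (hT : (jacobianMatrix T).det ≠ 0) : AlgebraicIndependent F T := by
  rw [algebraicIndependent_iff]
  have hconst (P : MvPolynomial κ F) (hP : P = C (P.coeff 0)) (hPT : aeval T P = 0) : P = 0 := by
    rw [hP, aeval_C, MvPolynomial.algebraMap_eq, C_eq_zero] at hPT
    rw [hP, hPT, C_0]
  suffices h : ∀ N (P : MvPolynomial κ F), P.totalDegree ≤ N → aeval T P = 0 → P = 0 from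
    fun P ↦ h _ P le_rfl
  intro N
  induction N with
  | zero => exact fun P hP ↦ hconst P (totalDegree_eq_zero_iff_eq_C.1 (Nat.le_zero.1 hP))
  | succ N ih =>
    intro P hP hPT
    have hpderiv : (fun a ↦ aeval T (pderiv a P)) = 0 := by
      refine Matrix.eq_zero_of_vecMul_eq_zero hT (funext fun k ↦ ?_)
      have hchain := pderiv_aeval T P k
      rw [hPT, map_zero] at hchain
      exact hchain.symm
    exact hconst P (eq_C_of_forall_pderiv_eq_zero fun a ↦
      ih _ (totalDegree_pderiv_le_of_le_succ hP a) (congrFun hpderiv a)) hPT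

lemma exists_forall_exists_isRoot_of_isAlgebraic {S : Subalgebra F (MvPolynomial κ F)}
    {f : MvPolynomial κ F} (hf : IsAlgebraic S f) :
    ∃ Q : MvPolynomial κ F, Q ≠ 0 ∧ ∃ B : ℕ, ∀ q, eval q Q ≠ 0 →
      ∃ R : Polynomial F, R ≠ 0 ∧ R.natDegree ≤ B ∧
        ∀ p, (∀ g ∈ S, eval p g = eval q g) → R.IsRoot (eval p f) := by
  obtain ⟨P, hP0, hP⟩ := hf
  have hlead : (P.leadingCoeff : MvPolynomial κ F) ≠ 0 := by
    simpa using hP0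
  refine ⟨P.leadingCoeff, hlead, P.natDegree, fun q hq ↦ ?_⟩
  let evalOn (p : κ → F) : S →+* F := (eval p).comp S.val.toRingHom
  refine ⟨P.map (evalOn q), fun hzero ↦ ?_, Polynomial.natDegree_map_le, fun p hp ↦ ?_⟩
  · have hcoeff := congrArg (fun R ↦ R.coeff P.natDegree) hzero
    rw [Polynomial.coeff_map, Polynomial.coeff_zero] at hcoeff
    exact hq hcoeff
  · have hpq : evalOn p = evalOn q := RingHom.ext fun g ↦ hp g g.2
    have hroot := congrArg (eval p) hP
    rw [map_zero, Polynomial.aeval_def, Polynomial.hom_eval₂] at hroot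
    rw [← hpq, Polynomial.IsRoot, Polynomial.eval_map]
    exact hroot

lemma eval_eq_eval_of_mem_adjoin_range {ι : Type*} {T : ι → MvPolynomial κ F} {p q : κ → F}
    (hpq : ∀ a, eval p (T a) = eval q (T a)) {g : MvPolynomial κ F}
    (hg : g ∈ Algebra.adjoin F (Set.range T)) : eval p g = eval q g := by
  have hle : Algebra.adjoin F (Set.range T) ≤ AlgHom.equalizer (aeval p) (aeval q) := by
    rw [Algebra.adjoin_le_iff]
    rintro _ ⟨a, rfl⟩
    simpa [AlgHom.mem_equalizer, aeval_eq_eval] using hpq a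
  simpa [AlgHom.mem_equalizer, aeval_eq_eval] using hle hg

lemma det_jacobianMatrix_ne_zero_of_linearIndependent [Fintype κ] {T : κ → MvPolynomial κ F}
    {x : κ → F} (hx : LinearIndependent F fun k l ↦ eval x (pderiv l (T k))) :
    (jacobianMatrix T).det ≠ 0 := by
  have hunit : IsUnit ((eval x).mapMatrix (jacobianMatrix T)) :=
    Matrix.linearIndependent_rows_iff_isUnit.1 hx
  rw [Matrix.isUnit_iff_isUnit_det, ← RingHom.map_det] at hunit
  exact fun hzero ↦ hunit.ne_zero (by rw [hzero, map_zero])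

theorem exists_forall_encard_fiber_le [Fintype κ] [CharZero F] {T : κ → MvPolynomial κ F}
    (hT : (jacobianMatrix T).det ≠ 0) :
    ∃ (Q : MvPolynomial κ F) (B : ℕ), Q ≠ 0 ∧ ∀ τ : κ → F,
      {p : κ → F | eval p Q ≠ 0 ∧ ∀ a, eval p (T a) = τ a}.encard ≤ B := by
  have hbasis : IsTranscendenceBasis F T :=
    have hindep := algebraicIndependent_of_det_jacobianMatrix_ne_zero hT
    hindep.isTranscendenceBasis_of_lift_trdeg_le_of_finite (by simp)
  choose Q hQ0 B hQB using fun k ↦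
    exists_forall_exists_isRoot_of_isAlgebraic (hbasis.isAlgebraic.isAlgebraic (X k))
  refine ⟨∏ k, Q k, ∏ k, B k, prod_ne_zero_iff.2 fun k _ ↦ hQ0 k, fun τ ↦ ?_⟩
  obtain hempty | ⟨q, hq, hqτ⟩ :=
    {p : κ → F | eval p (∏ k, Q k) ≠ 0 ∧ ∀ a, eval p (T a) = τ a}.eq_empty_or_nonempty
  · rw [hempty]
    simp
  rw [map_prod, prod_ne_zero_iff] at hq
  choose R hR0 hRdeg hRroot using fun k ↦ hQB k q (hq k (mem_univ k))
  have hsub : {p : κ → F | eval p (∏ k, Q k) ≠ 0 ∧ ∀ a, eval p (T a) = τ a} ⊆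
      (Fintype.piFinset fun k ↦ (R k).roots.toFinset : Finset (κ → F)) := by
    rintro p ⟨-, hpτ⟩
    refine mem_coe.2 (Fintype.mem_piFinset.2 fun k ↦ ?_)
    rw [Multiset.mem_toFinset, Polynomial.mem_roots (hR0 k)]
    simpa using hRroot k p fun g hg ↦
      eval_eq_eval_of_mem_adjoin_range (fun a ↦ (hpτ a).trans (hqτ a).symm) hg
  refine (Set.encard_le_encard hsub).trans ?_
  rw [Set.encard_coe_eq_coe_finsetCard, Fintype.card_piFinset]
  exact_mod_cast prod_le_prod' fun k _ ↦
    (Multiset.toFinset_card_le _).trans ((Polynomial.card_roots' _).trans (hRdeg k))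

variable {σ : Type*}

/-- The multisymmetric power sum `∑ i, ∏ j, X (i, j) ^ a j` attached to the exponent vector `a`;
at the conjugates of a family `α : σ → K` it takes the value `Tr (∏ j, α j ^ a j)`. -/
noncomputable def mixedPowerSum (ι F : Type*) [Fintype ι] [CommSemiring F] (a : σ →₀ ℕ) :
    MvPolynomial (ι × σ) F :=
  ∑ i, rename (Prod.mk i) (monomial a 1)

lemma eval_mixedPowerSum {ι : Type*} [Fintype ι] [Fintype σ] (a : σ →₀ ℕ) (p : ι × σ → F) :
    eval p (mixedPowerSum ι F a) = ∑ i, ∏ j, p (i, j) ^ a j := by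
  simp [mixedPowerSum, eval_rename, eval_monomial, Finsupp.prod_fintype]

lemma eval_pderiv_mixedPowerSum {ι : Type*} [Fintype ι] (a : σ →₀ ℕ) (p : ι → σ → F)
    (ij : ι × σ) :
    eval (Function.uncurry p) (pderiv ij (mixedPowerSum ι F a)) =
      gradientsAt p (monomial a 1) ij := by
  obtain ⟨i, j⟩ := ij
  rw [mixedPowerSum, map_sum, map_sum, sum_eq_single i ?_ (by simp)]
  · rw [pderiv_rename (Prod.mk_right_injective i), eval_rename, gradientsAt_apply]
    rfl
  · intro i' _ hi'
    rw [pderiv_eq_zero_of_notMem_vars, map_zero]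
    intro hmem
    obtain ⟨j', -, hj'⟩ := mem_image.1 (vars_rename (Prod.mk i') (monomial a (1 : F)) hmem)
    exact hi' (Prod.mk.inj hj').1

theorem exists_exponents_forall_encard_mixedPowerSum_fiber_le (σ F : Type*) [Fintype σ]
    [Nonempty σ] [Field F] [CharZero F] {n d : ℕ}
    (hd : Fintype.card σ * n ≤ (d + Fintype.card σ - 1).choose (Fintype.card σ)) :
    ∃ (A : Finset (σ →₀ ℕ)) (Q : MvPolynomial (Fin n × σ) F) (B : ℕ),
      ∑ a ∈ A, a.degree ≤ degreeBudget (Fintype.card σ) n d ∧ Q ≠ 0 ∧ ∀ τ : A → F,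
        {p | eval p Q ≠ 0 ∧ ∀ a : A, eval p (mixedPowerSum (Fin n) F a.1) = τ a}.encard ≤ B := by
  obtain ⟨p, A, hcard, hdeg, hindep⟩ := exists_exponents_linearIndepOn_gradientsAt σ F hd
  let e : Fin n × σ ≃ A := Fintype.equivOfCardEq (by simp [hcard, mul_comm])
  let T (k : Fin n × σ) : MvPolynomial (Fin n × σ) F := mixedPowerSum (Fin n) F (e k).1
  have hrows : LinearIndependent F
      fun k l ↦ eval (Function.uncurry p) (pderiv l (T k)) := by
    convert LinearIndependent.comp hindep e e.injective using 1
    ext k ij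
    exact eval_pderiv_mixedPowerSum _ p ij
  obtain ⟨Q, B, hQ, hB⟩ :=
    exists_forall_encard_fiber_le (det_jacobianMatrix_ne_zero_of_linearIndependent hrows)
  refine ⟨A, Q, B, hdeg, hQ, fun τ ↦ (Set.encard_le_encard ?_).trans (hB fun k ↦ τ (e k))⟩
  exact fun q hq ↦ ⟨hq.1, fun k ↦ hq.2 (e k)⟩

end GenericFiniteness

section GridPoints

open MvPolynomial Finset

variable {κ κ' F : Type*} [Field F]

lemma totalDegree_aeval_le_of_totalDegree_le_one {R : Type*} [CommSemiring R]
    {L : κ → MvPolynomial κ' R} (hL : ∀ k, (L k).totalDegree ≤ 1) (Q : MvPolynomial κ R) :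
    (aeval L Q).totalDegree ≤ Q.totalDegree := by
  rw [aeval_def, eval₂_eq]
  refine totalDegree_finsetSum_le fun b hb ↦ ?_
  calc (algebraMap R (MvPolynomial κ' R) (Q.coeff b) * ∏ k ∈ b.support, L k ^ b k).totalDegree
      ≤ (∏ k ∈ b.support, L k ^ b k).totalDegree := by
        simpa [MvPolynomial.algebraMap_eq] using
          totalDegree_mul (C (Q.coeff b)) (∏ k ∈ b.support, L k ^ b k)
    _ ≤ ∑ k ∈ b.support, (L k ^ b k).totalDegree := totalDegree_finsetProd _ _
    _ ≤ ∑ k ∈ b.support, b k := sum_le_sum fun k _ ↦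
        (totalDegree_pow _ _).trans (mul_le_of_le_one_right' (hL k))
    _ ≤ Q.totalDegree := le_totalDegree hb

lemma exists_totalDegree_le_forall_eval_linearMap [Finite κ'] (φ : (κ' → F) →ₗ[F] (κ → F))
    (Q : MvPolynomial κ F) :
    ∃ P : MvPolynomial κ' F, P.totalDegree ≤ Q.totalDegree ∧ ∀ x, eval x P = eval (φ x) Q := by
  have := Fintype.ofFinite κ'
  let L (k : κ) : MvPolynomial κ' F := ∑ l, C (φ (Pi.single l 1) k) * X l
  refine ⟨aeval L Q, totalDegree_aeval_le_of_totalDegree_le_one (fun k ↦ ?_) Q, fun x ↦ ?_⟩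
  · refine totalDegree_finsetSum_le fun l _ ↦ (totalDegree_mul _ _).trans ?_
    rw [totalDegree_C, zero_add, totalDegree_X]
  · have hcomp : (aeval x).comp (aeval L) = aeval (φ x) := by
      ext k
      conv_rhs => rw [pi_eq_sum_univ' x, map_sum]
      simp [L, mul_comm]
    simpa [aeval_eq_eval] using DFunLike.congr_fun hcomp Q

lemma exists_nat_le_totalDegree_eval_linearMap_ne_zero [Finite κ'] [CharZero F]
    {φ : (κ' → F) →ₗ[F] (κ → F)} (hφ : Function.Surjective φ) {Q : MvPolynomial κ F}
    (hQ : Q ≠ 0) :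
    ∃ t : κ' → ℕ, (∀ k, t k ≤ Q.totalDegree) ∧ eval (φ fun k ↦ (t k : F)) Q ≠ 0 := by
  obtain ⟨P, hPQ, hP⟩ := exists_totalDegree_le_forall_eval_linearMap φ Q
  by_contra! hcon
  have hP0 : P = 0 := by
    refine eq_zero_of_eval_zero_at_prod_finset _
      (fun _ ↦ (range (Q.totalDegree + 1)).image (Nat.cast : ℕ → F)) (fun k ↦ ?_) fun x hx ↦ ?_
    · rw [card_image_of_injective _ Nat.cast_injective, card_range]
      exact Nat.lt_succ_of_le ((degreeOf_le_totalDegree _ _).trans hPQ)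
    · choose t ht htx using fun k ↦ mem_image.1 (hx k)
      obtain rfl : (fun k ↦ (t k : F)) = x := funext htx
      rw [hP]
      exact hcon t fun k ↦ Nat.lt_succ_iff.1 (mem_range.1 (ht k))
  refine hQ (MvPolynomial.funext_iff.2 fun y ↦ ?_)
  obtain ⟨x, rfl⟩ := hφ y
  rw [← hP, hP0, map_zero, map_zero]

end GridPoints

section GenericIntegers

open MvPolynomial

variable {ι σ : Type*} {K : Type*} [Field K] [NumberField K]

/-- The conjugates of a family of algebraic integers `α`, the embeddings being labelled by `s`. -/
noncomputable def conjugatePoint (s : ι → (K →ₐ[ℚ] ℂ)) (α : σ → 𝓞 K) : ι × σ → ℂ :=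
  fun ij ↦ s ij.1 (α ij.2)

lemma norm_eval_mixedPowerSum_le {F : Type*} [NormedField F] [Fintype ι] [Finite σ]
    {p : ι × σ → F} {Y : ℝ} (hp : ∀ ij, ‖p ij‖ ≤ Y) (a : σ →₀ ℕ) :
    ‖eval p (mixedPowerSum ι F a)‖ ≤ Fintype.card ι * Y ^ a.degree := by
  have := Fintype.ofFinite σ
  have hterm (i : ι) : ‖∏ j, p (i, j) ^ a j‖ ≤ Y ^ a.degree := by
    rw [norm_prod, Finsupp.degree_eq_sum, ← Finset.prod_pow_eq_pow_sum]
    refine Finset.prod_le_prod (fun _ _ ↦ norm_nonneg _) fun j _ ↦ ?_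
    rw [norm_pow]
    exact pow_le_pow_left₀ (norm_nonneg _) (hp _) _
  rw [eval_mixedPowerSum]
  refine (norm_sum_le_of_le _ fun i _ ↦ hterm i).trans_eq ?_
  rw [Finset.sum_const, Finset.card_univ, nsmul_eq_mul]

lemma eval_conjugatePoint_mixedPowerSum [Fintype ι] [Fintype σ] (s : ι ≃ (K →ₐ[ℚ] ℂ))
    (α : σ → 𝓞 K) (a : σ →₀ ℕ) :
    eval (conjugatePoint s α) (mixedPowerSum ι ℂ a) =
      (Algebra.trace ℤ (𝓞 K) (∏ j, α j ^ a j) : ℤ) := by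
  have htrace := trace_eq_sum_embeddings (K := ℚ) (L := K) ℂ (x := ((∏ j, α j ^ a j : 𝓞 K) : K))
  rw [← Algebra.coe_trace_int, eq_ratCast, Rat.cast_intCast, ← s.sum_comp] at htrace
  simp only [htrace, eval_mixedPowerSum, conjugatePoint, map_prod, map_pow]

/-- The `ℂ`-linear extension of the map sending the coordinates, with respect to `v`, of a family of
elements of `K` to the conjugates of that family. -/
noncomputable def conjugatesOfCoordinates {κ : Type*} [Fintype κ] (v : κ → K)
    (s : ι → (K →ₐ[ℚ] ℂ)) : (κ × σ → ℂ) →ₗ[ℂ] (ι × σ → ℂ) :=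
  LinearMap.pi fun ij ↦ ∑ k, s ij.1 (v k) • LinearMap.proj (k, ij.2)

lemma conjugatesOfCoordinates_apply {κ : Type*} [Fintype κ] (v : κ → K) (s : ι → (K →ₐ[ℚ] ℂ))
    (x : κ × σ → ℂ) (ij : ι × σ) :
    conjugatesOfCoordinates v s x ij = ∑ k, s ij.1 (v k) * x (k, ij.2) := by
  simp [conjugatesOfCoordinates]

lemma surjective_conjugatesOfCoordinates {κ : Type*} [Fintype κ] (v : Module.Basis κ ℚ K)
    (s : ι ≃ (K →ₐ[ℚ] ℂ)) :
    Function.Surjective (conjugatesOfCoordinates (σ := σ) v s) := by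
  have : Fintype ι := Fintype.ofEquiv _ s.symm
  intro y
  refine ⟨fun kj ↦ ∑ i, s i (v.traceDual kj.1) * y (i, kj.2), funext fun ⟨i₀, j⟩ ↦ ?_⟩
  have hdual (i : ι) : ∑ k, s i₀ (v k) * s i (v.traceDual k) = if i = i₀ then 1 else 0 := by
    have h := congrFun₂ (transpose_traceDual_mul_conjugateMatrix v) (s i) (s i₀)
    simpa [conjugateMatrix, Matrix.mul_apply, Matrix.one_apply, mul_comm] using h
  simp only [conjugatesOfCoordinates_apply, Finset.mul_sum, ← mul_assoc]
  rw [Finset.sum_comm]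
  simp [← Finset.sum_mul, hdual]

lemma exists_integers_eval_conjugatePoint_ne_zero {κ : Type*} [Fintype κ] [Finite σ]
    (b : Module.Basis κ ℤ (𝓞 K)) {C : ℝ} (hb : ∀ (k : κ) (φ : K →ₐ[ℚ] ℂ), ‖φ (b k)‖ ≤ C)
    (s : ι ≃ (K →ₐ[ℚ] ℂ)) {Q : MvPolynomial (ι × σ) ℂ} (hQ : Q ≠ 0) :
    ∃ α : σ → 𝓞 K, eval (conjugatePoint s α) Q ≠ 0 ∧
      ∀ (j : σ) (φ : K →ₐ[ℚ] ℂ), ‖φ (α j)‖ ≤ Fintype.card κ * (Q.totalDegree * C) := by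
  let B := b.localizationLocalization ℚ (nonZeroDivisors ℤ) K
  obtain ⟨t, ht, htQ⟩ :=
    exists_nat_le_totalDegree_eval_linearMap_ne_zero (surjective_conjugatesOfCoordinates B s) hQ
  refine ⟨fun j ↦ ∑ k, t (k, j) • b k, ?_, fun j φ ↦ ?_⟩
  · have hpoint : conjugatePoint s (fun j ↦ ∑ k, t (k, j) • b k) =
        conjugatesOfCoordinates B s fun k ↦ (t k : ℂ) := by
      ext ij
      simp [conjugatePoint, conjugatesOfCoordinates_apply, B, mul_comm]
    rwa [hpoint]
  · have hterm (k : κ) : ‖φ ((t (k, j) • b k : 𝓞 K) : K)‖ ≤ Q.totalDegree * C := by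
      have : 0 ≤ C := (norm_nonneg _).trans (hb k φ)
      simp only [nsmul_eq_mul, map_mul, map_natCast, norm_mul, Complex.norm_natCast]
      gcongr
      exacts [ht _, hb k φ]
    simp only [map_sum]
    refine (norm_sum_le_of_le _ fun k _ ↦ hterm k).trans_eq ?_
    rw [Finset.sum_const, Finset.card_univ, nsmul_eq_mul]

/-- The product of the differences between one coordinate of the point `i₀` and of all other points.
Its nonvanishing at the conjugates of `α` says that the embedding labelled `i₀` is determined by
its value at `α j₀`. -/
noncomputable def conjugateSeparator [Fintype ι] (i₀ : ι) (j₀ : σ) : MvPolynomial (ι × σ) ℂ :=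
  ∏ i ∈ Finset.univ.erase i₀, (X (i₀, j₀) - X (i, j₀))

lemma conjugateSeparator_ne_zero [Fintype ι] (i₀ : ι) (j₀ : σ) :
    conjugateSeparator i₀ j₀ ≠ 0 := by
  refine Finset.prod_ne_zero_iff.2 fun i hi h ↦ (Finset.mem_erase.1 hi).1 ?_
  exact congrArg Prod.fst (X_injective (sub_eq_zero.1 h)).symm

lemma adjoin_eq_top_of_eval_conjugateSeparator_ne_zero [Fintype ι] {s : ι ≃ (K →ₐ[ℚ] ℂ)}
    {α : σ → 𝓞 K} {i₀ : ι} {j₀ : σ}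
    (h : eval (conjugatePoint s α) (conjugateSeparator i₀ j₀) ≠ 0) :
    IntermediateField.adjoin ℚ {(α j₀ : K)} = ⊤ := by
  rw [Field.primitive_element_iff_algHom_eq_of_eval ℚ ℂ (fun _ ↦ IsAlgClosed.splits _) _ (s i₀)]
  intro ψ hψ
  obtain ⟨i, rfl⟩ := s.surjective ψ
  by_contra hne
  simp only [conjugateSeparator, map_prod, Finset.prod_ne_zero_iff] at h
  refine h i (Finset.mem_erase.2 ⟨fun hi ↦ hne (by rw [hi]), Finset.mem_univ i⟩) ?_
  simp [conjugatePoint, hψ]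

theorem exists_primitive_integers_eval_conjugatePoint_ne_zero [Finite σ] {n : ℕ} (i₀ : Fin n)
    (j₀ : σ) {Q : MvPolynomial (Fin n × σ) ℂ} (hQ : Q ≠ 0) :
    ∃ C : ℝ, 0 ≤ C ∧ ∀ (K : Type) [Field K] [NumberField K], Module.finrank ℚ K = n →
      ∀ φ : K →ₐ[ℚ] ℂ, ∃ (s : Fin n ≃ (K →ₐ[ℚ] ℂ)) (α : σ → 𝓞 K), s i₀ = φ ∧
        IntermediateField.adjoin ℚ {(α j₀ : K)} = ⊤ ∧ eval (conjugatePoint s α) Q ≠ 0 ∧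
        ∀ (j : σ) (ψ : K →ₐ[ℚ] ℂ), ‖ψ (α j)‖ ≤ C * |(discr K : ℝ)| ^ (1 / n : ℝ) := by
  obtain ⟨C, hC, hbasis⟩ := exists_basis_norm_le_mul_discr_rpow n
  let R := Q * conjugateSeparator i₀ j₀
  refine ⟨n * (R.totalDegree * C), by positivity, fun K _ _ hn φ ↦ ?_⟩
  obtain ⟨b, hb⟩ := hbasis K hn
  let s₀ : Fin n ≃ (K →ₐ[ℚ] ℂ) := Fintype.equivOfCardEq (by rw [AlgHom.card, hn, Fintype.card_fin])
  let s := (Equiv.swap i₀ (s₀.symm φ)).trans s₀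
  obtain ⟨α, hα, hnorm⟩ := exists_integers_eval_conjugatePoint_ne_zero b hb s
    (mul_ne_zero hQ (conjugateSeparator_ne_zero i₀ j₀) : R ≠ 0)
  rw [map_mul] at hα
  refine ⟨s, α, by simp [s], adjoin_eq_top_of_eval_conjugateSeparator_ne_zero
    (right_ne_zero_of_mul hα), left_ne_zero_of_mul hα, fun j ψ ↦ (hnorm j ψ).trans_eq ?_⟩
  rw [Fintype.card_fin]
  ring

end GenericIntegers

section CountingSubfields

open MvPolynomial

lemma absDiscC_eq_abs_discr (K : IntermediateField ℚ ℂ) [NumberField K] :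
    (absDiscC K : ℝ) = |(discr K : ℝ)| := by
  rw [absDiscC, dif_pos (NumberField.to_finiteDimensional (K := K)), Nat.cast_natAbs, Int.cast_abs]

lemma eq_adjoin_simple_of_adjoin_eq_top {F E : Type*} [Field F] [Field E] [Algebra F E]
    {K : IntermediateField F E} {x : K} (hx : IntermediateField.adjoin F {x} = ⊤) :
    K = IntermediateField.adjoin F {(x : E)} := by
  rw [← IntermediateField.lift_adjoin_simple, hx, IntermediateField.lift_top]

theorem exists_point_of_subfield {σ : Type*} [Finite σ] {n : ℕ} (i₀ : Fin n) (j₀ : σ)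
    {Q : MvPolynomial (Fin n × σ) ℂ} (hQ : Q ≠ 0) :
    ∃ C : ℝ, 1 ≤ C ∧ ∀ K : IntermediateField ℚ ℂ, Module.finrank ℚ K = n →
      ∃ p : Fin n × σ → ℂ, eval p Q ≠ 0 ∧ K = IntermediateField.adjoin ℚ {p (i₀, j₀)} ∧
        ∀ a : σ →₀ ℕ, ∃ z : ℤ, eval p (mixedPowerSum (Fin n) ℂ a) = z ∧
          |(z : ℝ)| ≤ n * (C * (absDiscC K : ℝ) ^ (1 / n : ℝ)) ^ a.degree := by
  have := Fintype.ofFinite σ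
  obtain ⟨C, -, hinteger⟩ := exists_primitive_integers_eval_conjugatePoint_ne_zero i₀ j₀ hQ
  refine ⟨max C 1, le_max_right C 1, fun K hK ↦ ?_⟩
  have : FiniteDimensional ℚ K := Module.finite_of_finrank_pos (hK ▸ i₀.pos)
  have : NumberField K := ⟨⟩
  obtain ⟨s, α, hs, hprim, hQα, hnorm⟩ := hinteger K hK (K.val : K →+* ℂ).toRatAlgHom
  have htrace := eval_conjugatePoint_mixedPowerSum s α
  refine ⟨conjugatePoint s α, hQα, ?_, fun a ↦ ⟨_, htrace a, ?_⟩⟩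
  · have hval : conjugatePoint s α (i₀, j₀) = ((α j₀ : K) : ℂ) := by
      simp only [conjugatePoint, hs]; rfl
    rw [hval]
    refine eq_adjoin_simple_of_adjoin_eq_top ?_
    convert hprim <;> exact Subsingleton.elim _ _
  · have hbound (ij : Fin n × σ) :
        ‖conjugatePoint s α ij‖ ≤ max C 1 * |(discr K : ℝ)| ^ (1 / n : ℝ) :=
      (hnorm _ _).trans (by gcongr; exact le_max_left C 1)
    rw [← Complex.norm_intCast, ← htrace, absDiscC_eq_abs_discr]
    simpa only [Fintype.card_fin] using norm_eval_mixedPowerSum_le hbound a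

lemma card_Icc_neg_floor_le {Y : ℝ} (hY : 1 ≤ Y) : ((Finset.Icc (-⌊Y⌋) ⌊Y⌋).card : ℝ) ≤ 3 * Y := by
  have hfloor : 0 ≤ ⌊Y⌋ := Int.floor_nonneg.2 (by linarith)
  have hcard : ((Finset.Icc (-⌊Y⌋) ⌊Y⌋).card : ℤ) = ⌊Y⌋ + 1 + ⌊Y⌋ := by
    rw [Int.card_Icc, Int.toNat_of_nonneg (by lia)]
    lia
  rw [← Int.cast_natCast, hcard]
  push_cast
  linarith [Int.floor_le Y]

lemma finite_and_card_le_of_encard_fiber_le {α β : Type*} {f : α → β} {t : Finset β} {B : ℕ}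
    (hf : ∀ x, f x ∈ t) (hB : ∀ y ∈ t, (f ⁻¹' {y}).encard ≤ B) :
    Finite α ∧ Nat.card α ≤ t.card * B := by
  have hcover : (Set.univ : Set α) ⊆ ⋃ y ∈ t, f ⁻¹' {y} := fun x _ ↦
    Set.mem_biUnion (hf x) rfl
  have henc : (Set.univ : Set α).encard ≤ (t.card * B : ℕ) := by
    refine (Set.encard_le_encard hcover).trans ((t.set_encard_biUnion_le _).trans ?_)
    exact (Finset.sum_le_card_nsmul t _ _ hB).trans_eq (by simp)
  have hfin := Set.finite_univ_iff.1 (Set.finite_of_encard_le_coe henc)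
  refine ⟨hfin, ?_⟩
  rw [Set.encard_univ, ENat.card_eq_coe_natCard] at henc
  exact_mod_cast henc

/-- The integer box containing the traces of the products `∏ j, α j ^ a j` with `a ∈ A`, for
algebraic integers `α j` of degree `n` all of whose conjugates are bounded by `C * X ^ (1 / n)`. -/
noncomputable def traceBox {σ : Type*} (A : Finset (σ →₀ ℕ)) (n : ℕ) (C X : ℝ) : Finset (A → ℤ) :=
  Fintype.piFinset fun a ↦ Finset.Icc (-⌊n * (C * X ^ (1 / n : ℝ)) ^ a.1.degree⌋)
    ⌊n * (C * X ^ (1 / n : ℝ)) ^ a.1.degree⌋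

lemma mem_traceBox {σ : Type*} {A : Finset (σ →₀ ℕ)} {n : ℕ} {C X : ℝ} {z : A → ℤ} :
    z ∈ traceBox A n C X ↔ ∀ a, |(z a : ℝ)| ≤ n * (C * X ^ (1 / n : ℝ)) ^ a.1.degree := by
  simp only [traceBox, Fintype.mem_piFinset, Finset.mem_Icc, ← abs_le]
  simp only [Int.le_floor, Int.cast_abs]

lemma card_traceBox_le {σ : Type*} (A : Finset (σ →₀ ℕ)) {n : ℕ} (hn : 0 < n) {C X : ℝ}
    (hC : 1 ≤ C) (hX : 1 ≤ X) : ((traceBox A n C X).card : ℝ) ≤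
      (∏ a ∈ A, 3 * (n * C ^ a.degree)) * X ^ ((∑ a ∈ A, a.degree : ℕ) / n : ℝ) := by
  have hside : 1 ≤ C * X ^ (1 / n : ℝ) :=
    one_le_mul_of_one_le_of_one_le hC (Real.one_le_rpow hX (by positivity))
  have hpow (k : ℕ) : 3 * (n * (C * X ^ (1 / n : ℝ)) ^ k) = 3 * (n * C ^ k) * X ^ (k / n : ℝ) := by
    rw [mul_pow, ← Real.rpow_mul_natCast (by positivity), one_div_mul_eq_div]
    ring
  calc ((traceBox A n C X).card : ℝ)
      ≤ ∏ a : A, 3 * (n * (C * X ^ (1 / n : ℝ)) ^ a.1.degree) := by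
        rw [traceBox, Fintype.card_piFinset, Nat.cast_prod]
        refine Finset.prod_le_prod (fun _ _ ↦ Nat.cast_nonneg _) fun a _ ↦ card_Icc_neg_floor_le ?_
        exact one_le_mul_of_one_le_of_one_le (Nat.one_le_cast.2 hn) (one_le_pow₀ hside)
    _ = ∏ a ∈ A, 3 * (n * C ^ a.degree) * X ^ (a.degree / n : ℝ) := by
        simp only [hpow]
        exact Finset.prod_coe_sort A fun a ↦ 3 * (n * C ^ a.degree) * X ^ (a.degree / n : ℝ)
    _ = (∏ a ∈ A, 3 * (n * C ^ a.degree)) * X ^ ((∑ a ∈ A, a.degree : ℕ) / n : ℝ) := by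
        rw [Finset.prod_mul_distrib, ← Real.rpow_sum_of_pos (by positivity), Nat.cast_sum,
          Finset.sum_div]

theorem exists_forall_finite_and_card_subfields_le {σ : Type*} [Fintype σ] [Nonempty σ] {n d : ℕ}
    (hn : 0 < n) (hd : Fintype.card σ * n ≤ (d + Fintype.card σ - 1).choose (Fintype.card σ)) :
    ∃ a : ℝ, 0 ≤ a ∧ ∀ X : ℝ, 1 ≤ X →
      Finite {K : IntermediateField ℚ ℂ // Module.finrank ℚ K = n ∧ (absDiscC K : ℝ) ≤ X} ∧
      (Nat.card {K : IntermediateField ℚ ℂ // Module.finrank ℚ K = n ∧ (absDiscC K : ℝ) ≤ X} : ℝ)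
        ≤ a * X ^ (degreeBudget (Fintype.card σ) n d / n : ℝ) := by
  obtain ⟨A, Q, B, hA, hQ, hfiber⟩ :=
    exists_exponents_forall_encard_mixedPowerSum_fiber_le σ ℂ (n := n) hd
  obtain ⟨C, hC, hpoint⟩ := exists_point_of_subfield ⟨0, hn⟩ (Classical.arbitrary σ) hQ
  refine ⟨(∏ a ∈ A, 3 * (n * C ^ a.degree)) * B, by positivity, fun X hX ↦ ?_⟩
  choose p hpQ hpK z hz hzbound using fun K : {K : IntermediateField ℚ ℂ //
    Module.finrank ℚ K = n ∧ (absDiscC K : ℝ) ≤ X} ↦ hpoint K.1 K.2.1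
  have hpinj : Function.Injective p := fun K K' h ↦ Subtype.ext (by rw [hpK K, hpK K', h])
  have hbox (K) : (fun a : A ↦ z K a) ∈ traceBox A n C X :=
    mem_traceBox.2 fun a ↦ (hzbound K a).trans (by gcongr; exact K.2.2)
  have hcount (y : A → ℤ) : ((fun K (a : A) ↦ z K a) ⁻¹' {y}).encard ≤ B := by
    rw [← hpinj.encard_image]
    refine (Set.encard_le_encard ?_).trans (hfiber fun a ↦ y a)
    rintro _ ⟨K, rfl, rfl⟩
    exact ⟨hpQ K, fun a ↦ hz K a⟩
  obtain ⟨hfinite, hcard⟩ := finite_and_card_le_of_encard_fiber_le hbox fun y _ ↦ hcount y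
  refine ⟨hfinite, (Nat.cast_le.2 hcard).trans ?_⟩
  rw [Nat.cast_mul, mul_right_comm]
  gcongr
  refine (card_traceBox_le A hn hC hX).trans ?_
  gcongr

end CountingSubfields

section ChoiceOfParameters

open Finset

lemma degreeBudget_le (r n d : ℕ) : degreeBudget r n d ≤ d * (r * n) :=
  (sum_le_card_nsmul _ _ (r * n) fun _ _ ↦ Nat.sub_le _ _).trans_eq (by simp)

lemma degreeBudget_mul_le_of_le {n n' : ℕ} (hn : n ≤ n') (r d : ℕ) :
    degreeBudget r n d * n' ≤ degreeBudget r n' d * n := by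
  rw [degreeBudget, degreeBudget, sum_mul, sum_mul]
  refine sum_le_sum fun e _ ↦ ?_
  rw [Nat.sub_mul, Nat.sub_mul, mul_right_comm r n n']
  exact Nat.sub_le_sub_left (Nat.mul_le_mul_left _ hn) _

/-- The number `r` of variables and the cutoff `d` serving all degrees `lo ≤ n ≤ hi`. The number `k`
records the lower bound `2 ^ k ≤ lo ^ 20` from which `log n` is estimated. -/
structure DegreeRange where
  (lo hi r d k : ℕ)

/-- The inequalities making the parameters of a range work for all degrees in it; `0.6931` stands
for `log 2`. -/
structure DegreeRange.IsAdmissible (R : DegreeRange) : Prop where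
  lo_pos : 0 < R.lo
  r_pos : 0 < R.r
  mul_hi_le : R.r * R.hi ≤ (R.d + R.r - 1).choose R.r
  two_pow_le : 2 ^ R.k ≤ R.lo ^ 20
  degreeBudget_le : (degreeBudget R.r R.hi R.d : ℝ) ≤ R.hi * (1.564 * (R.k * 0.6931 / 20) ^ 2)

lemma mul_div_le_log_of_two_pow_le_pow {k m N : ℕ} (h : 2 ^ k ≤ N ^ m) :
    (k * 0.6931 / m : ℝ) ≤ Real.log N := by
  have hlog := Real.log_le_log (by positivity) (show (2 : ℝ) ^ k ≤ N ^ m by exact_mod_cast h)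
  rw [Real.log_pow, Real.log_pow] at hlog
  refine div_le_of_le_mul₀ (by positivity) (Real.log_natCast_nonneg N) ?_
  rw [mul_comm (Real.log N)]
  refine le_trans ?_ hlog
  gcongr
  linarith [Real.log_two_gt_d9]

namespace DegreeRange.IsAdmissible

lemma degreeBudget_le_mul_log_sq {R : DegreeRange} (hR : R.IsAdmissible) {n : ℕ} (hlo : R.lo ≤ n)
    (hhi : n ≤ R.hi) : (degreeBudget R.r n R.d : ℝ) ≤ n * (1.564 * Real.log n ^ 2) := by
  have hn : 0 < n := hR.lo_pos.trans_le hlo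
  have hhi_pos : (0 : ℝ) < R.hi := Nat.cast_pos.2 (hn.trans_le hhi)
  have hlog : (R.k * 0.6931 / 20 : ℝ) ≤ Real.log n := by
    exact_mod_cast mul_div_le_log_of_two_pow_le_pow
      (hR.two_pow_le.trans (Nat.pow_le_pow_left hlo 20))
  refine le_of_mul_le_mul_right ?_ hhi_pos
  calc (degreeBudget R.r n R.d : ℝ) * R.hi
      ≤ degreeBudget R.r R.hi R.d * n := mod_cast degreeBudget_mul_le_of_le hhi R.r R.d
    _ ≤ R.hi * (1.564 * (R.k * 0.6931 / 20) ^ 2) * n := by gcongr; exact hR.degreeBudget_le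
    _ ≤ R.hi * (1.564 * Real.log n ^ 2) * n := by gcongr
    _ = n * (1.564 * Real.log n ^ 2) * R.hi := by ring

end DegreeRange.IsAdmissible

/-- Admissible ranges covering all degrees from `4` to `99999`. -/
def degreeRanges : List DegreeRange :=
  [⟨4, 5, 1, 5, 40⟩, ⟨6, 8, 1, 8, 51⟩, ⟨9, 13, 1, 13, 63⟩, ⟨14, 20, 1, 20, 76⟩,
    ⟨21, 28, 2, 11, 87⟩, ⟨29, 43, 2, 13, 97⟩, ⟨44, 69, 2, 17, 109⟩, ⟨70, 123, 3, 13, 122⟩,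
    ⟨124, 261, 3, 16, 139⟩, ⟨262, 719, 4, 15, 160⟩, ⟨720, 3003, 5, 16, 189⟩,
    ⟨3004, 26120, 7, 17, 231⟩, ⟨26121, 99999, 9, 20, 293⟩]

set_option exponentiation.threshold 1000 in
lemma isAdmissible_of_mem_degreeRanges {R : DegreeRange} (hR : R ∈ degreeRanges) :
    R.IsAdmissible := by
  fin_cases hR <;> constructor <;> norm_num [degreeBudget, sum_range_succ, Nat.choose]

lemma exists_mem_degreeRanges {n : ℕ} (h4 : 4 ≤ n) (hn : n < 100000) :
    ∃ R ∈ degreeRanges, R.lo ≤ n ∧ n ≤ R.hi := by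
  simp only [degreeRanges, List.exists_mem_cons_iff, List.not_mem_nil]
  lia

lemma exists_mul_le_centralBinom {n : ℕ} (hn : 2 ≤ n) : ∃ r, 0 < r ∧ r * n ≤ r.centralBinom := by
  have hpow : n ≤ 2 ^ n := Nat.lt_two_pow_self.le
  refine ⟨2 * n, by lia, le_of_mul_le_mul_left (a := 2 * n) ?_ (by lia)⟩
  calc 2 * n * (2 * n * n) = 4 * n * n * n := by ring
    _ ≤ 2 ^ n * 2 ^ n * 2 ^ n * 2 ^ n := by
        gcongr
        simpa using Nat.pow_le_pow_right two_pos hn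
    _ = 4 ^ (2 * n) := by
        rw [← mul_pow, ← mul_pow, ← mul_pow, pow_mul]
        norm_num
    _ ≤ 2 * n * (2 * n).centralBinom := (Nat.four_pow_lt_mul_centralBinom _ (by lia)).le

lemma log_le_log_add_div_sub_one {x c : ℝ} (hx : 0 < x) (hc : 0 < c) :
    Real.log x ≤ Real.log c + x / c - 1 := by
  have h := Real.log_le_sub_one_of_pos (div_pos hx hc)
  rw [Real.log_div hx.ne' hc.ne'] at h
  linarith

lemma mul_sub_le_log_of_centralBinom_lt {m n : ℕ} (hm : 4 ≤ m) (h : m.centralBinom < m * n) :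
    1.26 * m - 3.546 ≤ Real.log n := by
  have hn : n ≠ 0 := by rintro rfl; simp at h
  have : m ≠ 0 := by lia
  have hfour : (4 : ℝ) ^ m ≤ m * (m * n) := by
    exact_mod_cast (Nat.four_pow_lt_mul_centralBinom m hm).le.trans (Nat.mul_le_mul_left m h.le)
  have hlog := Real.log_le_log (by positivity) hfour
  rw [Real.log_pow, Real.log_mul (by positivity) (by positivity),
    Real.log_mul (by positivity) (by positivity), show (4 : ℝ) = 2 ^ 2 by norm_num,
    Real.log_pow] at hlog
  push_cast at hlog
  have hlogm : Real.log m ≤ Real.log (2 ^ 4) + m / 2 ^ 4 - 1 :=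
    log_le_log_add_div_sub_one (by positivity) (by positivity)
  rw [Real.log_pow] at hlogm
  push_cast at hlogm
  nlinarith [Real.log_two_gt_d9, Real.log_two_lt_d9]

lemma exists_mul_le_centralBinom_and_le_log_sq {n : ℕ} (hn : 100000 ≤ n) :
    ∃ r, 0 < r ∧ r * n ≤ r.centralBinom ∧ ((r + 1) * r : ℝ) ≤ 1.564 * Real.log n ^ 2 := by
  have hex := exists_mul_le_centralBinom (n := n) (by lia)
  obtain ⟨hr, hrn⟩ := Nat.find_spec hex
  have hmin := fun m ↦ Nat.find_min hex (m := m)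
  generalize Nat.find hex = r at hr hrn hmin
  have hr12 : 12 ≤ r := by
    by_contra! hlt
    interval_cases r <;> simp [Nat.centralBinom, Nat.choose] at hrn <;> lia
  obtain ⟨m, rfl⟩ : ∃ m, r = m + 1 := ⟨r - 1, by lia⟩
  have hm : m.centralBinom < m * n := by
    by_contra! hle
    exact hmin m m.lt_succ_self ⟨by lia, hle⟩
  have hlog := mul_sub_le_log_of_centralBinom_lt (by lia) hm
  have hm11 : (11 : ℝ) ≤ m := by exact_mod_cast Nat.le_of_succ_le_succ hr12
  refine ⟨m + 1, hr, hrn, ?_⟩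
  have hsq : (1.26 * m - 3.546 : ℝ) ^ 2 ≤ Real.log n ^ 2 :=
    pow_le_pow_left₀ (by linarith) hlog 2
  push_cast
  nlinarith

theorem exists_degreeBudget_le_mul_log_sq {n : ℕ} (hn : 4 ≤ n) :
    ∃ r d : ℕ, 0 < r ∧ r * n ≤ (d + r - 1).choose r ∧
      (degreeBudget r n d : ℝ) ≤ n * (1.564 * Real.log n ^ 2) := by
  obtain hlarge | hsmall := le_or_gt 100000 n
  · obtain ⟨r, hr, hrn, hlog⟩ := exists_mul_le_centralBinom_and_le_log_sq hlarge
    refine ⟨r, r + 1, hr, ?_, ?_⟩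
    · rwa [show r + 1 + r - 1 = 2 * r by lia]
    · calc (degreeBudget r n (r + 1) : ℝ)
          ≤ (r + 1) * (r * n) := mod_cast degreeBudget_le r n (r + 1)
        _ = n * ((r + 1) * r) := by ring
        _ ≤ n * (1.564 * Real.log n ^ 2) := by gcongr
  · obtain ⟨R, hR, hlo, hhi⟩ := exists_mem_degreeRanges hn hsmall
    have hadm := isAdmissible_of_mem_degreeRanges hR
    exact ⟨R.r, R.d, hadm.r_pos, (Nat.mul_le_mul_left R.r hhi).trans hadm.mul_hi_le,
      hadm.degreeBudget_le_mul_log_sq hlo hhi⟩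

end ChoiceOfParameters

theorem count_degree_n_fields_upper_general (n : ℕ) (hn : 4 ≤ n) :
    ∃ a : ℝ, ∀ X : ℝ, 1 ≤ X →
      Finite {K : IntermediateField ℚ ℂ // Module.finrank ℚ K = n ∧ (absDiscC K : ℝ) ≤ X} ∧
      (Nat.card {K : IntermediateField ℚ ℂ //
          Module.finrank ℚ K = n ∧ (absDiscC K : ℝ) ≤ X} : ℝ)
        ≤ a * X ^ (1.564 * Real.log n ^ 2) := by
  obtain ⟨r, d, hr, hd, hbudget⟩ := exists_degreeBudget_le_mul_log_sq hn
  have : Nonempty (Fin r) := ⟨⟨0, hr⟩⟩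
  rw [← Fintype.card_fin r] at hd hbudget
  obtain ⟨a, ha, hcount⟩ := exists_forall_finite_and_card_subfields_le (by lia) hd
  refine ⟨a, fun X hX ↦ ⟨(hcount X hX).1, (hcount X hX).2.trans ?_⟩⟩
  gcongr
  exact div_le_of_le_mul₀ (by positivity) (by positivity) (by linarith)

/-- **Lemke Oliver–Thorne.** For each degree `n ≥ 6` there is a constant `a_n` such that
for all real `X ≥ 1`, the number of degree-`n` subfields `K ⊂ ℂ` with `D_K ≤ X` is at
most `a_n · X^{1.564·(log n)²}`. -/
theorem count_degree_n_fields_upper (n : ℕ) (hn : 6 ≤ n) :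
    ∃ a : ℝ, ∀ X : ℝ, 1 ≤ X →
      (Nat.card {K : IntermediateField ℚ ℂ //
          Module.finrank ℚ K = n ∧ (absDiscC K : ℝ) ≤ X} : ℝ)
        ≤ a * X ^ (1.564 * Real.log n ^ 2) := by
  obtain ⟨a, ha⟩ := count_degree_n_fields_upper_general n (by lia)
  exact ⟨a, fun X hX ↦ (ha X hX).2⟩
end
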